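/- arXiv:1910.05604 — 2 statements merged into one kernel-verified Lean document; each statement's English description precedes it below -/
import Mathlib

section
/- Let M : ℝ² → ℝ be smooth with all partial derivatives up to order 9 square-integrable on ℝ², let Ω := {x∈ℝ³ : x₁ > M(x₂,x₃)}, let μ̂, ν̂ > 0 be constants, and let k ∈ {0,1,2}. Then there exists a constant C > 0 (depending on Ω) such that whenever u : closure(Ω) → ℝ³ is of class C^{k+2} with ∫_Ω|∇^j u|² dx < ∞ for 0 ≤ j ≤ k+2, f := −μ̂Δu − ν̂∇(div u) satisfies ‖f‖_{H^k(Ω)} < ∞, u = 0 on ∂Ω, and u(x) → 0 as |x| → ∞, then ( ∫_Ω |∇^{k+2}u|² dx )^{1/2} ≤ C ( ‖f‖_{H^k(Ω)} + ( ∫_Ω |u|² dx )^{1/2} ). -/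
/- STATEMENT 11: elliptic estimate for the Lamé system −μ̂Δu − ν̂∇(div u) = f
with zero Dirichlet boundary condition and decay at infinity, on the perturbed
half-space Ω. -/

noncomputable section

open MeasureTheory Real Set Filter

abbrev E3 : Type := EuclideanSpace ℝ (Fin 3)
abbrev E2 : Type := EuclideanSpace ℝ (Fin 2)

/-- Projection on the tangential variables `x' = (x₂, x₃)`. -/
def proj2 (x : E3) : E2 := (WithLp.equiv 2 (Fin 2 → ℝ)).symm ![x 1, x 2]

/-- The perturbed half-space `Ω = {x : x₁ > M(x₂,x₃)}`. -/
def Omg (M : E2 → ℝ) : Set E3 := {x : E3 | M (proj2 x) < x 0}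

/-- The boundary point `(M(x'), x')` of `∂Ω` over `x' ∈ ℝ²`. -/
def gph (M : E2 → ℝ) (x' : E2) : E3 := (WithLp.equiv 2 (Fin 3 → ℝ)).symm ![M x', x' 0, x' 1]

/-- The vector in `ℝ³` with the given coordinates. -/
def vecE3 (v : Fin 3 → ℝ) : E3 := (WithLp.equiv 2 (Fin 3 → ℝ)).symm v

/-- Partial derivative `∂ᵢf`. -/
def pd (i : Fin 3) (f : E3 → ℝ) (x : E3) : ℝ := fderiv ℝ f x (EuclideanSpace.single i 1)

/-- Divergence `div u = ∑ᵢ ∂ᵢuᵢ`. -/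
def vdiv (u : E3 → E3) (x : E3) : ℝ := ∑ i, pd i (fun y => u y i) x

/-- Gradient `∇f`. -/
def grad (f : E3 → ℝ) (x : E3) : E3 := vecE3 fun i => pd i f x

/-- Componentwise Laplacian `Δu`. -/
def vlap (u : E3 → E3) (x : E3) : E3 := vecE3 fun i => ∑ j, pd j (pd j fun y => u y i) x

/-!
Functions of class `C^n` up to the boundary extend by higher-order reflection, so it suffices to
treat functions smooth on the whole space that vanish on `{φ = 0}`, where `φ x = x₁ - M(x₂, x₃)`.
The vector fields `∂ᵥ - (∂ᵥφ) ∂ₑ`, with `e` the direction in which `φ` grows at unit rate, are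
tangent to the boundary and therefore preserve the Dirichlet condition. Testing the equation with
second tangential derivatives of `u` and integrating by parts (up to functions with integral zero,
which a cutoff at infinity justifies) bounds the gradients of the tangential derivatives by the
Legendre condition. The remaining second derivative `∂ₑ∂ₑu` is recovered algebraically from the
equation, since the boundary is noncharacteristic. Higher orders follow by induction, applying the
estimate to the tangential derivatives of `u` and using that their commutator with the operator
has order two. Square integrability of the derivatives of `M` enters only through the Sobolev
embedding, which makes the derivatives of `φ` bounded.
-/

open scoped Topology

/-! ### Extension of `C^n` functions by higher-order reflection -/

section Extension

variable {E F : Type*} [NormedAddCommGroup E] [NormedSpace ℝ E]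
  [NormedAddCommGroup F] [NormedSpace ℝ F]

lemma hasFDerivWithinAt_congr_of_isClosed {s : Set E} {f g : E → F} {f' : E →L[ℝ] F} {x : E}
    (hs : IsClosed s) (hf : x ∈ s → HasFDerivWithinAt f f' s x) (hfg : ∀ y ∈ s, g y = f y) :
    HasFDerivWithinAt g f' s x := by
  by_cases hx : x ∈ s
  · exact (hf hx).congr hfg (hfg x hx)
  · exact .of_notMem_closure (by rwa [hs.closure_eq])

lemma contDiff_piecewise_of_iteratedFDerivWithin_eq {n : ℕ} {s t : Set E} {f g : E → F}
    [DecidablePred (· ∈ s)] (hs : IsClosed s) (ht : IsClosed t) (hst : s ∪ t = univ)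
    (hs' : UniqueDiffOn ℝ s) (ht' : UniqueDiffOn ℝ t)
    (hf : ContDiffOn ℝ n f s) (hg : ContDiffOn ℝ n g t)
    (hfg : ∀ x ∈ s ∩ t, ∀ j ≤ n, iteratedFDerivWithin ℝ j f s x = iteratedFDerivWithin ℝ j g t x) :
    ContDiff ℝ n (s.piecewise f g) := by
  have hp := hf.ftaylorSeriesWithin hs'
  have hq := hg.ftaylorSeriesWithin ht'
  set p := ftaylorSeriesWithin ℝ f s
  set q := ftaylorSeriesWithin ℝ g t
  set P : E → FormalMultilinearSeries ℝ E F := fun x => if x ∈ s then p x else q x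
  have hPs : ∀ j, ∀ x ∈ s, P x j = p x j := fun j x hx => by simp only [P, if_pos hx]
  have hPt : ∀ j ≤ n, ∀ x ∈ t, P x j = q x j := fun j hj x hx => by
    by_cases hxs : x ∈ s
    · exact (hPs j x hxs).trans (hfg x ⟨hxs, hx⟩ j hj)
    · simp only [P, if_neg hxs]
  have hP : HasFTaylorSeriesUpToOn n (s.piecewise f g) P univ := by
    refine ⟨fun x _ => ?_, fun j hj x _ => ?_, fun j hj => ?_⟩
    · by_cases hx : x ∈ s
      · simpa [P, hx] using hp.zero_eq x hx
      · simpa [P, hx] using hq.zero_eq x ((hst ▸ mem_univ x : x ∈ s ∪ t).resolve_left hx)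
    · have hj' : j < n := by exact_mod_cast hj
      rw [← hst]
      refine .union ?_ ?_
      · refine hasFDerivWithinAt_congr_of_isClosed hs (fun hx => ?_) (hPs j)
        simpa only [hPs _ x hx] using hp.fderivWithin j hj x hx
      · refine hasFDerivWithinAt_congr_of_isClosed ht (fun hx => ?_) (hPt j hj'.le)
        simpa only [hPt _ hj' x hx] using hq.fderivWithin j hj x hx
    · rw [← hst]
      exact ((hp.cont j hj).congr (hPs j)).union_of_isClosed
        ((hq.cont j hj).congr (hPt j (by exact_mod_cast hj))) hs ht
  exact contDiffOn_univ.1 hP.contDiffOn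

lemma exists_extrapolation_weights {𝕜 ι : Type*} [Field 𝕜] [Fintype ι] {c : ι → 𝕜}
    (hc : Function.Injective c) (t : 𝕜) :
    ∃ a : ι → 𝕜, ∀ j < Fintype.card ι, ∑ i, a i * c i ^ j = t ^ j := by
  classical
  refine ⟨fun i => (Lagrange.basis Finset.univ c i).eval t, fun j hj => ?_⟩
  have hX : ((Polynomial.X : Polynomial 𝕜) ^ j).degree < (Finset.univ : Finset ι).card := by
    simpa using hj
  have h := congrArg (Polynomial.eval t) (Lagrange.eq_interpolate hc.injOn hX)
  simpa [Lagrange.interpolate_apply, Polynomial.eval_finsetSum, mul_comm] using h.symm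

/-- The linear map that multiplies the `e`-component by `c` in the splitting `E = ker ℓ ⊕ ℝ e`
determined by a functional `ℓ` with `ℓ e = 1`. -/
def dilateAlong (ℓ : E →L[ℝ] ℝ) (e : E) (c : ℝ) : E →L[ℝ] E :=
  ContinuousLinearMap.id ℝ E + (c - 1) • ℓ.smulRight e

lemma dilateAlong_apply (ℓ : E →L[ℝ] ℝ) (e : E) (c : ℝ) (y : E) :
    dilateAlong ℓ e c y = c • (ℓ y • e) + (y - ℓ y • e) := by
  simp only [dilateAlong, add_apply, smul_apply, ContinuousLinearMap.id_apply,
    ContinuousLinearMap.smulRight_apply]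
  module

lemma dilateAlong_one (ℓ : E →L[ℝ] ℝ) (e : E) :
    dilateAlong ℓ e 1 = ContinuousLinearMap.id ℝ E := by
  simp [dilateAlong]

lemma map_dilateAlong {ℓ : E →L[ℝ] ℝ} {e : E} (he : ℓ e = 1) (c : ℝ) (y : E) :
    ℓ (dilateAlong ℓ e c y) = c * ℓ y := by
  simp [dilateAlong_apply, he]

lemma dilateAlong_of_map_eq_zero {ℓ : E →L[ℝ] ℝ} {y : E} (hy : ℓ y = 0) (e : E) (c : ℝ) :
    dilateAlong ℓ e c y = y := by
  simp [dilateAlong_apply, hy]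

lemma multilinear_dilateAlong {j : ℕ} (q : ContinuousMultilinearMap ℝ (fun _ : Fin j => E) F)
    (ℓ : E →L[ℝ] ℝ) (e : E) (c : ℝ) (w : Fin j → E) :
    q (fun i => dilateAlong ℓ e c (w i)) =
      ∑ s : Finset (Fin j), c ^ s.card •
        q (s.piecewise (fun i => ℓ (w i) • e) (fun i => w i - ℓ (w i) • e)) := by
  have hsplit : (fun i => dilateAlong ℓ e c (w i)) =
      (fun i => c • (ℓ (w i) • e)) + fun i => w i - ℓ (w i) • e := by
    funext i
    exact dilateAlong_apply ℓ e c (w i)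
  rw [hsplit, q.map_add_univ]
  refine Finset.sum_congr rfl fun s _ => ?_
  rw [← Finset.prod_const, ← q.map_piecewise_smul]
  congr 1
  funext i
  by_cases hi : i ∈ s <;> simp [hi]

lemma sum_smul_compContinuousLinearMap_dilateAlong {ι : Type*} [Fintype ι] {n j : ℕ} (hj : j ≤ n)
    {a c : ι → ℝ} (hac : ∀ i ≤ n, ∑ m, a m * c m ^ i = 1)
    (q : ContinuousMultilinearMap ℝ (fun _ : Fin j => E) F) (ℓ : E →L[ℝ] ℝ) (e : E) :
    ∑ m, a m • q.compContinuousLinearMap (fun _ => dilateAlong ℓ e (c m)) = q := by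
  ext1 w
  have hcard : ∀ s : Finset (Fin j), s.card ≤ n := fun s => (card_finset_fin_le s).trans hj
  have hone := multilinear_dilateAlong q ℓ e 1 w
  simp only [dilateAlong_one, ContinuousLinearMap.id_apply, one_pow, one_smul] at hone
  simp only [sum_apply, smul_apply, ContinuousMultilinearMap.compContinuousLinearMap_apply,
    multilinear_dilateAlong, Finset.smul_sum, smul_smul]
  rw [Finset.sum_comm]
  simp only [← Finset.sum_smul, hac _ (hcard _), one_smul]
  exact hone.symm

lemma uniqueDiffOn_halfSpace {ℓ : E →L[ℝ] ℝ} (hℓ : ℓ ≠ 0) : UniqueDiffOn ℝ {y | 0 ≤ ℓ y} := by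
  obtain ⟨y, hy⟩ : ∃ y, 0 < ℓ y := by
    obtain ⟨y, hy⟩ := DFunLike.ne_iff.1 hℓ
    rcases lt_or_gt_of_ne hy with h | h
    · exact ⟨-y, by simpa using h⟩
    · exact ⟨y, h⟩
  refine uniqueDiffOn_convex (convex_halfSpace_ge ℓ.isLinear 0) ⟨y, mem_interior.2 ?_⟩
  exact ⟨{y | 0 < ℓ y}, fun z (hz : 0 < ℓ z) => hz.le, isOpen_lt continuous_const ℓ.continuous, hy⟩

lemma preimage_dilateAlong_halfSpace {ℓ : E →L[ℝ] ℝ} {e : E} (he : ℓ e = 1) {c : ℝ} (hc : c < 0) :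
    dilateAlong ℓ e c ⁻¹' {y | 0 ≤ ℓ y} = {y | 0 ≤ (-ℓ) y} := by
  ext y
  simp only [mem_preimage, mem_ofPred_eq, map_dilateAlong he, neg_apply, neg_nonneg]
  exact ⟨fun h => nonpos_of_mul_nonneg_right h hc, mul_nonneg_of_nonpos_of_nonpos hc.le⟩

lemma iteratedFDerivWithin_comp_dilateAlong {n j : ℕ} (hj : j ≤ n) {ℓ : E →L[ℝ] ℝ} {e : E}
    (he : ℓ e = 1) {c : ℝ} (hc : c < 0) {v : E → F} (hv : ContDiffOn ℝ n v {y | 0 ≤ ℓ y})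
    {x : E} (hx : ℓ x = 0) :
    iteratedFDerivWithin ℝ j (v ∘ dilateAlong ℓ e c) {y | 0 ≤ (-ℓ) y} x =
      (iteratedFDerivWithin ℝ j v {y | 0 ≤ ℓ y} x).compContinuousLinearMap
        fun _ => dilateAlong ℓ e c := by
  have hℓ : ℓ ≠ 0 := fun h => by simp [h] at he
  have hpre := preimage_dilateAlong_halfSpace he hc
  have h := (dilateAlong ℓ e c).iteratedFDerivWithin_comp_right hv (uniqueDiffOn_halfSpace hℓ)
    (hpre ▸ uniqueDiffOn_halfSpace (neg_ne_zero.2 hℓ))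
    (x := x) (by simp [dilateAlong_of_map_eq_zero hx, hx]) (i := j) (by exact_mod_cast hj)
  rwa [hpre, dilateAlong_of_map_eq_zero hx] at h

-- The weights `aₘ` extrapolate polynomials of degree `≤ n` from the negative nodes `cₘ` to `1`, so
-- the reflected function `∑ aₘ v (Rₘ y)` has the same `n`-jet as `v` on `{ℓ = 0}`.
lemma exists_contDiff_eqOn_halfSpace {n : ℕ} {ℓ : E →L[ℝ] ℝ} {e : E} (he : ℓ e = 1)
    {v : E → F} (hv : ContDiffOn ℝ n v {y | 0 ≤ ℓ y}) :
    ∃ w : E → F, ContDiff ℝ n w ∧ EqOn w v {y | 0 ≤ ℓ y} := by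
  classical
  set c : Fin (n + 1) → ℝ := fun m => -((m : ℝ) + 1)
  have hc : ∀ m, c m < 0 := fun m => by simp only [c]; linarith [(m : ℕ).cast_nonneg (α := ℝ)]
  have hc_inj : Function.Injective c := fun i j hij => by simpa [c, Fin.ext_iff] using hij
  obtain ⟨a, ha⟩ := exists_extrapolation_weights hc_inj 1
  have hℓ : ℓ ≠ 0 := fun h => by simp [h] at he
  have hH' : UniqueDiffOn ℝ {y | 0 ≤ (-ℓ) y} := uniqueDiffOn_halfSpace (neg_ne_zero.2 hℓ)
  have hcomp : ∀ m, ContDiffOn ℝ n (v ∘ dilateAlong ℓ e (c m)) {y | 0 ≤ (-ℓ) y} := fun m =>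
    preimage_dilateAlong_halfSpace he (hc m) ▸ hv.comp_continuousLinearMap _
  refine ⟨piecewise {y | 0 ≤ ℓ y} v fun y => ∑ m, (a m • v ∘ dilateAlong ℓ e (c m)) y, ?_,
    fun y hy => piecewise_eq_of_mem _ _ _ hy⟩
  refine contDiff_piecewise_of_iteratedFDerivWithin_eq
    (isClosed_le continuous_const ℓ.continuous) (isClosed_le continuous_const (-ℓ).continuous)
    (eq_univ_of_forall fun y => by simpa using le_total 0 (ℓ y)) (uniqueDiffOn_halfSpace hℓ) hH' hv
    (ContDiffOn.sum fun m _ => contDiffOn_const.smul (hcomp m)) fun x ⟨hx, hx'⟩ j hj => ?_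
  have hx0 : ℓ x = 0 := le_antisymm (by simpa using hx') hx
  have hcompAt : ∀ m, ContDiffWithinAt ℝ j (v ∘ dilateAlong ℓ e (c m)) {y | 0 ≤ (-ℓ) y} x :=
    fun m => (hcomp m).of_le (by exact_mod_cast hj) x hx'
  rw [iteratedFDerivWithin_fun_sum_apply (f := fun m => a m • v ∘ dilateAlong ℓ e (c m)) hH' hx'
    fun m _ => (hcompAt m).const_smul (a m)]
  simp only [iteratedFDerivWithin_const_smul_apply (hcompAt _) hH' hx',
    iteratedFDerivWithin_comp_dilateAlong hj he (hc _) hv hx0]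
  refine (sum_smul_compContinuousLinearMap_dilateAlong hj (fun i hi => ?_) _ ℓ e).symm
  simpa using ha i (by simpa using Nat.lt_succ_of_le hi)

/-- `φ` increases at unit speed along `e`. Then `{φ = 0}` is a graph in the direction `e`, and
`{0 < φ}` is the region above it. -/
def IsHeight (e : E) (φ : E → ℝ) : Prop := ∀ (x : E) (t : ℝ), φ (x + t • e) = φ x + t

lemma IsHeight.exists_contDiff_eqOn {n : ℕ} {e : E} {φ : E → ℝ} (hφ : IsHeight e φ)
    (hφn : ContDiff ℝ n φ) {u : E → F} (hu : ContDiffOn ℝ n u {x | 0 ≤ φ x}) :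
    ∃ w : E → F, ContDiff ℝ n w ∧ EqOn w u {x | 0 ≤ φ x} := by
  have he : e ≠ 0 := by
    rintro rfl
    simpa using hφ 0 1
  obtain ⟨ℓ, hℓ⟩ := SeparatingDual.exists_eq_one (R := ℝ) he
  have hφℓ : ∀ x (t : ℝ), φ (x + t • e) - ℓ (x + t • e) = φ x - ℓ x := fun x t => by
    simp [hφ x t, hℓ]
  have hdiff : ContDiff ℝ n fun x => φ x - ℓ x := hφn.sub ℓ.contDiff
  obtain ⟨w, hw, hwu⟩ := exists_contDiff_eqOn_halfSpace (n := n) hℓ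
    (v := fun y => u (y + (-(φ y - ℓ y)) • e))
    (hu.comp (contDiff_id.add (hdiff.neg.smul contDiff_const)).contDiffOn fun y hy => by
      simpa [hφ y] using hy)
  refine ⟨fun x => w (x + (φ x - ℓ x) • e), hw.comp (contDiff_id.add (hdiff.smul contDiff_const)),
    fun x hx => ?_⟩
  refine (hwu (by simpa [hℓ] using hx)).trans ?_
  simp only [hφℓ, neg_smul, add_neg_cancel_right]

end Extension

/-! ### A Sobolev inequality in the plane -/

section Sobolev

variable {F : Type*} [NormedAddCommGroup F] [NormedSpace ℝ F] [CompleteSpace F]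

lemma sq_intervalIntegral_le {p : ℝ → ℝ} (hp : Continuous p) :
    (∫ t in (0 : ℝ)..1, p t) ^ 2 ≤ ∫ t in (0 : ℝ)..1, p t ^ 2 := by
  have : IsProbabilityMeasure (volume.restrict (Ioc (0 : ℝ) 1)) := ⟨by simp⟩
  simp only [intervalIntegral.integral_of_le zero_le_one]
  exact (even_two.convexOn_pow (𝕜 := ℝ)).map_integral_le (continuous_pow 2).continuousOn
    isClosed_univ (by simp) hp.integrableOn_Ioc (hp.pow 2).integrableOn_Ioc

lemma norm_le_intervalIntegral_of_hasDerivAt {g g' : ℝ → F} (hg : ∀ t, HasDerivAt g (g' t) t)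
    (hg' : Continuous g') : ‖g 0‖ ≤ ∫ t in (0 : ℝ)..1, (‖g t‖ + ‖g' t‖) := by
  have hgc : Continuous g := continuous_iff_continuousAt.2 fun t => (hg t).continuousAt
  have hderiv : ∀ t, HasDerivAt (fun t : ℝ => (1 - t) • g t) ((1 - t) • g' t + (-1 : ℝ) • g t) t :=
    fun t => ((hasDerivAt_id t).const_sub 1).smul (hg t)
  have hInt : ∫ t in (0 : ℝ)..1, ((1 - t) • g' t + (-1 : ℝ) • g t) = -g 0 := by
    rw [intervalIntegral.integral_eq_sub_of_hasDerivAt (fun t _ => hderiv t)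
      (Continuous.intervalIntegrable (by fun_prop) _ _)]
    simp
  rw [← norm_neg, ← hInt]
  refine (intervalIntegral.norm_integral_le_integral_norm zero_le_one).trans ?_
  refine intervalIntegral.integral_mono_on zero_le_one
    (Continuous.intervalIntegrable (by fun_prop) _ _)
    (Continuous.intervalIntegrable (by fun_prop) _ _) fun t ht => ?_
  calc ‖(1 - t) • g' t + (-1 : ℝ) • g t‖ ≤ |1 - t| * ‖g' t‖ + ‖g t‖ := by
        simpa [norm_smul] using norm_add_le ((1 - t) • g' t) ((-1 : ℝ) • g t)
    _ ≤ 1 * ‖g' t‖ + ‖g t‖ := by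
        gcongr
        exact abs_le.2 ⟨by linarith [ht.2], by linarith [ht.1]⟩
    _ = ‖g t‖ + ‖g' t‖ := by ring

lemma norm_sq_le_intervalIntegral_of_hasDerivAt {g g' : ℝ → F} (hg : ∀ t, HasDerivAt g (g' t) t)
    (hg' : Continuous g') :
    ‖g 0‖ ^ 2 ≤ 2 * ∫ t in (0 : ℝ)..1, (‖g t‖ ^ 2 + ‖g' t‖ ^ 2) := by
  have hgc : Continuous g := continuous_iff_continuousAt.2 fun t => (hg t).continuousAt
  calc ‖g 0‖ ^ 2 ≤ (∫ t in (0 : ℝ)..1, (‖g t‖ + ‖g' t‖)) ^ 2 := by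
        gcongr
        exact norm_le_intervalIntegral_of_hasDerivAt hg hg'
    _ ≤ ∫ t in (0 : ℝ)..1, (‖g t‖ + ‖g' t‖) ^ 2 := sq_intervalIntegral_le (by fun_prop)
    _ ≤ ∫ t in (0 : ℝ)..1, 2 * (‖g t‖ ^ 2 + ‖g' t‖ ^ 2) :=
        intervalIntegral.integral_mono_on zero_le_one
          (Continuous.intervalIntegrable (by fun_prop) _ _)
          (Continuous.intervalIntegrable (by fun_prop) _ _) fun t _ => add_sq_le
    _ = _ := intervalIntegral.integral_const_mul _ _

lemma norm_iteratedFDeriv_sq_le_intervalIntegral {E : Type*} [NormedAddCommGroup E]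
    [NormedSpace ℝ E] {f : E → F} {j : ℕ} (hf : ContDiff ℝ (j + 1) f) (y : E) {e : E}
    (he : ‖e‖ ≤ 1) :
    ‖iteratedFDeriv ℝ j f y‖ ^ 2 ≤ 2 * ∫ t in (0 : ℝ)..1,
      (‖iteratedFDeriv ℝ j f (y + t • e)‖ ^ 2 + ‖iteratedFDeriv ℝ (j + 1) f (y + t • e)‖ ^ 2) := by
  have hC1 : ContDiff ℝ 1 (iteratedFDeriv ℝ j f) := hf.iteratedFDeriv_right (by rw [add_comm])
  have : Continuous fun x => ‖iteratedFDeriv ℝ j f x‖ := hC1.continuous.norm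
  have : Continuous (fderiv ℝ (iteratedFDeriv ℝ j f)) := hC1.continuous_fderiv (by simp)
  have : Continuous fun x => ‖iteratedFDeriv ℝ (j + 1) f x‖ :=
    (hf.continuous_iteratedFDeriv (by norm_cast)).norm
  have hline : ∀ t : ℝ, HasDerivAt (fun t : ℝ => iteratedFDeriv ℝ j f (y + t • e))
      (fderiv ℝ (iteratedFDeriv ℝ j f) (y + t • e) e) t := fun t => by
    refine (hC1.differentiable (by simp) _).hasFDerivAt.comp_hasDerivAt t ?_
    simpa using ((hasDerivAt_id t).smul_const e).const_add y
  have h := norm_sq_le_intervalIntegral_of_hasDerivAt hline (by fun_prop)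
  simp only [zero_smul, add_zero] at h
  refine h.trans ?_
  gcongr 2 * ?_
  refine intervalIntegral.integral_mono_on zero_le_one
    (Continuous.intervalIntegrable (by fun_prop) _ _)
    (Continuous.intervalIntegrable (by fun_prop) _ _) fun t _ => ?_
  gcongr
  exact (ContinuousLinearMap.le_opNorm_of_le _ he).trans_eq
    ((mul_one _).trans norm_fderiv_iteratedFDeriv)

lemma intervalIntegral_intervalIntegral_le_integral {h : E2 → ℝ} (h0 : ∀ x, 0 ≤ h x)
    (hi : Integrable h) (x : E2) :
    ∫ s in (0 : ℝ)..1, ∫ t in (0 : ℝ)..1,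
      h (x + s • EuclideanSpace.single 0 1 + t • EuclideanSpace.single 1 1) ≤ ∫ y, h y := by
  let Ψ : ℝ × ℝ ≃ᵐ E2 :=
    MeasurableEquiv.finTwoArrow.symm.trans (MeasurableEquiv.toLp 2 (Fin 2 → ℝ))
  have hΨ : MeasurePreserving Ψ :=
    (volume_preserving_finTwoArrow ℝ).symm.trans (PiLp.volume_preserving_toLp (Fin 2))
  have hΨ_apply : ∀ p : ℝ × ℝ,
      x + p.1 • EuclideanSpace.single 0 1 + p.2 • EuclideanSpace.single 1 1 = x + Ψ p := fun p => by
    rw [add_assoc]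
    congr 1
    ext i
    fin_cases i <;> simp [Ψ, MeasurableEquiv.finTwoArrow]
  have hInt : Integrable fun p : ℝ × ℝ => h (x + Ψ p) :=
    (hΨ.integrable_comp_emb Ψ.measurableEmbedding).2 (hi.comp_add_left x)
  calc _ = ∫ p in Ioc (0 : ℝ) 1 ×ˢ Ioc (0 : ℝ) 1, h (x + Ψ p) := by
        rw [Measure.volume_eq_prod, setIntegral_prod _ hInt.integrableOn]
        simp only [intervalIntegral.integral_of_le zero_le_one, ← hΨ_apply]
    _ ≤ ∫ p, h (x + Ψ p) := setIntegral_le_integral hInt (Eventually.of_forall fun p => h0 _)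
    _ = ∫ y, h y := by
        rw [hΨ.integral_comp Ψ.measurableEmbedding (fun y => h (x + y))]
        exact integral_add_left_eq_self h x

-- The one-dimensional inequality is used twice, once in each coordinate direction.
lemma exists_norm_iteratedFDeriv_le_of_integrable {f : E2 → F} {j : ℕ} (hf : ContDiff ℝ (j + 2) f)
    (hInt : ∀ i ≤ j + 2, j ≤ i → Integrable fun x => ‖iteratedFDeriv ℝ i f x‖ ^ 2) :
    ∃ B, ∀ x, ‖iteratedFDeriv ℝ j f x‖ ≤ B := by
  set N : ℕ → E2 → ℝ := fun i x => ‖iteratedFDeriv ℝ i f x‖ ^ 2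
  have hN : ∀ i ≤ j + 2, Continuous (N i) := fun i hi =>
    (hf.continuous_iteratedFDeriv (by exact_mod_cast hi)).norm.pow 2
  have hN0 := hN j (by simp)
  have hN1 := hN (j + 1) (by simp)
  have hN2 := hN (j + 2) le_rfl
  set h : E2 → ℝ := fun x => N j x + N (j + 1) x + (N (j + 1) x + N (j + 2) x)
  have hInt_h : Integrable h :=
    ((hInt j (by simp) le_rfl).add (hInt (j + 1) (by simp) (by simp))).add
      ((hInt (j + 1) (by simp) (by simp)).add (hInt (j + 2) le_rfl (by simp)))
  have hline : ∀ i ≤ j + 1, ∀ y e : E2, ‖e‖ ≤ 1 →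
      N i y ≤ 2 * ∫ t in (0 : ℝ)..1, (N i (y + t • e) + N (i + 1) (y + t • e)) := fun i hi y e he =>
    norm_iteratedFDeriv_sq_le_intervalIntegral
      (hf.of_le (by exact_mod_cast Nat.succ_le_succ hi)) y he
  refine ⟨√(2 * (2 * ∫ y, h y)), fun x => le_sqrt_of_sq_le ?_⟩
  calc N j x ≤ 2 * ∫ s in (0 : ℝ)..1, (N j (x + s • EuclideanSpace.single 0 1)
          + N (j + 1) (x + s • EuclideanSpace.single 0 1)) :=
        hline j (by simp) x _ (by simp)
    _ ≤ 2 * ∫ s in (0 : ℝ)..1, 2 * ∫ t in (0 : ℝ)..1,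
          h (x + s • EuclideanSpace.single 0 1 + t • EuclideanSpace.single 1 1) := by
        gcongr 2 * ?_
        refine intervalIntegral.integral_mono_on zero_le_one
          (Continuous.intervalIntegrable (by fun_prop) _ _)
          (Continuous.intervalIntegrable (continuous_const.mul
            (intervalIntegral.continuous_parametric_intervalIntegral_of_continuous' (by fun_prop)
              _ _)) _ _) fun s _ => ?_
        refine (add_le_add (hline j (by simp) _ (EuclideanSpace.single 1 1) (by simp))
          (hline (j + 1) le_rfl _ (EuclideanSpace.single 1 1) (by simp))).trans_eq ?_
        rw [← mul_add, ← intervalIntegral.integral_add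
          (Continuous.intervalIntegrable (by fun_prop) _ _)
          (Continuous.intervalIntegrable (by fun_prop) _ _)]
    _ ≤ 2 * (2 * ∫ y, h y) := by
        rw [intervalIntegral.integral_const_mul]
        gcongr 2 * (2 * ?_)
        exact intervalIntegral_intervalIntegral_le_integral (fun x => by positivity) hInt_h x

end Sobolev

/-! ### Directional derivatives and jets -/

section Jets

open Finset

variable {E F G : Type*} [NormedAddCommGroup E] [NormedSpace ℝ E] [NormedAddCommGroup F]
  [NormedSpace ℝ F] [NormedAddCommGroup G] [NormedSpace ℝ G]

/-- The derivative of `g` in the direction `v`, as an operator on functions. -/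
def dirDeriv (v : E) (g : E → F) (x : E) : F := fderiv ℝ g x v

lemma contDiff_dirDeriv {n : ℕ} {g : E → F} (hg : ContDiff ℝ (n + 1 : ℕ) g) (v : E) :
    ContDiff ℝ n (dirDeriv v g) :=
  (hg.fderiv_right (m := n) (by norm_cast)).clm_apply contDiff_const

lemma continuous_dirDeriv {g : E → F} (hg : ContDiff ℝ 1 g) (v : E) : Continuous (dirDeriv v g) :=
  (contDiff_dirDeriv (n := 0) hg v).continuous

lemma differentiable_dirDeriv {g : E → F} (hg : ContDiff ℝ (2 : ℕ) g) (v : E) :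
    Differentiable ℝ (dirDeriv v g) :=
  (contDiff_dirDeriv (n := 1) hg v).differentiable (by simp)

lemma dirDeriv_comm {g : E → F} (hg : ContDiff ℝ (2 : ℕ) g) (v w : E) :
    dirDeriv v (dirDeriv w g) = dirDeriv w (dirDeriv v g) := by
  have hd : Differentiable ℝ (fderiv ℝ g) :=
    (hg.fderiv_right (m := 1) (by norm_cast)).differentiable (by simp)
  have happly (v w x : E) : dirDeriv v (dirDeriv w g) x = fderiv ℝ (fderiv ℝ g) x v w := by
    have hclm := fderiv_clm_apply (hd x) (differentiableAt_const w)
    exact (congrArg (fun A : E →L[ℝ] F => A v) hclm).trans (by simp)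
  funext x
  rw [happly, happly]
  exact hg.contDiffAt.isSymmSndFDerivAt (by simp) v w

lemma dirDeriv_sub {g h : E → F} {x : E} (hg : DifferentiableAt ℝ g x)
    (hh : DifferentiableAt ℝ h x) (v : E) :
    dirDeriv v (fun y => g y - h y) x = dirDeriv v g x - dirDeriv v h x := by
  simp [dirDeriv, fderiv_fun_sub hg hh]

lemma dirDeriv_smul {c : E → ℝ} {g : E → F} {x : E} (hc : DifferentiableAt ℝ c x)
    (hg : DifferentiableAt ℝ g x) (v : E) :
    dirDeriv v (fun y => c y • g y) x = dirDeriv v c x • g x + c x • dirDeriv v g x := by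
  simp [dirDeriv, fderiv_fun_smul hc hg, add_comm]

lemma dirDeriv_clm (A : F →L[ℝ] G) {g : E → F} {x : E} (hg : DifferentiableAt ℝ g x) (v : E) :
    dirDeriv v (fun y => A (g y)) x = A (dirDeriv v g x) := by
  have hcomp : HasFDerivAt (fun y => A (g y)) (A ∘L fderiv ℝ g x) x :=
    A.hasFDerivAt.comp x hg.hasFDerivAt
  rw [dirDeriv, hcomp.fderiv]
  rfl

lemma dirDeriv_sum {ι : Type*} {s : Finset ι} {g : ι → E → F} {x : E}
    (hg : ∀ i ∈ s, DifferentiableAt ℝ (g i) x) (v : E) :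
    dirDeriv v (fun y => ∑ i ∈ s, g i y) x = ∑ i ∈ s, dirDeriv v (g i) x := by
  simp [dirDeriv, fderiv_fun_sum hg]

lemma dirDeriv_congr {g h : E → F} {x : E} (hgh : g =ᶠ[𝓝 x] h) (v : E) :
    dirDeriv v g =ᶠ[𝓝 x] dirDeriv v h :=
  hgh.fderiv.fun_comp (· v)

/-- The size of the `n`-jet of `g` at `x`: the sum of the norms of the derivatives of order at
most `n`. -/
def jetNorm (n : ℕ) (g : E → F) (x : E) : ℝ := ∑ j ∈ range (n + 1), ‖iteratedFDeriv ℝ j g x‖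

lemma jetNorm_nonneg (n : ℕ) (g : E → F) (x : E) : 0 ≤ jetNorm n g x :=
  sum_nonneg fun _ _ => norm_nonneg _

lemma jetNorm_zero (g : E → F) (x : E) : jetNorm 0 g x = ‖g x‖ := by
  simp [jetNorm]

lemma jetNorm_succ (n : ℕ) (g : E → F) (x : E) :
    jetNorm (n + 1) g x = ‖g x‖ + jetNorm n (fderiv ℝ g) x := by
  simp only [jetNorm, sum_range_succ' _ (n + 1), norm_iteratedFDeriv_fderiv,
    norm_iteratedFDeriv_zero]
  ring

lemma jetNorm_mono {m n : ℕ} (hmn : m ≤ n) (g : E → F) (x : E) : jetNorm m g x ≤ jetNorm n g x :=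
  sum_le_sum_of_subset_of_nonneg (range_mono (by omega)) fun _ _ _ => norm_nonneg _

lemma norm_iteratedFDeriv_le_jetNorm {j n : ℕ} (hj : j ≤ n) (g : E → F) (x : E) :
    ‖iteratedFDeriv ℝ j g x‖ ≤ jetNorm n g x :=
  single_le_sum (f := fun j => ‖iteratedFDeriv ℝ j g x‖) (fun _ _ => norm_nonneg _)
    (mem_range.2 (by omega))

lemma norm_le_jetNorm (n : ℕ) (g : E → F) (x : E) : ‖g x‖ ≤ jetNorm n g x := by
  simpa using norm_iteratedFDeriv_le_jetNorm n.zero_le g x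

lemma norm_fderiv_le_jetNorm_one (g : E → F) (x : E) : ‖fderiv ℝ g x‖ ≤ jetNorm 1 g x := by
  rw [jetNorm_succ, jetNorm_zero]
  linarith [norm_nonneg (g x)]

lemma norm_dirDeriv_le (g : E → F) (v x : E) : ‖dirDeriv v g x‖ ≤ ‖v‖ * jetNorm 1 g x := by
  rw [mul_comm]
  exact (fderiv ℝ g x).le_of_opNorm_le (norm_fderiv_le_jetNorm_one g x) v

lemma jetNorm_inner_le {V : Type*} [NormedAddCommGroup V] [InnerProductSpace ℝ V] {a b : E → V}
    (ha : Differentiable ℝ a) (hb : Differentiable ℝ b) (x : E) :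
    jetNorm 1 (fun y => inner ℝ (a y) (b y)) x ≤ jetNorm 1 a x * jetNorm 1 b x := by
  have hfderiv : ‖fderiv ℝ (fun y => inner ℝ (a y) (b y)) x‖ ≤
      ‖a x‖ * ‖fderiv ℝ b x‖ + ‖fderiv ℝ a x‖ * ‖b x‖ := by
    refine ContinuousLinearMap.opNorm_le_bound _ (by positivity) fun v => ?_
    rw [fderiv_inner_apply ℝ (ha x) (hb x)]
    calc _ ≤ ‖a x‖ * (‖fderiv ℝ b x‖ * ‖v‖) + ‖fderiv ℝ a x‖ * ‖v‖ * ‖b x‖ :=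
          (norm_add_le _ _).trans <| add_le_add
            ((norm_inner_le_norm _ _).trans (by gcongr; exact (fderiv ℝ b x).le_opNorm v))
            ((norm_inner_le_norm _ _).trans (by gcongr; exact (fderiv ℝ a x).le_opNorm v))
      _ = _ := by ring
  simp only [jetNorm_succ, jetNorm_zero]
  calc _ ≤ ‖a x‖ * ‖b x‖ + (‖a x‖ * ‖fderiv ℝ b x‖ + ‖fderiv ℝ a x‖ * ‖b x‖) :=
        add_le_add (norm_inner_le_norm _ _) hfderiv
    _ ≤ ‖a x‖ * ‖b x‖ + (‖a x‖ * ‖fderiv ℝ b x‖ + ‖fderiv ℝ a x‖ * ‖b x‖) +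
          ‖fderiv ℝ a x‖ * ‖fderiv ℝ b x‖ := le_add_of_nonneg_right (by positivity)
    _ = _ := by ring

lemma continuous_jetNorm {n : ℕ} {g : E → F} (hg : ContDiff ℝ n g) : Continuous (jetNorm n g) :=
  continuous_finsetSum _ fun _ hj =>
    (hg.continuous_iteratedFDeriv (mod_cast Nat.lt_succ_iff.1 (mem_range.1 hj))).norm

lemma jetNorm_sq_le (n : ℕ) (g : E → F) (x : E) :
    jetNorm n g x ^ 2 ≤ (n + 1) * ∑ j ∈ range (n + 1), ‖iteratedFDeriv ℝ j g x‖ ^ 2 := by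
  simpa [jetNorm] using sq_sum_le_card_mul_sum_sq (s := range (n + 1))
    (f := fun j => ‖iteratedFDeriv ℝ j g x‖)

lemma jetNorm_add_le {n : ℕ} {g h : E → F} (hg : ContDiff ℝ n g) (hh : ContDiff ℝ n h) (x : E) :
    jetNorm n (fun y => g y + h y) x ≤ jetNorm n g x + jetNorm n h x := by
  rw [jetNorm, jetNorm, jetNorm, ← sum_add_distrib]
  refine sum_le_sum fun j hj => ?_
  have hjn : (j : WithTop ℕ∞) ≤ n := mod_cast Nat.lt_succ_iff.1 (mem_range.1 hj)
  rw [show (fun y => g y + h y) = g + h from rfl,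
    iteratedFDeriv_add_apply (hg.of_le hjn).contDiffAt (hh.of_le hjn).contDiffAt]
  exact norm_add_le _ _

lemma jetNorm_clm_le (A : F →L[ℝ] G) {n : ℕ} {g : E → F} (hg : ContDiff ℝ n g) (x : E) :
    jetNorm n (fun y => A (g y)) x ≤ ‖A‖ * jetNorm n g x := by
  rw [jetNorm, jetNorm, mul_sum]
  refine sum_le_sum fun j hj => ?_
  exact A.norm_iteratedFDeriv_comp_left hg.contDiffAt
    (mod_cast Nat.lt_succ_iff.1 (mem_range.1 hj))

lemma jetNorm_sum_le {ι : Type*} (s : Finset ι) {n : ℕ} {g : ι → E → F}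
    (hg : ∀ i, ContDiff ℝ n (g i)) (x : E) :
    jetNorm n (fun y => ∑ i ∈ s, g i y) x ≤ ∑ i ∈ s, jetNorm n (g i) x := by
  classical
  induction s using Finset.induction_on with
  | empty => simp [jetNorm, iteratedFDeriv_fun_zero]
  | insert a s ha ih =>
    simp only [sum_insert ha]
    exact (jetNorm_add_le (hg a) (ContDiff.sum fun i _ => hg i) x).trans (by gcongr)

lemma jetNorm_smul_le {n : ℕ} {c : E → ℝ} {g : E → F} (hc : ContDiff ℝ n c)
    (hg : ContDiff ℝ n g) (x : E) :
    jetNorm n (fun y => c y • g y) x ≤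
      (∑ j ∈ range (n + 1), 2 ^ j) * (jetNorm n c x * jetNorm n g x) := by
  rw [jetNorm, sum_mul]
  refine sum_le_sum fun j hj => ?_
  have hjn : j ≤ n := Nat.lt_succ_iff.1 (mem_range.1 hj)
  calc ‖iteratedFDeriv ℝ j (fun y => c y • g y) x‖
      ≤ ∑ i ∈ range (j + 1),
          (j.choose i : ℝ) * ‖iteratedFDeriv ℝ i c x‖ * ‖iteratedFDeriv ℝ (j - i) g x‖ :=
        norm_iteratedFDeriv_smul_le hc hg x (mod_cast hjn)
    _ ≤ ∑ i ∈ range (j + 1), (j.choose i : ℝ) * (jetNorm n c x * jetNorm n g x) := by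
        refine sum_le_sum fun i hi => ?_
        rw [mul_assoc]
        have hi' := mem_range.1 hi
        gcongr
        · exact jetNorm_nonneg _ _ _
        · exact norm_iteratedFDeriv_le_jetNorm (by omega) c x
        · exact norm_iteratedFDeriv_le_jetNorm (by omega) g x
    _ = 2 ^ j * (jetNorm n c x * jetNorm n g x) := by
        rw [← sum_mul]
        exact_mod_cast congrArg (fun t : ℕ => (t : ℝ) * (jetNorm n c x * jetNorm n g x))
          (Nat.sum_range_choose j)

lemma jetNorm_dirDeriv_le {n : ℕ} {g : E → F} (hg : ContDiff ℝ (n + 1 : ℕ) g) (v : E) (x : E) :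
    jetNorm n (dirDeriv v g) x ≤ ‖v‖ * jetNorm (n + 1) g x := by
  have happly := jetNorm_clm_le (ContinuousLinearMap.apply ℝ F v)
    (hg.fderiv_right (m := n) (by norm_cast)) x
  refine happly.trans ?_
  rw [jetNorm_succ]
  have hv : ‖ContinuousLinearMap.apply ℝ F v‖ ≤ ‖v‖ :=
    ContinuousLinearMap.opNorm_le_bound _ (norm_nonneg v) fun A => by
      simpa [mul_comm] using A.le_opNorm v
  have := jetNorm_nonneg n (fderiv ℝ g) x
  gcongr
  linarith [norm_nonneg (g x)]

lemma exists_jetNorm_succ_le_sum_dirDeriv {ι : Type*} [Fintype ι] [FiniteDimensional ℝ E]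
    (b : Module.Basis ι ℝ E) (n : ℕ) :
    ∃ C : ℝ, 0 ≤ C ∧ ∀ g : E → F, ContDiff ℝ (n + 1 : ℕ) g → ∀ x,
      jetNorm (n + 1) g x ≤ C * (‖g x‖ + ∑ i, jetNorm n (dirDeriv (b i) g) x) := by
  let tensor (i : ι) : F →L[ℝ] E →L[ℝ] F :=
    ContinuousLinearMap.smulRightL ℝ E F (LinearMap.toContinuousLinearMap (b.coord i))
  refine ⟨1 + ∑ i, ‖tensor i‖, by positivity, fun g hg x => ?_⟩
  have hexpand : fderiv ℝ g = fun y => ∑ i, tensor i (dirDeriv (b i) g y) := by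
    funext y
    refine ContinuousLinearMap.ext fun v => ?_
    conv_lhs => rw [← b.sum_repr v, map_sum]
    simp [tensor, dirDeriv]
  have hdir (i : ι) : ContDiff ℝ n (dirDeriv (b i) g) := contDiff_dirDeriv hg _
  have hnonneg : 0 ≤ ∑ i, jetNorm n (dirDeriv (b i) g) x :=
    sum_nonneg fun _ _ => jetNorm_nonneg _ _ _
  have hfderiv : jetNorm n (fderiv ℝ g) x ≤
      (∑ i, ‖tensor i‖) * ∑ i, jetNorm n (dirDeriv (b i) g) x := by
    calc jetNorm n (fderiv ℝ g) x
        ≤ ∑ i, jetNorm n (fun y => tensor i (dirDeriv (b i) g y)) x := by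
          conv_lhs => rw [hexpand]
          exact jetNorm_sum_le _ (fun i => (tensor i).contDiff.comp (hdir i)) x
      _ ≤ ∑ i, ‖tensor i‖ * jetNorm n (dirDeriv (b i) g) x :=
          sum_le_sum fun i _ => jetNorm_clm_le _ (hdir i) x
      _ ≤ (∑ i, ‖tensor i‖) * ∑ i, jetNorm n (dirDeriv (b i) g) x := by
          rw [sum_mul]
          gcongr with i
          exact single_le_sum (f := fun i => jetNorm n (dirDeriv (b i) g) x)
            (fun _ _ => jetNorm_nonneg _ _ _) (mem_univ i)
  rw [jetNorm_succ, add_mul, one_mul]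
  have hcross : 0 ≤ (∑ i, ‖tensor i‖) * ‖g x‖ := by positivity
  linarith

lemma exists_jetNorm_one_sq_le {ι : Type*} [Fintype ι] [FiniteDimensional ℝ E]
    (b : Module.Basis ι ℝ E) : ∃ C : ℝ, 0 ≤ C ∧ ∀ g : E → F,
    ContDiff ℝ 1 g → ∀ x, jetNorm 1 g x ^ 2 ≤ C * (‖g x‖ ^ 2 + ∑ l, ‖dirDeriv (b l) g x‖ ^ 2) := by
  obtain ⟨C, _, hC⟩ := exists_jetNorm_succ_le_sum_dirDeriv (F := F) b 0
  refine ⟨C ^ 2 * 2 * (1 + Fintype.card ι), by positivity, fun g hg x => ?_⟩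
  have hcauchy : (∑ l, ‖dirDeriv (b l) g x‖) ^ 2 ≤
      Fintype.card ι * ∑ l, ‖dirDeriv (b l) g x‖ ^ 2 := sq_sum_le_card_mul_sum_sq
  have hjet := hC g hg x
  simp only [jetNorm_zero] at hjet
  have hcard : 0 ≤ (Fintype.card ι : ℝ) * ‖g x‖ ^ 2 := by positivity
  have hsum : 0 ≤ ∑ l, ‖dirDeriv (b l) g x‖ ^ 2 := by positivity
  calc jetNorm 1 g x ^ 2 ≤ (C * (‖g x‖ + ∑ l, ‖dirDeriv (b l) g x‖)) ^ 2 := by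
        gcongr
        exact jetNorm_nonneg _ _ _
    _ ≤ C ^ 2 * (2 * (‖g x‖ ^ 2 + (∑ l, ‖dirDeriv (b l) g x‖) ^ 2)) := by
        rw [mul_pow]
        gcongr
        exact add_sq_le
    _ ≤ C ^ 2 * (2 * ((1 + Fintype.card ι) * (‖g x‖ ^ 2 + ∑ l, ‖dirDeriv (b l) g x‖ ^ 2))) := by
        gcongr
        linarith
    _ = _ := by ring

end Jets

/-! ### Integration by parts -/

section Lipschitz

variable {E : Type*} [NormedAddCommGroup E] [NormedSpace ℝ E] [FiniteDimensional ℝ E]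
  [MeasurableSpace E] [BorelSpace E] {μ : Measure E} [μ.IsAddHaarMeasure] {C D : NNReal}
  {f g : E → ℝ}

lemma integrable_lineDeriv_of_hasCompactSupport (hf : LipschitzWith C f)
    (hfc : HasCompactSupport f) (v : E) : Integrable (fun x => lineDeriv ℝ f x v) μ := by
  have hsupp : Function.support (fun x => lineDeriv ℝ f x v) ⊆ tsupport f := fun x hx => by
    by_contra hxs
    refine hx ?_
    have hzero : f =ᶠ[𝓝 x] fun _ => (0 : ℝ) := notMem_tsupport_iff_eventuallyEq.1 hxs
    simp only [hzero.lineDeriv_eq]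
    simp [lineDeriv]
  rw [← integrableOn_iff_integrable_of_support_subset hsupp]
  exact (hf.locallyIntegrable_lineDeriv v).integrableOn_isCompact hfc

lemma integrable_mul_lineDeriv (hf : LipschitzWith C f) (hfc : HasCompactSupport f)
    (hg : LipschitzWith D g) (hgc : HasCompactSupport g) (w : E) :
    Integrable (fun x => f x * lineDeriv ℝ g x w) μ := by
  obtain ⟨B, hB⟩ := hfc.exists_bound_of_continuous hf.continuous
  exact (integrable_lineDeriv_of_hasCompactSupport hg hgc w).bdd_mul
    hf.continuous.aestronglyMeasurable (Eventually.of_forall hB)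

lemma integral_lineDeriv_eq_zero (hf : LipschitzWith C f) (hfc : HasCompactSupport f) (v : E) :
    ∫ x, lineDeriv ℝ f x v ∂μ = 0 := by
  have hone := (LipschitzWith.const (1 : ℝ)).integral_lineDeriv_mul_eq (μ := μ) hf hfc (-v)
  simpa [lineDeriv] using hone.symm

lemma integral_translate_mul_lineDeriv (hf : LipschitzWith C f) (hfc : HasCompactSupport f)
    (hg : LipschitzWith D g) (z w : E) :
    ∫ x, f (x + z) * lineDeriv ℝ g x w ∂μ = -∫ x, g (x + -z) * lineDeriv ℝ f x w ∂μ := by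
  have hfz : LipschitzWith C fun x => f (x + z) := LipschitzWith.of_dist_le_mul fun x y => by
    simpa using hf.dist_le_mul (x + z) (y + z)
  have hline (x : E) : lineDeriv ℝ (fun x => f (x + z)) x w = lineDeriv ℝ f (x + z) w := by
    simp only [lineDeriv, add_right_comm]
  have hparts := hg.integral_lineDeriv_mul_eq (μ := μ) hfz
    (hfc.comp_homeomorph (Homeomorph.addRight z)) w
  simp only [lineDeriv_neg, hline, neg_mul, integral_neg, mul_comm (lineDeriv ℝ _ _ _)] at hparts
  rw [hparts, ← integral_add_right_eq_self (fun x => g (x + -z) * lineDeriv ℝ f x w) z]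
  simp

lemma integral_lineDeriv_mul_lineDeriv_comm (hf : LipschitzWith C f) (hfc : HasCompactSupport f)
    (hg : LipschitzWith D g) (hgc : HasCompactSupport g) (v w : E) :
    ∫ x, lineDeriv ℝ f x v * lineDeriv ℝ g x w ∂μ =
      ∫ x, lineDeriv ℝ f x w * lineDeriv ℝ g x v ∂μ := by
  have hsplit {C D : NNReal} {f g : E → ℝ} (hf : LipschitzWith C f) (hfc : HasCompactSupport f)
      (hg : LipschitzWith D g) (hgc : HasCompactSupport g) (t : ℝ) (z : E) :
      ∫ x, t⁻¹ • (f (x + z) - f x) * lineDeriv ℝ g x w ∂μ =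
        t⁻¹ * (∫ x, f (x + z) * lineDeriv ℝ g x w ∂μ - ∫ x, f x * lineDeriv ℝ g x w ∂μ) := by
    have hfz : LipschitzWith C fun x => f (x + z) := LipschitzWith.of_dist_le_mul fun x y => by
      simpa using hf.dist_le_mul (x + z) (y + z)
    rw [← integral_sub
      (integrable_mul_lineDeriv hfz (hfc.comp_homeomorph (Homeomorph.addRight z)) hg hgc w)
      (integrable_mul_lineDeriv hf hfc hg hgc w), ← integral_const_mul]
    exact integral_congr_ae (Eventually.of_forall fun x => by simp only [smul_eq_mul]; ring)
  have hquot (t : ℝ) : ∫ x, t⁻¹ • (f (x + t • v) - f x) * lineDeriv ℝ g x w ∂μ =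
      -∫ x, t⁻¹ • (g (x + t • -v) - g x) * lineDeriv ℝ f x w ∂μ := by
    have hzero := integral_translate_mul_lineDeriv (μ := μ) hf hfc hg 0 w
    simp only [add_zero, neg_zero] at hzero
    rw [hsplit hf hfc hg hgc, hsplit hg hgc hf hfc,
      integral_translate_mul_lineDeriv hf hfc hg (t • v) w, hzero, smul_neg]
    ring
  have hlim := hf.integral_inv_smul_sub_mul_tendsto_integral_lineDeriv_mul
    (integrable_lineDeriv_of_hasCompactSupport (μ := μ) hg hgc w) v
  have hlim' := (hg.integral_inv_smul_sub_mul_tendsto_integral_lineDeriv_mul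
    (integrable_lineDeriv_of_hasCompactSupport (μ := μ) hf hfc w) (-v)).neg
  rw [tendsto_nhds_unique hlim (hlim'.congr fun t => (hquot t).symm), ← integral_neg]
  simp only [lineDeriv_neg, neg_mul, neg_neg, mul_comm (lineDeriv ℝ g _ _)]

end Lipschitz

section Domain

variable {E : Type*} [NormedAddCommGroup E] [NormedSpace ℝ E] {e : E} {φ : E → ℝ}

lemma IsHeight.measure_zeroSet [FiniteDimensional ℝ E] [MeasurableSpace E] [BorelSpace E]
    (hφ : IsHeight e φ) (hφc : Continuous φ) (μ : Measure E) [μ.IsAddHaarMeasure] :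
    μ {x | φ x = 0} = 0 := by
  let t (n : ℕ) : ℝ := ((n : ℝ) + 1)⁻¹
  refine Measure.addHaar_eq_zero_of_disjoint_translates μ (fun n => t n • e) ?_ ?_
    (isClosed_eq hφc continuous_const).measurableSet
  · refine (Metric.isBounded_iff_subset_closedBall 0).2 ⟨‖e‖, ?_⟩
    rintro _ ⟨n, rfl⟩
    have hn : t n ≤ 1 := inv_le_one_of_one_le₀ (by linarith [n.cast_nonneg (α := ℝ)])
    simpa [norm_smul, abs_of_pos (show 0 < t n by positivity)] using
      mul_le_of_le_one_left (norm_nonneg e) hn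
  · intro m n hmn
    simp only [Function.onFun, singleton_add, Set.disjoint_left, mem_image, mem_ofPred_eq]
    rintro _ ⟨y, hy, rfl⟩ ⟨z, hz, hzy⟩
    refine hmn ?_
    have hheight := congrArg φ hzy
    rw [add_comm _ z, add_comm _ y, hφ, hφ, hz, hy, zero_add, zero_add] at hheight
    exact_mod_cast add_right_cancel (inv_injective hheight).symm

lemma IsHeight.exists_lipschitzWith_indicator (hφ : IsHeight e φ) {K C : NNReal}
    (hφK : LipschitzWith K φ) {a : E → ℝ} (ha : LipschitzWith C a) (ha0 : ∀ x, φ x = 0 → a x = 0) :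
    ∃ C', LipschitzWith C' ({x | 0 < φ x}.indicator a) := by
  let shift (x : E) : ℝ := max (-φ x) 0
  have hshift : LipschitzWith K shift := hφK.neg.max_const 0
  have hretract := (LipschitzWith.id (α := E)).add
    (((ContinuousLinearMap.id ℝ ℝ).smulRight e).lipschitz.comp hshift)
  refine ⟨_, (?_ : a ∘ _ = {x | 0 < φ x}.indicator a) ▸ ha.comp hretract⟩
  funext x
  rcases lt_or_ge 0 (φ x) with hx | hx
  · simp [shift, indicator_of_mem (show x ∈ {x | 0 < φ x} from hx), hx.le]
  · rw [indicator_of_notMem (show x ∉ {x | 0 < φ x} from hx.not_gt)]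
    refine ha0 _ ?_
    simpa [shift, hx] using hφ x (-φ x)

lemma IsHeight.ae_lineDeriv_indicator [FiniteDimensional ℝ E] [MeasurableSpace E] [BorelSpace E]
    (hφ : IsHeight e φ) (hφc : Continuous φ) (μ : Measure E) [μ.IsAddHaarMeasure] {a : E → ℝ}
    (ha : Differentiable ℝ a) (v : E) :
    ∀ᵐ x ∂μ, lineDeriv ℝ ({x | 0 < φ x}.indicator a) x v =
      {x | 0 < φ x}.indicator (dirDeriv v a) x := by
  have hne : ∀ᵐ x ∂μ, φ x ≠ 0 := by
    simpa [ae_iff] using hφ.measure_zeroSet hφc μ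
  filter_upwards [hne] with x hx
  rcases hx.lt_or_gt with hneg | hpos
  · have hzero : {x | 0 < φ x}.indicator a =ᶠ[𝓝 x] fun _ => (0 : ℝ) := by
      filter_upwards [(isOpen_lt hφc continuous_const).mem_nhds hneg] with y hy
      exact indicator_of_notMem (show y ∉ {x | 0 < φ x} from lt_asymm hy) a
    rw [indicator_of_notMem (show x ∉ {x | 0 < φ x} from lt_asymm hneg), hzero.lineDeriv_eq]
    simp [lineDeriv]
  · have hself : {x | 0 < φ x}.indicator a =ᶠ[𝓝 x] a := by
      filter_upwards [(isOpen_lt continuous_const hφc).mem_nhds hpos] with y hy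
      exact indicator_of_mem (show y ∈ {x | 0 < φ x} from hy) a
    rw [indicator_of_mem (show x ∈ {x | 0 < φ x} from hpos), hself.lineDeriv_eq,
      (ha x).lineDeriv_eq_fderiv, dirDeriv]

end Domain

section CompactSupport

variable {E V : Type*} [NormedAddCommGroup E] [NormedSpace ℝ E] [FiniteDimensional ℝ E]
  [MeasurableSpace E] [BorelSpace E] {μ : Measure E} [μ.IsAddHaarMeasure]
  [NormedAddCommGroup V] [InnerProductSpace ℝ V] [FiniteDimensional ℝ V]
  {e : E} {φ : E → ℝ} {K : NNReal}

lemma IsHeight.setIntegral_dirDeriv_of_hasCompactSupport (hφ : IsHeight e φ)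
    (hφK : LipschitzWith K φ) {c : E → ℝ} (hc : ContDiff ℝ 1 c) (hcc : HasCompactSupport c)
    (hc0 : ∀ x, φ x = 0 → c x = 0) (v : E) : ∫ x in {x | 0 < φ x}, dirDeriv v c x ∂μ = 0 := by
  obtain ⟨C, hC⟩ := hc.lipschitzWith_of_hasCompactSupport hcc (by simp)
  obtain ⟨C', hC'⟩ := hφ.exists_lipschitzWith_indicator hφK hC hc0
  have hsupp : Function.support ({x | 0 < φ x}.indicator c) ⊆ Function.support c := by
    rw [support_indicator]
    exact inter_subset_right
  rw [← integral_indicator (isOpen_lt continuous_const hφK.continuous).measurableSet]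
  refine (integral_congr_ae ?_).trans (integral_lineDeriv_eq_zero hC' (hcc.mono hsupp) v)
  filter_upwards [hφ.ae_lineDeriv_indicator hφK.continuous μ (hc.differentiable (by simp)) v]
    with x hx using hx.symm

lemma IsHeight.setIntegral_dirDeriv_mul_dirDeriv_comm (hφ : IsHeight e φ)
    (hφK : LipschitzWith K φ) {a b : E → ℝ} (ha : ContDiff ℝ 1 a) (hac : HasCompactSupport a)
    (ha0 : ∀ x, φ x = 0 → a x = 0) (hb : ContDiff ℝ 1 b) (hbc : HasCompactSupport b) (v w : E) :
    ∫ x in {x | 0 < φ x}, dirDeriv v a x * dirDeriv w b x ∂μ =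
      ∫ x in {x | 0 < φ x}, dirDeriv w a x * dirDeriv v b x ∂μ := by
  obtain ⟨C, hC⟩ := ha.lipschitzWith_of_hasCompactSupport hac (by simp)
  obtain ⟨C', hC'⟩ := hφ.exists_lipschitzWith_indicator hφK hC ha0
  obtain ⟨D, hD⟩ := hb.lipschitzWith_of_hasCompactSupport hbc (by simp)
  have hset (v w : E) : ∫ x in {x | 0 < φ x}, dirDeriv v a x * dirDeriv w b x ∂μ =
      ∫ x, lineDeriv ℝ ({x | 0 < φ x}.indicator a) x v * lineDeriv ℝ b x w ∂μ := by
    rw [← integral_indicator (isOpen_lt continuous_const hφK.continuous).measurableSet]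
    refine integral_congr_ae ?_
    filter_upwards [hφ.ae_lineDeriv_indicator hφK.continuous μ (ha.differentiable (by simp)) v]
      with x hx
    rw [hx, (hb.differentiable (by simp) x).lineDeriv_eq_fderiv]
    exact indicator_mul_left _ (dirDeriv v a) (dirDeriv w b)
  have hsupp : Function.support ({x | 0 < φ x}.indicator a) ⊆ Function.support a := by
    rw [support_indicator]
    exact inter_subset_right
  rw [hset v w, hset w v]
  exact integral_lineDeriv_mul_lineDeriv_comm hC' (hac.mono hsupp) hD hbc v w

lemma IsHeight.setIntegral_inner_dirDeriv_comm (hφ : IsHeight e φ) (hφK : LipschitzWith K φ)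
    {a b : E → V} (ha : ContDiff ℝ 1 a) (hac : HasCompactSupport a)
    (ha0 : ∀ x, φ x = 0 → a x = 0) (hb : ContDiff ℝ 1 b) (hbc : HasCompactSupport b) (v w : E) :
    ∫ x in {x | 0 < φ x}, inner ℝ (dirDeriv v a x) (dirDeriv w b x) ∂μ =
      ∫ x in {x | 0 < φ x}, inner ℝ (dirDeriv w a x) (dirDeriv v b x) ∂μ := by
  let B := stdOrthonormalBasis ℝ V
  let coord (i) (g : E → V) (x : E) : ℝ := innerSL ℝ (B i) (g x)
  have hcoord (i) {g : E → V} (hg : ContDiff ℝ 1 g) : ContDiff ℝ 1 (coord i g) :=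
    (innerSL ℝ (B i)).contDiff.comp hg
  have hcoordc (i) {g : E → V} (hg : HasCompactSupport g) : HasCompactSupport (coord i g) :=
    hg.comp_left (map_zero (innerSL ℝ (B i)))
  have hsum (v w x : E) : inner ℝ (dirDeriv v a x) (dirDeriv w b x) =
      ∑ i, dirDeriv v (coord i a) x * dirDeriv w (coord i b) x := by
    rw [← B.sum_inner_mul_inner]
    refine Finset.sum_congr rfl fun i _ => ?_
    rw [dirDeriv_clm _ (ha.differentiable (by simp) x),
      dirDeriv_clm _ (hb.differentiable (by simp) x), real_inner_comm]
    rfl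
  have hInt (v w : E) (i) : IntegrableOn
      (fun x => dirDeriv v (coord i a) x * dirDeriv w (coord i b) x) {x | 0 < φ x} μ :=
    (Continuous.integrable_of_hasCompactSupport
      ((contDiff_dirDeriv (n := 0) (hcoord i ha) v).continuous.mul
        (contDiff_dirDeriv (n := 0) (hcoord i hb) w).continuous)
      ((hcoordc i hac).fderiv_apply ℝ v).mul_right).integrableOn
  simp only [hsum]
  rw [integral_finsetSum _ fun i _ => hInt v w i, integral_finsetSum _ fun i _ => hInt w v i]
  exact Finset.sum_congr rfl fun i _ => hφ.setIntegral_dirDeriv_mul_dirDeriv_comm hφK (hcoord i ha)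
    (hcoordc i hac) (fun x hx => by simp [coord, ha0 x hx]) (hcoord i hb) (hcoordc i hbc) v w

end CompactSupport

section Cutoff

variable {E F : Type*} [NormedAddCommGroup E] [NormedSpace ℝ E] [FiniteDimensional ℝ E]
  [NormedAddCommGroup F] [NormedSpace ℝ F]

/-- A sequence of smooth compactly supported cutoffs, equal to `1` on the balls of radius `n + 1`
and with uniformly bounded gradients, obtained by rescaling one bump function. -/
def cutoff (n : ℕ) (x : E) : ℝ :=
  (⟨1, 2, one_pos, one_lt_two⟩ : ContDiffBump (0 : E)) (((n : ℝ) + 1)⁻¹ • x)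

lemma contDiff_cutoff (n : ℕ) : ContDiff ℝ 1 (cutoff n : E → ℝ) :=
  (ContDiffBump.contDiff _).comp (contDiff_const_smul _)

lemma hasCompactSupport_cutoff (n : ℕ) : HasCompactSupport (cutoff n : E → ℝ) :=
  (ContDiffBump.hasCompactSupport _).comp_homeomorph
    (Homeomorph.smulOfNeZero ((n : ℝ) + 1)⁻¹ (by positivity))

lemma eventually_cutoff_eventuallyEq_one (x : E) :
    ∀ᶠ n in atTop, (cutoff n : E → ℝ) =ᶠ[𝓝 x] fun _ => 1 := by
  filter_upwards [eventually_ge_atTop ⌈‖x‖⌉₊] with n hn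
  have hx : ‖x‖ < (n : ℝ) + 1 := by
    linarith [(Nat.le_ceil ‖x‖).trans (Nat.cast_le.2 hn)]
  filter_upwards [(isOpen_lt continuous_norm continuous_const).mem_nhds hx] with y hy
  refine ContDiffBump.one_of_mem_closedBall _ ?_
  rw [mem_closedBall_zero_iff, norm_smul, norm_inv, Real.norm_of_nonneg (by positivity),
    inv_mul_le_iff₀ (by positivity), mul_one]
  exact le_of_lt hy

lemma exists_jetNorm_cutoff_le : ∃ C : ℝ, 0 ≤ C ∧ ∀ n (x : E), jetNorm 1 (cutoff n) x ≤ C := by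
  let f : ContDiffBump (0 : E) := ⟨1, 2, one_pos, one_lt_two⟩
  have hf : ContDiff ℝ 1 f := f.contDiff
  obtain ⟨C, hC⟩ := (f.hasCompactSupport.fderiv ℝ).exists_bound_of_continuous
    (hf.continuous_fderiv one_ne_zero)
  have hC0 : 0 ≤ C := (norm_nonneg _).trans (hC 0)
  refine ⟨1 + C, by positivity, fun n x => ?_⟩
  rw [jetNorm_succ, jetNorm_zero]
  have hfderiv : fderiv ℝ (cutoff n) x = ((n : ℝ) + 1)⁻¹ • fderiv ℝ f (((n : ℝ) + 1)⁻¹ • x) :=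
    fderiv_comp_smul _
  have hn : ((n : ℝ) + 1)⁻¹ ≤ 1 := inv_le_one_of_one_le₀ (by linarith [n.cast_nonneg (α := ℝ)])
  gcongr
  · exact (Real.norm_of_nonneg f.nonneg).trans_le f.le_one
  · rw [hfderiv, norm_smul, Real.norm_of_nonneg (by positivity)]
    exact (mul_le_of_le_one_left (norm_nonneg _) hn).trans (hC _)

lemma exists_jetNorm_cutoff_smul_le : ∃ C : ℝ, 0 ≤ C ∧ ∀ (g : E → F), ContDiff ℝ 1 g → ∀ n x,
    jetNorm 1 (fun y => cutoff n y • g y) x ≤ C * jetNorm 1 g x := by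
  obtain ⟨C, hC0, hC⟩ := exists_jetNorm_cutoff_le (E := E)
  refine ⟨3 * C, by positivity, fun g hg n x => ?_⟩
  refine (jetNorm_smul_le (n := 1) (contDiff_cutoff n) hg x).trans ?_
  have := jetNorm_nonneg 1 g x
  calc (∑ j ∈ Finset.range 2, (2 : ℝ) ^ j) * (jetNorm 1 (cutoff n) x * jetNorm 1 g x)
      ≤ (∑ j ∈ Finset.range 2, (2 : ℝ) ^ j) * (C * jetNorm 1 g x) := by gcongr; exact hC n x
    _ = 3 * C * jetNorm 1 g x := by norm_num [Finset.sum_range_succ]; ring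

lemma eventually_dirDeriv_cutoff_smul (g : E → F) (v x : E) :
    ∀ᶠ n in atTop, dirDeriv v (fun y => cutoff n y • g y) x = dirDeriv v g x := by
  filter_upwards [eventually_cutoff_eventuallyEq_one x] with n hn
  have hone : (fun y => cutoff n y • g y) =ᶠ[𝓝 x] g := hn.mono fun y hy => by simp [hy]
  rw [dirDeriv, hone.fderiv_eq, dirDeriv]

end Cutoff

section ZeroIntegral

variable {E : Type*} [MeasurableSpace E] {ν : Measure E}

/-- The integrable functions with integral zero. Integrations by parts are recorded as
memberships in this space, so that an integral inequality can be proved pointwise modulo it. -/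
def zeroIntegral (ν : Measure E) : Submodule ℝ (E → ℝ) where
  carrier := {f | Integrable f ν ∧ ∫ x, f x ∂ν = 0}
  zero_mem' := ⟨integrable_zero _ _ _, integral_zero _ _⟩
  add_mem' := fun hf hg => ⟨hf.1.add hg.1, by simp [integral_add hf.1 hg.1, hf.2, hg.2]⟩
  smul_mem' := fun c f hf => ⟨hf.1.smul c, by simp [integral_const_mul, hf.2]⟩

lemma mem_zeroIntegral_of_dominated {F : ℕ → E → ℝ} {f bound : E → ℝ}
    (hF : ∀ n, Measurable (F n)) (hbound : Integrable bound ν)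
    (hFbound : ∀ n x, ‖F n x‖ ≤ bound x) (hFint : ∀ n, ∫ x, F n x ∂ν = 0)
    (hFf : ∀ x, ∀ᶠ n in atTop, F n x = f x) : f ∈ zeroIntegral ν := by
  have hlim (x : E) : Tendsto (fun n => F n x) atTop (𝓝 (f x)) :=
    tendsto_const_nhds.congr' ((hFf x).mono fun _ h => h.symm)
  refine ⟨hbound.mono' (measurable_of_tendsto_metrizable hF
    (tendsto_pi_nhds.2 hlim)).aestronglyMeasurable (.of_forall fun x => ?_), ?_⟩
  · obtain ⟨n, hn⟩ := (hFf x).exists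
    exact hn ▸ hFbound n x
  · have hconv := tendsto_integral_of_dominated_convergence bound
      (fun n => (hF n).aestronglyMeasurable) hbound (fun n => .of_forall (hFbound n))
      (.of_forall hlim)
    simp only [hFint] at hconv
    exact tendsto_nhds_unique hconv tendsto_const_nhds

end ZeroIntegral

section LEModZeroIntegral

variable {E : Type*} [MeasurableSpace E] {ν : Measure E} {f g h f' g' : E → ℝ}

/-- `f ≤ g` pointwise up to a function with integral zero. -/
def LEModZeroIntegral (ν : Measure E) (f g : E → ℝ) : Prop :=
  ∃ z ∈ zeroIntegral ν, ∀ x, f x ≤ g x + z x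

namespace LEModZeroIntegral

lemma integral_le (hfg : LEModZeroIntegral ν f g) (hf : Integrable f ν) (hg : Integrable g ν) :
    ∫ x, f x ∂ν ≤ ∫ x, g x ∂ν := by
  obtain ⟨z, ⟨hzint, hz⟩, hle⟩ := hfg
  have hmono := integral_mono hf (hg.add hzint) hle
  rwa [Pi.add_def, integral_add hg hzint, hz, add_zero] at hmono

lemma of_le (hfg : ∀ x, f x ≤ g x) : LEModZeroIntegral ν f g :=
  ⟨0, zero_mem _, by simpa using hfg⟩

lemma of_sub_mem (hfg : (fun x => f x - g x) ∈ zeroIntegral ν) : LEModZeroIntegral ν f g :=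
  ⟨_, hfg, fun x => (add_sub_cancel (g x) (f x)).ge⟩

lemma trans (hfg : LEModZeroIntegral ν f g) (hgh : LEModZeroIntegral ν g h) :
    LEModZeroIntegral ν f h := by
  obtain ⟨y, hy, hfy⟩ := hfg
  obtain ⟨z, hz, hgz⟩ := hgh
  refine ⟨z + y, add_mem hz hy, fun x => ?_⟩
  rw [Pi.add_apply, ← add_assoc]
  exact (hfy x).trans (add_le_add_left (hgz x) _)

lemma add (hfg : LEModZeroIntegral ν f g) (hfg' : LEModZeroIntegral ν f' g') :
    LEModZeroIntegral ν (fun x => f x + f' x) (fun x => g x + g' x) := by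
  obtain ⟨y, hy, hfy⟩ := hfg
  obtain ⟨z, hz, hfz⟩ := hfg'
  exact ⟨y + z, add_mem hy hz, fun x =>
    (add_le_add (hfy x) (hfz x)).trans_eq (add_add_add_comm _ _ _ _)⟩

lemma const_mul (hfg : LEModZeroIntegral ν f g) {c : ℝ} (hc : 0 ≤ c) :
    LEModZeroIntegral ν (fun x => c * f x) (fun x => c * g x) := by
  obtain ⟨z, hz, hfz⟩ := hfg
  exact ⟨c • z, Submodule.smul_mem _ c hz, fun x =>
    (mul_le_mul_of_nonneg_left (hfz x) hc).trans_eq (mul_add _ _ _)⟩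

lemma sum {ι : Type*} {s : Finset ι} {f g : ι → E → ℝ}
    (hfg : ∀ i ∈ s, LEModZeroIntegral ν (f i) (g i)) :
    LEModZeroIntegral ν (fun x => ∑ i ∈ s, f i x) (fun x => ∑ i ∈ s, g i x) := by
  classical
  induction s using Finset.induction_on with
  | empty => exact of_le fun _ => le_rfl
  | insert i s hi ih =>
    simp only [Finset.sum_insert hi]
    exact (hfg i (Finset.mem_insert_self i s)).add
      (ih fun j hj => hfg j (Finset.mem_insert_of_mem hj))

lemma absorb (hfg : LEModZeroIntegral ν f fun x => f x / 2 + g x / 2) :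
    LEModZeroIntegral ν f g := by
  obtain ⟨z, hz, hfz⟩ := hfg
  refine ⟨(2 : ℝ) • z, Submodule.smul_mem _ _ hz, fun x => ?_⟩
  rw [Pi.smul_apply, smul_eq_mul]
  linarith [hfz x]

end LEModZeroIntegral

end LEModZeroIntegral

section Divergence

variable {E V : Type*} [NormedAddCommGroup E] [NormedSpace ℝ E] [FiniteDimensional ℝ E]
  [MeasurableSpace E] [BorelSpace E] {μ : Measure E} [μ.IsAddHaarMeasure]
  [NormedAddCommGroup V] [InnerProductSpace ℝ V] [FiniteDimensional ℝ V]
  {e : E} {φ : E → ℝ} {K : NNReal}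

theorem IsHeight.dirDeriv_mem_zeroIntegral (hφ : IsHeight e φ) (hφK : LipschitzWith K φ)
    {c : E → ℝ} (hc : ContDiff ℝ 1 c) (hcint : Integrable (jetNorm 1 c) (μ.restrict {x | 0 < φ x}))
    (hc0 : ∀ x, φ x = 0 → c x = 0) (v : E) :
    dirDeriv v c ∈ zeroIntegral (μ.restrict {x | 0 < φ x}) := by
  obtain ⟨C, -, hC⟩ := exists_jetNorm_cutoff_smul_le (E := E) (F := ℝ)
  have hcut (n : ℕ) : ContDiff ℝ 1 fun y => cutoff n y • c y := (contDiff_cutoff n).smul hc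
  refine mem_zeroIntegral_of_dominated (F := fun n => dirDeriv v fun y => cutoff n y • c y)
    (fun n => (continuous_dirDeriv (hcut n) v).measurable) ((hcint.const_mul C).const_mul ‖v‖)
    (fun n x => ?_) (fun n => ?_) (eventually_dirDeriv_cutoff_smul c v)
  · exact (norm_dirDeriv_le _ v x).trans (by gcongr; exact hC c hc n x)
  · exact hφ.setIntegral_dirDeriv_of_hasCompactSupport hφK (hcut n)
      (hasCompactSupport_cutoff n).smul_right (fun x hx => by simp [hc0 x hx]) v

/-- Both sides are formally `∫ ⟪a, ∂ᵥ∂_w b⟫` up to sign; the point is that `b` is only `C¹`. -/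
theorem IsHeight.inner_dirDeriv_sub_comm_mem_zeroIntegral (hφ : IsHeight e φ)
    (hφK : LipschitzWith K φ) {a b : E → V} (ha : ContDiff ℝ 1 a) (hb : ContDiff ℝ 1 b)
    (haint : MemLp (jetNorm 1 a) 2 (μ.restrict {x | 0 < φ x}))
    (hbint : MemLp (jetNorm 1 b) 2 (μ.restrict {x | 0 < φ x}))
    (ha0 : ∀ x, φ x = 0 → a x = 0) (v w : E) :
    (fun x => inner ℝ (dirDeriv v a x) (dirDeriv w b x) -
      inner ℝ (dirDeriv w a x) (dirDeriv v b x)) ∈ zeroIntegral (μ.restrict {x | 0 < φ x}) := by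
  obtain ⟨C, hC0, hC⟩ := exists_jetNorm_cutoff_smul_le (E := E) (F := V)
  let cut (n : ℕ) (g : E → V) (y : E) : V := cutoff n y • g y
  have hcut (n : ℕ) {g : E → V} (hg : ContDiff ℝ 1 g) : ContDiff ℝ 1 (cut n g) :=
    (contDiff_cutoff n).smul hg
  have hcutc (n : ℕ) (g : E → V) : HasCompactSupport (cut n g) :=
    (hasCompactSupport_cutoff n).smul_right
  have hcont (n : ℕ) (v w : E) :
      Continuous fun x => inner ℝ (dirDeriv v (cut n a) x) (dirDeriv w (cut n b) x) :=
    (continuous_dirDeriv (hcut n ha) v).inner (continuous_dirDeriv (hcut n hb) w)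
  have hbound (n : ℕ) (v w x : E) : ‖inner ℝ (dirDeriv v (cut n a) x) (dirDeriv w (cut n b) x)‖ ≤
      ‖v‖ * (C * jetNorm 1 a x) * (‖w‖ * (C * jetNorm 1 b x)) :=
    (norm_inner_le_norm _ _).trans (mul_le_mul
      ((norm_dirDeriv_le _ v x).trans (by gcongr; exact hC a ha n x))
      ((norm_dirDeriv_le _ w x).trans (by gcongr; exact hC b hb n x)) (norm_nonneg _)
      (mul_nonneg (norm_nonneg v) (mul_nonneg hC0 (jetNorm_nonneg _ _ _))))
  refine mem_zeroIntegral_of_dominated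
    (F := fun n x => inner ℝ (dirDeriv v (cut n a) x) (dirDeriv w (cut n b) x) -
      inner ℝ (dirDeriv w (cut n a) x) (dirDeriv v (cut n b) x))
    (bound := fun x => 2 * ‖v‖ * ‖w‖ * C ^ 2 * (jetNorm 1 a x * jetNorm 1 b x))
    (fun n => ((hcont n v w).sub (hcont n w v)).measurable)
    ((haint.integrable_mul hbint).const_mul _) (fun n x => ?_) (fun n => ?_) (fun x => ?_)
  · exact (norm_sub_le _ _).trans
      ((add_le_add (hbound n v w x) (hbound n w v x)).trans_eq (by ring))
  · have hInt (v w : E) := ((hcont n v w).integrable_of_hasCompactSupport (μ := μ)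
      (((hcutc n a).fderiv_apply ℝ v).mono fun x hx h0 => hx (by simp [dirDeriv, h0]))).integrableOn
        (s := {x | 0 < φ x})
    rw [integral_sub (hInt v w) (hInt w v), sub_eq_zero]
    exact hφ.setIntegral_inner_dirDeriv_comm hφK (hcut n ha) (hcutc n a)
      (fun x hx => by simp [cut, ha0 x hx]) (hcut n hb) (hcutc n b) v w
  · filter_upwards [eventually_dirDeriv_cutoff_smul a v x, eventually_dirDeriv_cutoff_smul a w x,
      eventually_dirDeriv_cutoff_smul b v x, eventually_dirDeriv_cutoff_smul b w x]
      with n hav haw hbv hbw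
    simp only [cut, hav, haw, hbv, hbw]

end Divergence

/-! ### Operators bounded on jets -/

section JetBounded

variable {E F G H : Type*} [NormedAddCommGroup E] [NormedSpace ℝ E] [NormedAddCommGroup F]
  [NormedSpace ℝ F] [NormedAddCommGroup G] [NormedSpace ℝ G] [NormedAddCommGroup H]
  [NormedSpace ℝ H] {n m N : ℕ}

/-- A `C^n` function whose derivatives of order at most `n` are bounded. -/
def ContDiffBounded (n : ℕ) (c : E → F) : Prop :=
  ContDiff ℝ n c ∧ ∃ B, 0 ≤ B ∧ ∀ x, jetNorm n c x ≤ B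

lemma ContDiffBounded.dirDeriv {c : E → F} (hc : ContDiffBounded (n + 1) c) (v : E) :
    ContDiffBounded n (dirDeriv v c) := by
  obtain ⟨hcn, B, hB0, hB⟩ := hc
  exact ⟨contDiff_dirDeriv hcn v, ‖v‖ * B, by positivity,
    fun x => (jetNorm_dirDeriv_le hcn v x).trans (by gcongr; exact hB x)⟩

lemma ContDiffBounded.of_le {c : E → F} (hc : ContDiffBounded N c) (hn : n ≤ N) :
    ContDiffBounded n c :=
  ⟨hc.1.of_le (by exact_mod_cast hn),
    hc.2.imp fun _ hB => ⟨hB.1, fun x => (jetNorm_mono hn c x).trans (hB.2 x)⟩⟩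

/-- The operator `P` maps `C^N` functions to `C^n` functions, and the `n`-jet of `P u` at a point
is controlled by the `N`-jet of `u` at that point. -/
structure IsJetBounded (n N : ℕ) (P : (E → F) → E → G) : Prop where
  contDiff : ∀ u, ContDiff ℝ N u → ContDiff ℝ n (P u)
  exists_le : ∃ C, 0 ≤ C ∧ ∀ u, ContDiff ℝ N u → ∀ x, jetNorm n (P u) x ≤ C * jetNorm N u x

namespace IsJetBounded

lemma id (n : ℕ) : IsJetBounded n n fun u : E → F => u :=
  ⟨fun _ hu => hu, 1, zero_le_one, fun _ _ _ => (one_mul _).ge⟩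

lemma dirDeriv (n : ℕ) (v : E) : IsJetBounded n (n + 1) (dirDeriv v : (E → F) → E → F) :=
  ⟨fun _ hu => contDiff_dirDeriv hu v,
    ‖v‖, norm_nonneg v, fun _ hu x => jetNorm_dirDeriv_le hu v x⟩

variable {P Q : (E → F) → E → G}

lemma comp {R : (E → G) → E → H} (hR : IsJetBounded n m R) (hP : IsJetBounded m N P) :
    IsJetBounded n N fun u => R (P u) := by
  obtain ⟨C, hC0, hC⟩ := hR.exists_le
  obtain ⟨D, hD0, hD⟩ := hP.exists_le
  refine ⟨fun u hu => hR.contDiff _ (hP.contDiff u hu), C * D, by positivity, fun u hu x => ?_⟩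
  rw [mul_assoc]
  exact (hC _ (hP.contDiff u hu) x).trans (by gcongr; exact hD u hu x)

lemma mono_right (hP : IsJetBounded n m P) (hmN : m ≤ N) : IsJetBounded n N P := by
  obtain ⟨C, hC0, hC⟩ := hP.exists_le
  have hle {u : E → F} (hu : ContDiff ℝ N u) : ContDiff ℝ m u := hu.of_le (by exact_mod_cast hmN)
  exact ⟨fun u hu => hP.contDiff u (hle hu), C, hC0, fun u hu x =>
    (hC u (hle hu) x).trans (by gcongr; exact jetNorm_mono hmN u x)⟩

lemma clm_comp (A : G →L[ℝ] H) (hP : IsJetBounded n N P) :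
    IsJetBounded n N fun u x => A (P u x) :=
  comp (R := fun g x => A (g x)) ⟨fun _ hg => A.contDiff.comp hg, ‖A‖, norm_nonneg A,
    fun _ hg x => jetNorm_clm_le A hg x⟩ hP

lemma smul {c : E → ℝ} (hc : ContDiffBounded n c) (hP : IsJetBounded n N P) :
    IsJetBounded n N fun u x => c x • P u x := by
  obtain ⟨hcn, B, hB0, hB⟩ := hc
  refine comp (R := fun g x => c x • g x) ⟨fun _ hg => hcn.smul hg,
    (∑ j ∈ Finset.range (n + 1), 2 ^ j) * B, by positivity, fun g hg x => ?_⟩ hP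
  rw [mul_assoc]
  refine (jetNorm_smul_le hcn hg x).trans ?_
  gcongr
  · exact jetNorm_nonneg _ _ _
  · exact hB x

lemma add (hP : IsJetBounded n N P) (hQ : IsJetBounded n N Q) :
    IsJetBounded n N fun u x => P u x + Q u x := by
  obtain ⟨C, hC0, hC⟩ := hP.exists_le
  obtain ⟨D, hD0, hD⟩ := hQ.exists_le
  refine ⟨fun u hu => (hP.contDiff u hu).add (hQ.contDiff u hu), C + D, by positivity,
    fun u hu x => ?_⟩
  rw [add_mul]
  exact (jetNorm_add_le (hP.contDiff u hu) (hQ.contDiff u hu) x).trans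
    (add_le_add (hC u hu x) (hD u hu x))

lemma neg (hP : IsJetBounded n N P) : IsJetBounded n N fun u x => -P u x :=
  hP.clm_comp (-ContinuousLinearMap.id ℝ G)

lemma sub (hP : IsJetBounded n N P) (hQ : IsJetBounded n N Q) :
    IsJetBounded n N fun u x => P u x - Q u x := by
  simpa only [sub_eq_add_neg] using hP.add hQ.neg

lemma exists_forall_le {ι : Type*} [Finite ι] {P : ι → (E → F) → E → G}
    (hP : ∀ i, IsJetBounded n N (P i)) : ∃ C, 0 ≤ C ∧
      ∀ i u, ContDiff ℝ N u → ∀ x, jetNorm n (P i u) x ≤ C * jetNorm N u x := by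
  cases nonempty_fintype ι
  choose C hC0 hC using fun i => (hP i).exists_le
  refine ⟨∑ i, C i, Finset.sum_nonneg fun i _ => hC0 i, fun i u hu x => (hC i u hu x).trans ?_⟩
  have := jetNorm_nonneg N u x
  gcongr
  exact Finset.single_le_sum (fun i _ => hC0 i) (Finset.mem_univ i)

lemma sum {ι : Type*} [Fintype ι] {P : ι → (E → F) → E → G}
    (hP : ∀ i, IsJetBounded n N (P i)) : IsJetBounded n N fun u x => ∑ i, P i u x := by
  obtain ⟨C, hC0, hC⟩ := exists_forall_le hP
  refine ⟨fun u hu => ContDiff.sum fun i _ => (hP i).contDiff u hu, Fintype.card ι * C,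
    by positivity, fun u hu x => (jetNorm_sum_le _ (fun i => (hP i).contDiff u hu) x).trans ?_⟩
  calc ∑ i, jetNorm n (P i u) x ≤ ∑ _i : ι, C * jetNorm N u x :=
        Finset.sum_le_sum fun i _ => hC i u hu x
    _ = Fintype.card ι * C * jetNorm N u x := by simp [mul_assoc]

lemma exists_norm_le (hP : IsJetBounded 0 N P) : ∃ C, 0 ≤ C ∧
    ∀ u, ContDiff ℝ N u → ∀ x, ‖P u x‖ ≤ C * jetNorm N u x := by
  simpa only [jetNorm_zero] using hP.exists_le

lemma memLp [MeasurableSpace E] [BorelSpace E] {p : ENNReal}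
    {ν : Measure E} (hP : IsJetBounded n N P) {u : E → F} (hu : ContDiff ℝ N u)
    (hInt : MemLp (jetNorm N u) p ν) : MemLp (jetNorm n (P u)) p ν := by
  obtain ⟨C, -, hC⟩ := hP.exists_le
  refine (hInt.const_mul C).mono' (continuous_jetNorm (hP.contDiff u hu)).aestronglyMeasurable
    (.of_forall fun x => ?_)
  rw [Real.norm_of_nonneg (jetNorm_nonneg _ _ _)]
  exact hC u hu x

end IsJetBounded

end JetBounded

/-! ### Tangential derivatives -/

section Tangential

variable {E F G : Type*} [NormedAddCommGroup E] [NormedSpace ℝ E] [NormedAddCommGroup F]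
  [NormedSpace ℝ F] [NormedAddCommGroup G] [NormedSpace ℝ G] {e : E} {φ : E → ℝ} {n N : ℕ}

/-- A `C^{n+1}` height function whose gradient has bounded derivatives up to order `n`. -/
structure IsRegularHeight (n : ℕ) (e : E) (φ : E → ℝ) : Prop where
  isHeight : IsHeight e φ
  contDiff : ContDiff ℝ (n + 1 : ℕ) φ
  exists_bound : ∃ B, 0 ≤ B ∧ ∀ x, jetNorm n (fderiv ℝ φ) x ≤ B

namespace IsRegularHeight

lemma of_le (hφ : IsRegularHeight N e φ) (hn : n ≤ N) : IsRegularHeight n e φ where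
  isHeight := hφ.isHeight
  contDiff := hφ.contDiff.of_le (by exact_mod_cast Nat.succ_le_succ hn)
  exists_bound := hφ.exists_bound.imp fun _ hB =>
    ⟨hB.1, fun x => (jetNorm_mono hn _ x).trans (hB.2 x)⟩

lemma contDiffBounded_dirDeriv (hφ : IsRegularHeight n e φ) (v : E) :
    ContDiffBounded n (dirDeriv v φ) := by
  obtain ⟨B, hB0, hB⟩ := hφ.exists_bound
  have hfderiv := hφ.contDiff.fderiv_right (m := n) (by norm_cast)
  refine ⟨contDiff_dirDeriv hφ.contDiff v, ‖ContinuousLinearMap.apply ℝ ℝ v‖ * B, by positivity,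
    fun x => (jetNorm_clm_le (ContinuousLinearMap.apply ℝ ℝ v) hfderiv x).trans ?_⟩
  gcongr
  exact hB x

lemma exists_lipschitzWith (hφ : IsRegularHeight n e φ) : ∃ K, LipschitzWith K φ := by
  obtain ⟨B, hB0, hB⟩ := hφ.exists_bound
  exact ⟨⟨B, hB0⟩, lipschitzWith_of_nnnorm_fderiv_le (hφ.contDiff.differentiable (by simp))
    fun x => (norm_le_jetNorm n _ x).trans (hB x)⟩

end IsRegularHeight

lemma IsHeight.dirDeriv_self (hφ : IsHeight e φ) (hφd : Differentiable ℝ φ) (x : E) :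
    dirDeriv e φ x = 1 := by
  rw [dirDeriv, ← (hφd x).lineDeriv_eq_fderiv, lineDeriv]
  simp [hφ x]

lemma IsHeight.dirDeriv_self_dirDeriv (hφ : IsHeight e φ) (hφ2 : ContDiff ℝ (2 : ℕ) φ) (v x : E) :
    dirDeriv e (dirDeriv v φ) x = 0 := by
  rw [dirDeriv_comm hφ2, funext (hφ.dirDeriv_self (hφ2.differentiable (by simp)))]
  simp [dirDeriv]

/-- The derivative along the projection of `v` to the level sets of `φ` in the direction `e`. -/
def tangDeriv (φ : E → ℝ) (e v : E) (u : E → F) (x : E) : F :=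
  dirDeriv v u x - dirDeriv v φ x • dirDeriv e u x

lemma IsRegularHeight.isJetBounded_tangDeriv (hφ : IsRegularHeight n e φ) (v : E) :
    IsJetBounded n (n + 1) (tangDeriv φ e v : (E → F) → E → F) :=
  (IsJetBounded.dirDeriv n v).sub ((IsJetBounded.dirDeriv n e).smul (hφ.contDiffBounded_dirDeriv v))

lemma IsHeight.tangDeriv_eq_zero (hφ : IsHeight e φ) (hφd : Differentiable ℝ φ) {u : E → F}
    (hu : Differentiable ℝ u) (hu0 : ∀ x, φ x = 0 → u x = 0) (v : E) {x : E} (hx : φ x = 0) :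
    tangDeriv φ e v u x = 0 := by
  let γ (t : ℝ) : E := x + t • v - φ (x + t • v) • e
  have hline : HasDerivAt (fun t : ℝ => x + t • v) v 0 := by
    simpa using ((hasDerivAt_id (0 : ℝ)).smul_const v).const_add x
  have hφline : HasDerivAt (fun t : ℝ => φ (x + t • v)) (dirDeriv v φ x) 0 :=
    HasFDerivAt.comp_hasDerivAt (0 : ℝ) (by simpa using (hφd x).hasFDerivAt) hline
  have hγ : HasDerivAt γ (v - dirDeriv v φ x • e) 0 := hline.sub (hφline.smul_const e)
  have hcomp : HasDerivAt (u ∘ γ) (fderiv ℝ u x (v - dirDeriv v φ x • e)) 0 :=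
    HasFDerivAt.comp_hasDerivAt (0 : ℝ) (by simpa [γ, hx] using (hu x).hasFDerivAt) hγ
  have hzero : u ∘ γ = fun _ => 0 := funext fun t => hu0 _ <| by
    simpa [γ, sub_eq_add_neg] using hφ (x + t • v) (-φ (x + t • v))
  rw [hzero] at hcomp
  simpa [tangDeriv, dirDeriv] using hcomp.unique (hasDerivAt_const _ _)

lemma dirDeriv_tangDeriv {u : E → F} (hφ : ContDiff ℝ (2 : ℕ) φ) (hu : ContDiff ℝ (2 : ℕ) u)
    (v w : E) (x : E) : dirDeriv w (tangDeriv φ e v u) x =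
      tangDeriv φ e v (dirDeriv w u) x - dirDeriv w (dirDeriv v φ) x • dirDeriv e u x := by
  have hφv := differentiable_dirDeriv hφ v x
  have hue := differentiable_dirDeriv hu e x
  unfold tangDeriv
  rw [dirDeriv_sub (differentiable_dirDeriv hu v x) (hφv.fun_smul hue), dirDeriv_smul hφv hue,
    dirDeriv_comm hu w v, dirDeriv_comm hu w e]
  module

end Tangential

section TangentialIntegration

variable {E V : Type*} [NormedAddCommGroup E] [NormedSpace ℝ E] [FiniteDimensional ℝ E]
  [MeasurableSpace E] [BorelSpace E] {μ : Measure E} [μ.IsAddHaarMeasure]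
  [NormedAddCommGroup V] [InnerProductSpace ℝ V] {e : E} {φ : E → ℝ}

/-- Two exchanges of derivatives, for `z` and for `∂ᵥφ • z`; the boundary term is cancelled because
`tangDeriv φ e v` is tangent to the boundary. -/
lemma IsRegularHeight.inner_tangDeriv_sub_mem_zeroIntegral [FiniteDimensional ℝ V]
    (hφ : IsRegularHeight 1 e φ) {b z : E → V} (hb : ContDiff ℝ 1 b) (hz : ContDiff ℝ 1 z)
    (hbint : MemLp (jetNorm 1 b) 2 (μ.restrict {x | 0 < φ x}))
    (hzint : MemLp (jetNorm 1 z) 2 (μ.restrict {x | 0 < φ x}))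
    (hz0 : ∀ x, φ x = 0 → z x = 0) (v w : E) :
    (fun x => inner ℝ (dirDeriv w b x) (tangDeriv φ e v z x) -
        inner ℝ (tangDeriv φ e v b x) (dirDeriv w z x) +
        dirDeriv w (dirDeriv v φ) x * inner ℝ (dirDeriv e b x) (z x)) ∈
      zeroIntegral (μ.restrict {x | 0 < φ x}) := by
  obtain ⟨K, hK⟩ := hφ.exists_lipschitzWith
  have hn := hφ.contDiffBounded_dirDeriv v
  have hsmul := (IsJetBounded.id (E := E) (F := V) 1).smul hn
  have hexch := hφ.isHeight.inner_dirDeriv_sub_comm_mem_zeroIntegral hK hz hb hzint hbint hz0 w v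
  have hexch' := hφ.isHeight.inner_dirDeriv_sub_comm_mem_zeroIntegral hK (hsmul.contDiff z hz) hb
    (hsmul.memLp hz hzint) hbint (fun x hx => by simp [hz0 x hx]) w e
  convert Submodule.sub_mem _ hexch' hexch using 1
  funext x
  have hnd := hn.1.differentiable (by simp) x
  have hzd := hz.differentiable (by simp) x
  simp only [Pi.sub_apply, dirDeriv_smul hnd hzd, tangDeriv,
    hφ.isHeight.dirDeriv_self_dirDeriv hφ.contDiff, inner_sub_left, inner_sub_right,
    inner_add_right, real_inner_smul_left, real_inner_smul_right, zero_smul, zero_add,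
    real_inner_comm (dirDeriv _ b x)]
  ring

end TangentialIntegration

/-! ### Elliptic systems -/

section Elliptic

variable {E V ι : Type*} [NormedAddCommGroup E] [NormedSpace ℝ E] [NormedAddCommGroup V]
  [InnerProductSpace ℝ V] [Fintype ι] {e : E} {φ : E → ℝ}

/-- The second-order operator `u ↦ -∑ Aₗₘ ∂ₗ∂ₘ u` with constant coefficients, where `∂ₗ` is the
derivative along the `l`-th vector of the basis `b`. -/
def ellipticOp (b : Module.Basis ι ℝ E) (A : ι → ι → V →L[ℝ] V) (u : E → V) (x : E) : V :=
  -∑ l, ∑ m, A l m (dirDeriv (b l) (dirDeriv (b m) u) x)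

/-- The Legendre condition with constant `c`: the quadratic form of the coefficients is bounded
below by `c` on all of `V^ι`. -/
def IsLegendre (A : ι → ι → V →L[ℝ] V) (c : ℝ) : Prop :=
  0 < c ∧ ∀ p : ι → V, c * ∑ l, ‖p l‖ ^ 2 ≤ ∑ l, ∑ m, inner ℝ (A l m (p m)) (p l)

variable (b : Module.Basis ι ℝ E) (A : ι → ι → V →L[ℝ] V)

lemma isJetBounded_ellipticOp (n : ℕ) : IsJetBounded n (n + 2) (ellipticOp b A) :=
  (IsJetBounded.sum fun l => IsJetBounded.sum fun m => ((IsJetBounded.dirDeriv n (b l)).comp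
    (IsJetBounded.dirDeriv (n + 1) (b m))).clm_comp (A l m)).neg

variable {b A}

lemma dirDeriv_ellipticOp {u : E → V} (hu : ContDiff ℝ (3 : ℕ) u) (v : E) :
    dirDeriv v (ellipticOp b A u) = ellipticOp b A (dirDeriv v u) := by
  have hd (l m : ι) : Differentiable ℝ (dirDeriv (b l) (dirDeriv (b m) u)) :=
    differentiable_dirDeriv (contDiff_dirDeriv (n := 2) hu _) _
  have hdA (l m : ι) : Differentiable ℝ fun x => A l m (dirDeriv (b l) (dirDeriv (b m) u) x) :=
    (A l m).differentiable.comp (hd l m)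
  funext x
  have hneg := dirDeriv_clm (-ContinuousLinearMap.id ℝ V)
    (DifferentiableAt.fun_sum fun l (_ : l ∈ Finset.univ) =>
      DifferentiableAt.fun_sum fun m (_ : m ∈ Finset.univ) => hdA l m x) v
  refine hneg.trans (congrArg Neg.neg ?_)
  refine (dirDeriv_sum (fun l _ => DifferentiableAt.fun_sum fun m _ => hdA l m x) v).trans ?_
  refine Finset.sum_congr rfl fun l _ => ?_
  rw [dirDeriv_sum fun m _ => hdA l m x]
  refine Finset.sum_congr rfl fun m _ => ?_
  rw [dirDeriv_clm _ (hd l m x), dirDeriv_comm (contDiff_dirDeriv (n := 2) hu _) v,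
    dirDeriv_comm (hu.of_le (by norm_num)) v]

lemma tangDeriv_ellipticOp {u : E → V} (hu : ContDiff ℝ (3 : ℕ) u) (v x : E) :
    tangDeriv φ e v (ellipticOp b A u) x =
      -∑ l, ∑ m, A l m (tangDeriv φ e v (dirDeriv (b l) (dirDeriv (b m) u)) x) := by
  have hcomm (v : E) (l m : ι) : dirDeriv (b l) (dirDeriv (b m) (dirDeriv v u)) =
      dirDeriv v (dirDeriv (b l) (dirDeriv (b m) u)) := by
    rw [dirDeriv_comm (hu.of_le (by norm_num)) (b m) v,
      dirDeriv_comm (contDiff_dirDeriv (n := 2) hu _) (b l) v]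
  simp only [tangDeriv, dirDeriv_ellipticOp hu, ellipticOp, hcomm, map_sub, map_smul,
    Finset.sum_sub_distrib, Finset.smul_sum, smul_neg]
  abel

/-- The part of order two of `ellipticOp b A ∘ tangDeriv φ e v`, see `ellipticOp_tangDeriv`. -/
def tangCommutator (b : Module.Basis ι ℝ E) (A : ι → ι → V →L[ℝ] V) (φ : E → ℝ) (e v : E)
    (u : E → V) (x : E) : V :=
  ∑ l, ∑ m, A l m (dirDeriv (b l) (dirDeriv v φ) x • dirDeriv e (dirDeriv (b m) u) x +
    dirDeriv (b l) (fun y => dirDeriv (b m) (dirDeriv v φ) y • dirDeriv e u y) x)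

lemma IsRegularHeight.ellipticOp_tangDeriv (hφ : IsRegularHeight 2 e φ) {u : E → V}
    (hu : ContDiff ℝ (3 : ℕ) u) (v x : E) : ellipticOp b A (tangDeriv φ e v u) x =
      tangDeriv φ e v (ellipticOp b A u) x + tangCommutator b A φ e v u x := by
  have hφ2 : ContDiff ℝ (2 : ℕ) φ := hφ.contDiff.of_le (by norm_num)
  have hu2 : ContDiff ℝ (2 : ℕ) u := hu.of_le (by norm_num)
  have hdd (l m : ι) : dirDeriv (b l) (dirDeriv (b m) (tangDeriv φ e v u)) x =
      tangDeriv φ e v (dirDeriv (b l) (dirDeriv (b m) u)) x -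
        (dirDeriv (b l) (dirDeriv v φ) x • dirDeriv e (dirDeriv (b m) u) x +
          dirDeriv (b l) (fun y => dirDeriv (b m) (dirDeriv v φ) y • dirDeriv e u y) x) := by
    have hum : ContDiff ℝ (2 : ℕ) (dirDeriv (b m) u) := contDiff_dirDeriv hu _
    have htang : Differentiable ℝ (tangDeriv φ e v (dirDeriv (b m) u)) :=
      (((hφ.of_le one_le_two).isJetBounded_tangDeriv v).contDiff _ hum).differentiable (by simp)
    have hrest : Differentiable ℝ fun y => dirDeriv (b m) (dirDeriv v φ) y • dirDeriv e u y :=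
      (differentiable_dirDeriv (contDiff_dirDeriv (n := 2) hφ.contDiff v) _).smul
        (differentiable_dirDeriv hu2 e)
    rw [funext (dirDeriv_tangDeriv hφ2 hu2 v (b m)), dirDeriv_sub (htang x) (hrest x),
      dirDeriv_tangDeriv hφ2 hum, sub_sub]
  simp only [tangDeriv_ellipticOp hu, ellipticOp, tangCommutator, hdd, map_sub,
    Finset.sum_sub_distrib]
  abel

lemma IsRegularHeight.isJetBounded_tangCommutator {n : ℕ} (hφ : IsRegularHeight (n + 2) e φ)
    (v : E) : IsJetBounded n (n + 2) (tangCommutator b A φ e v) := by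
  have hn (w : E) : ContDiffBounded (n + 1) (dirDeriv w (dirDeriv v φ)) :=
    (hφ.contDiffBounded_dirDeriv v).dirDeriv w
  exact IsJetBounded.sum fun l => IsJetBounded.sum fun m => IsJetBounded.clm_comp (A l m) <|
    (((IsJetBounded.dirDeriv n e).comp (IsJetBounded.dirDeriv (n + 1) (b m))).smul
      ((hn (b l)).of_le n.le_succ)).add
    ((IsJetBounded.dirDeriv n (b l)).comp ((IsJetBounded.dirDeriv (n + 1) e).smul (hn (b m))))

lemma IsRegularHeight.exists_jetNorm_ellipticOp_tangDeriv_le {n : ℕ}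
    (hφ : IsRegularHeight (n + 2) e φ) (v : E) : ∃ C, 0 ≤ C ∧
      ∀ u : E → V, ContDiff ℝ (n + 3 : ℕ) u → ∀ x,
        jetNorm n (ellipticOp b A (tangDeriv φ e v u)) x ≤
          C * (jetNorm (n + 1) (ellipticOp b A u) x + jetNorm (n + 2) u x) := by
  have hT := (hφ.of_le (Nat.le_add_right n 2)).isJetBounded_tangDeriv (F := V) v
  have hR := hφ.isJetBounded_tangCommutator (b := b) (A := A) v
  obtain ⟨C, hC0, hC⟩ := hT.exists_le
  obtain ⟨D, hD0, hD⟩ := hR.exists_le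
  refine ⟨C + D, by positivity, fun u hu x => ?_⟩
  have hu2 : ContDiff ℝ (n + 2 : ℕ) u := hu.of_le (by exact_mod_cast Nat.le_succ _)
  have hL := (isJetBounded_ellipticOp b A (n + 1)).contDiff u hu
  rw [funext ((hφ.of_le (Nat.le_add_left 2 n)).ellipticOp_tangDeriv
    (hu.of_le (by exact_mod_cast Nat.le_add_left 3 n)) v)]
  calc _ ≤ C * jetNorm (n + 1) (ellipticOp b A u) x + D * jetNorm (n + 2) u x :=
        (jetNorm_add_le (hT.contDiff _ hL) (hR.contDiff _ hu2) x).trans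
          (add_le_add (hC _ hL x) (hD _ hu2 x))
    _ ≤ _ := by
        have := jetNorm_nonneg (n + 1) (ellipticOp b A u) x
        have := jetNorm_nonneg (n + 2) u x
        nlinarith

lemma IsRegularHeight.exists_ellipticOp_tangDeriv_sq_le {n : ℕ}
    (hφ : IsRegularHeight (n + 2) e φ) (v : E) :
    ∃ C, 0 ≤ C ∧ ∀ u : E → V, ContDiff ℝ (n + 3 : ℕ) u → ∀ x,
      jetNorm n (ellipticOp b A (tangDeriv φ e v u)) x ^ 2 + ‖tangDeriv φ e v u x‖ ^ 2 ≤
        C * (jetNorm (n + 1) (ellipticOp b A u) x ^ 2 + jetNorm (n + 2) u x ^ 2) := by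
  obtain ⟨C, _, hC⟩ := hφ.exists_jetNorm_ellipticOp_tangDeriv_le (b := b) (A := A) v
  obtain ⟨D, hD0, hD⟩ := ((hφ.of_le (Nat.le_add_left 1 (n + 1))).isJetBounded_tangDeriv
    (F := V) v).exists_le
  refine ⟨2 * C ^ 2 + D ^ 2, by positivity, fun u hu x => ?_⟩
  set f := jetNorm (n + 1) (ellipticOp b A u) x
  set d := jetNorm (n + 2) u x
  have hop : jetNorm n (ellipticOp b A (tangDeriv φ e v u)) x ^ 2 ≤ 2 * C ^ 2 * (f ^ 2 + d ^ 2) :=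
    calc _ ≤ (C * (f + d)) ^ 2 := pow_le_pow_left₀ (jetNorm_nonneg _ _ _) (hC u hu x) 2
      _ = C ^ 2 * (f + d) ^ 2 := mul_pow _ _ _
      _ ≤ C ^ 2 * (2 * (f ^ 2 + d ^ 2)) := by gcongr; exact add_sq_le
      _ = _ := by ring
  have hlow : ‖tangDeriv φ e v u x‖ ^ 2 ≤ D ^ 2 * d ^ 2 :=
    calc _ ≤ (D * d) ^ 2 := by
          gcongr
          exact ((norm_le_jetNorm 1 _ x).trans
            (hD u (hu.of_le (by exact_mod_cast (by omega))) x)).trans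
            (by gcongr; exact jetNorm_mono (Nat.le_add_left 2 n) u x)
      _ = _ := mul_pow _ _ _
  linarith [mul_nonneg (sq_nonneg D) (sq_nonneg f)]

end Elliptic

section NormalDerivatives

variable {E V ι : Type*} [NormedAddCommGroup E] [NormedSpace ℝ E] [NormedAddCommGroup V]
  [InnerProductSpace ℝ V] [Fintype ι] {b : Module.Basis ι ℝ E} {A : ι → ι → V →L[ℝ] V} {c : ℝ}
  {e : E} {φ : E → ℝ}

lemma IsHeight.one_le_sum_dirDeriv_sq (hφ : IsHeight e φ) (hφd : Differentiable ℝ φ)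
    (b : Module.Basis ι ℝ E) (x : E) :
    1 ≤ (∑ l, b.repr e l ^ 2) * ∑ l, dirDeriv (b l) φ x ^ 2 := by
  have hone : ∑ l, b.repr e l * dirDeriv (b l) φ x = 1 := by
    rw [← hφ.dirDeriv_self hφd x, dirDeriv]
    conv_rhs => rw [← b.sum_repr e, map_sum]
    simp [dirDeriv]
  simpa [hone] using Finset.sum_mul_sq_le_sq_mul_sq Finset.univ (b.repr e)
    fun l => dirDeriv (b l) φ x

lemma IsLegendre.norm_le_norm_symbol (hA : IsLegendre A c) {n : ι → ℝ} {κ : ℝ} (hκ : 0 ≤ κ)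
    (hn : 1 ≤ κ * ∑ l, n l ^ 2) (w : V) :
    c * ‖w‖ ≤ κ * ‖∑ l, ∑ m, (n l * n m) • A l m w‖ := by
  obtain ⟨hc, hA⟩ := hA
  rcases (norm_nonneg w).eq_or_lt with hw | hw
  · rw [← hw, mul_zero]
    positivity
  have hform : ∑ l, ∑ m, inner ℝ (A l m (n m • w)) (n l • w) =
      inner ℝ (∑ l, ∑ m, (n l * n m) • A l m w) w := by
    simp only [sum_inner, map_smul, real_inner_smul_left, real_inner_smul_right, mul_assoc]
  have hlower : c * ((∑ l, n l ^ 2) * ‖w‖ ^ 2) ≤ ‖∑ l, ∑ m, (n l * n m) • A l m w‖ * ‖w‖ := by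
    have hp := hA fun l => n l • w
    simp only [norm_smul, Real.norm_eq_abs, mul_pow, sq_abs, ← Finset.sum_mul, hform] at hp
    exact hp.trans (real_inner_le_norm _ _)
  refine le_of_mul_le_mul_right ?_ hw
  calc c * ‖w‖ * ‖w‖ = c * (1 * ‖w‖ ^ 2) := by ring
    _ ≤ c * (κ * (∑ l, n l ^ 2) * ‖w‖ ^ 2) := by gcongr
    _ = κ * (c * ((∑ l, n l ^ 2) * ‖w‖ ^ 2)) := by ring
    _ ≤ κ * (‖∑ l, ∑ m, (n l * n m) • A l m w‖ * ‖w‖) := by gcongr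
    _ = κ * ‖∑ l, ∑ m, (n l * n m) • A l m w‖ * ‖w‖ := by ring

lemma IsHeight.dirDeriv_dirDeriv_eq (hφ : IsHeight e φ) (hφ2 : ContDiff ℝ (2 : ℕ) φ) {u : E → V}
    (hu : ContDiff ℝ (2 : ℕ) u) (v w x : E) : dirDeriv w (dirDeriv v u) x =
      (dirDeriv w φ x * dirDeriv v φ x) • dirDeriv e (dirDeriv e u) x +
        (dirDeriv w (tangDeriv φ e v u) x + dirDeriv w (dirDeriv v φ) x • dirDeriv e u x +
          dirDeriv v φ x • dirDeriv e (tangDeriv φ e w u) x) := by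
  rw [dirDeriv_tangDeriv hφ2 hu, dirDeriv_tangDeriv hφ2 hu, hφ.dirDeriv_self_dirDeriv hφ2,
    tangDeriv, tangDeriv, dirDeriv_comm hu v w, dirDeriv_comm hu e w]
  module

/-- The quantities which control the `(n+2)`-jet of `u`: the equation, the tangential derivatives,
and terms of lower order. -/
def ellipticMajorant (b : Module.Basis ι ℝ E) (A : ι → ι → V →L[ℝ] V) (φ : E → ℝ) (e : E) (n : ℕ)
    (u : E → V) (x : E) : ℝ :=
  jetNorm n (ellipticOp b A u) x + ∑ i, jetNorm (n + 1) (tangDeriv φ e (b i) u) x +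
    jetNorm (n + 1) u x

lemma jetNorm_le_ellipticMajorant (n : ℕ) (u : E → V) (x : E) :
    jetNorm (n + 1) u x ≤ ellipticMajorant b A φ e n u x :=
  le_add_of_nonneg_left (add_nonneg (jetNorm_nonneg _ _ _)
    (Finset.sum_nonneg fun _ _ => jetNorm_nonneg _ _ _))

lemma jetNorm_tangDeriv_le_ellipticMajorant (n : ℕ) (u : E → V) (x : E) (i : ι) :
    jetNorm (n + 1) (tangDeriv φ e (b i) u) x ≤ ellipticMajorant b A φ e n u x :=
  calc jetNorm (n + 1) (tangDeriv φ e (b i) u) x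
      ≤ ∑ i, jetNorm (n + 1) (tangDeriv φ e (b i) u) x :=
        Finset.single_le_sum (f := fun i => jetNorm (n + 1) (tangDeriv φ e (b i) u) x)
          (fun _ _ => jetNorm_nonneg _ _ _) (Finset.mem_univ i)
    _ ≤ ellipticMajorant b A φ e n u x := by
        unfold ellipticMajorant
        linarith [jetNorm_nonneg n (ellipticOp b A u) x, jetNorm_nonneg (n + 1) u x]

lemma norm_ellipticOp_le_ellipticMajorant (n : ℕ) (u : E → V) (x : E) :
    ‖ellipticOp b A u x‖ ≤ ellipticMajorant b A φ e n u x := by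
  rw [ellipticMajorant, add_assoc]
  exact (norm_le_jetNorm n _ x).trans (le_add_of_nonneg_right
    (add_nonneg (Finset.sum_nonneg fun _ _ => jetNorm_nonneg _ _ _) (jetNorm_nonneg _ _ _)))

variable (b A)

lemma IsRegularHeight.exists_norm_dirDeriv_dirDeriv_sub_le (hφ : IsRegularHeight 1 e φ) :
    ∃ C, 0 ≤ C ∧ ∀ u : E → V, ContDiff ℝ (2 : ℕ) u → ∀ x l m,
      ‖dirDeriv (b l) (dirDeriv (b m) u) x -
          (dirDeriv (b l) φ x * dirDeriv (b m) φ x) • dirDeriv e (dirDeriv e u) x‖ ≤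
        C * ellipticMajorant b A φ e 0 u x := by
  have hn (v : E) := (hφ.contDiffBounded_dirDeriv v)
  obtain ⟨C₁, hC₁, h₁⟩ := IsJetBounded.exists_forall_le fun l =>
    IsJetBounded.dirDeriv (F := V) 0 (b l)
  obtain ⟨C₂, hC₂, h₂⟩ := IsJetBounded.exists_forall_le fun p : ι × ι =>
    (IsJetBounded.dirDeriv (F := V) 0 e).smul ((hn (b p.2)).dirDeriv (b p.1))
  obtain ⟨C₃, hC₃, h₃⟩ := IsJetBounded.exists_forall_le fun m =>
    (IsJetBounded.dirDeriv (F := V) 0 e).smul ((hn (b m)).of_le zero_le_one)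
  simp only [jetNorm_zero] at h₁ h₂ h₃
  refine ⟨C₁ + C₂ + C₃, by positivity, fun u hu x l m => ?_⟩
  have hT (i : ι) : ContDiff ℝ (1 : ℕ) (tangDeriv φ e (b i) u) :=
    (hφ.isJetBounded_tangDeriv (b i)).contDiff u hu
  have hu1 : ContDiff ℝ (1 : ℕ) u := hu.of_le (by norm_num)
  rw [hφ.isHeight.dirDeriv_dirDeriv_eq hφ.contDiff hu, add_sub_cancel_left, add_mul, add_mul]
  refine norm_add₃_le.trans (add_le_add_three ?_ ?_ ?_)
  · exact (h₁ l _ (hT m) x).trans (by gcongr; exact jetNorm_tangDeriv_le_ellipticMajorant 0 u x m)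
  · exact (h₂ (l, m) _ hu1 x).trans (by gcongr; exact jetNorm_le_ellipticMajorant 0 u x)
  · exact (h₃ m _ (hT l) x).trans (by gcongr; exact jetNorm_tangDeriv_le_ellipticMajorant 0 u x l)

variable {A}

/-- Up to controlled terms the equation reads `-∑ ∂ₗφ ∂ₘφ Aₗₘ ∂ₑ∂ₑu = L u`, and ellipticity inverts
the matrix on the left. -/
lemma IsRegularHeight.exists_norm_normal_le (hφ : IsRegularHeight 1 e φ) (hA : IsLegendre A c) :
    ∃ C, 0 ≤ C ∧ ∀ u : E → V, ContDiff ℝ (2 : ℕ) u → ∀ x,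
      ‖dirDeriv e (dirDeriv e u) x‖ ≤ C * ellipticMajorant b A φ e 0 u x := by
  obtain ⟨C, hC0, hC⟩ := hφ.exists_norm_dirDeriv_dirDeriv_sub_le b A
  have hc := hA.1
  set κ := ∑ l, b.repr e l ^ 2
  have hκ : 0 ≤ κ := by positivity
  refine ⟨c⁻¹ * (κ * (1 + ∑ l, ∑ m, ‖A l m‖ * C)), by positivity, fun u hu x => ?_⟩
  rw [mul_assoc, le_inv_mul_iff₀ hc]
  refine (hA.norm_le_norm_symbol hκ (hφ.isHeight.one_le_sum_dirDeriv_sq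
    (hφ.contDiff.differentiable (by simp)) b x) _).trans ?_
  rw [mul_assoc]
  gcongr
  have hsplit : ∑ l, ∑ m, (dirDeriv (b l) φ x * dirDeriv (b m) φ x) •
      A l m (dirDeriv e (dirDeriv e u) x) = -ellipticOp b A u x -
        ∑ l, ∑ m, A l m (dirDeriv (b l) (dirDeriv (b m) u) x -
          (dirDeriv (b l) φ x * dirDeriv (b m) φ x) • dirDeriv e (dirDeriv e u) x) := by
    simp only [ellipticOp, map_sub, map_smul, Finset.sum_sub_distrib]
    abel
  rw [hsplit, add_mul, one_mul, Finset.sum_mul]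
  refine (norm_sub_le _ _).trans (add_le_add ?_ (norm_sum_le_of_le _ fun l _ => ?_))
  · rw [norm_neg]
    exact norm_ellipticOp_le_ellipticMajorant 0 u x
  · rw [Finset.sum_mul]
    refine norm_sum_le_of_le _ fun m _ => (A l m).le_of_opNorm_le_of_le le_rfl ?_ |>.trans_eq
      (mul_assoc _ _ _).symm
    exact hC u hu x l m

lemma IsRegularHeight.exists_norm_dirDeriv_dirDeriv_le (hφ : IsRegularHeight 1 e φ)
    (hA : IsLegendre A c) : ∃ C, 0 ≤ C ∧ ∀ u : E → V, ContDiff ℝ (2 : ℕ) u → ∀ x l m,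
      ‖dirDeriv (b l) (dirDeriv (b m) u) x‖ ≤ C * ellipticMajorant b A φ e 0 u x := by
  have hn (l : ι) := (hφ.contDiffBounded_dirDeriv (b l)).of_le zero_le_one
  obtain ⟨C, hC0, hC⟩ := hφ.exists_norm_dirDeriv_dirDeriv_sub_le b A
  obtain ⟨D, hD0, hD⟩ := hφ.exists_norm_normal_le b hA
  obtain ⟨B, hB0, hB⟩ := IsJetBounded.exists_forall_le fun p : ι × ι =>
    (((IsJetBounded.id (E := E) (F := V) 0).smul (hn p.2)).smul (hn p.1))
  simp only [jetNorm_zero, smul_smul] at hB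
  refine ⟨C + B * D, by positivity, fun u hu x l m => ?_⟩
  have hnormal := hB (l, m) _ (contDiff_dirDeriv (contDiff_dirDeriv (n := 1) hu e) e) x
  calc _ ≤ _ := norm_le_norm_sub_add _
        ((dirDeriv (b l) φ x * dirDeriv (b m) φ x) • dirDeriv e (dirDeriv e u) x)
    _ ≤ C * ellipticMajorant b A φ e 0 u x + B * (D * ellipticMajorant b A φ e 0 u x) :=
        add_le_add (hC u hu x l m) (hnormal.trans (by gcongr; exact hD u hu x))
    _ = _ := by ring

lemma IsRegularHeight.exists_jetNorm_two_le [FiniteDimensional ℝ E] (hφ : IsRegularHeight 1 e φ)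
    (hA : IsLegendre A c) : ∃ C, 0 ≤ C ∧ ∀ u : E → V, ContDiff ℝ (2 : ℕ) u → ∀ x,
      jetNorm 2 u x ≤ C * ellipticMajorant b A φ e 0 u x := by
  obtain ⟨B, hB0, hB⟩ := hφ.exists_norm_dirDeriv_dirDeriv_le b hA
  obtain ⟨C, hC0, hC⟩ := exists_jetNorm_succ_le_sum_dirDeriv (F := V) b 1
  obtain ⟨D, hD0, hD⟩ := exists_jetNorm_succ_le_sum_dirDeriv (F := V) b 0
  refine ⟨C * (1 + ∑ m, D * (‖b m‖ + ∑ _l : ι, B)), by positivity, fun u hu x => ?_⟩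
  set R := ellipticMajorant b A φ e 0 u x
  have hjet : jetNorm 1 u x ≤ R := jetNorm_le_ellipticMajorant 0 u x
  calc jetNorm 2 u x ≤ C * (‖u x‖ + ∑ m, jetNorm 1 (dirDeriv (b m) u) x) := hC u hu x
    _ ≤ C * (R + ∑ m, D * (‖b m‖ * R + ∑ _l : ι, B * R)) := by
        gcongr with m
        · exact (norm_le_jetNorm 1 u x).trans hjet
        · refine (hD _ (contDiff_dirDeriv (n := 1) hu (b m)) x).trans ?_
          simp only [jetNorm_zero]
          gcongr with l
          · exact (norm_dirDeriv_le u _ x).trans (by gcongr)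
          · exact hB u hu x l m
    _ = _ := by
        simp only [← Finset.sum_mul, ← Finset.mul_sum, ← add_mul]
        ring

lemma IsRegularHeight.exists_ellipticMajorant_dirDeriv_le {n : ℕ}
    (hφ : IsRegularHeight (n + 2) e φ) (v : E) : ∃ C, 0 ≤ C ∧
      ∀ u : E → V, ContDiff ℝ (n + 3 : ℕ) u → ∀ x,
        ellipticMajorant b A φ e n (dirDeriv v u) x ≤ C * ellipticMajorant b A φ e (n + 1) u x := by
  have hrest (i : ι) : IsJetBounded (n + 1) (n + 2) fun (u : E → V) x =>
      dirDeriv v (dirDeriv (b i) φ) x • dirDeriv e u x :=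
    (IsJetBounded.dirDeriv (n + 1) e).smul ((hφ.contDiffBounded_dirDeriv (b i)).dirDeriv v)
  obtain ⟨C, hC0, hC⟩ := IsJetBounded.exists_forall_le hrest
  refine ⟨‖v‖ + ∑ _i : ι, C, by positivity, fun u hu x => ?_⟩
  have hu2 : ContDiff ℝ (n + 2 : ℕ) u := hu.of_le (by exact_mod_cast Nat.le_succ _)
  have hφ2 : ContDiff ℝ (2 : ℕ) φ := hφ.contDiff.of_le (by exact_mod_cast (by omega))
  have hcomm (i : ι) : tangDeriv φ e (b i) (dirDeriv v u) = fun y =>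
      dirDeriv v (tangDeriv φ e (b i) u) y + dirDeriv v (dirDeriv (b i) φ) y • dirDeriv e u y :=
    funext fun y => by
      rw [dirDeriv_tangDeriv hφ2 (hu.of_le (by exact_mod_cast (by omega))), sub_add_cancel]
  have hT (i : ι) : ContDiff ℝ (n + 2 : ℕ) (tangDeriv φ e (b i) u) :=
    (hφ.isJetBounded_tangDeriv (b i)).contDiff u hu
  have htang (i : ι) : jetNorm (n + 1) (tangDeriv φ e (b i) (dirDeriv v u)) x ≤
      ‖v‖ * jetNorm (n + 2) (tangDeriv φ e (b i) u) x + C * jetNorm (n + 2) u x := by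
    rw [hcomm i]
    exact (jetNorm_add_le (contDiff_dirDeriv (hT i) v) ((hrest i).contDiff u hu2) x).trans
      (add_le_add (jetNorm_dirDeriv_le (hT i) v x) (hC i u hu2 x))
  have hop : jetNorm n (ellipticOp b A (dirDeriv v u)) x ≤
      ‖v‖ * jetNorm (n + 1) (ellipticOp b A u) x := by
    rw [← dirDeriv_ellipticOp (hu.of_le (by exact_mod_cast (by omega)))]
    exact jetNorm_dirDeriv_le ((isJetBounded_ellipticOp b A (n + 1)).contDiff u hu) v x
  calc ellipticMajorant b A φ e n (dirDeriv v u) x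
      ≤ ‖v‖ * jetNorm (n + 1) (ellipticOp b A u) x +
          ∑ i, (‖v‖ * jetNorm (n + 2) (tangDeriv φ e (b i) u) x + C * jetNorm (n + 2) u x) +
          ‖v‖ * jetNorm (n + 2) u x :=
        add_le_add_three hop (Finset.sum_le_sum fun i _ => htang i) (jetNorm_dirDeriv_le hu2 v x)
    _ = ‖v‖ * ellipticMajorant b A φ e (n + 1) u x + (∑ _i : ι, C) * jetNorm (n + 2) u x := by
        simp only [ellipticMajorant, Finset.sum_add_distrib, ← Finset.mul_sum, Finset.sum_mul]
        ring
    _ ≤ (‖v‖ + ∑ _i : ι, C) * ellipticMajorant b A φ e (n + 1) u x := by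
        rw [add_mul]
        gcongr
        exact jetNorm_le_ellipticMajorant (n + 1) u x

theorem IsRegularHeight.exists_jetNorm_le_ellipticMajorant [FiniteDimensional ℝ E] {n : ℕ}
    (hφ : IsRegularHeight (n + 1) e φ) (hA : IsLegendre A c) : ∃ C, 0 ≤ C ∧
      ∀ u : E → V, ContDiff ℝ (n + 2 : ℕ) u → ∀ x,
        jetNorm (n + 2) u x ≤ C * ellipticMajorant b A φ e n u x := by
  induction n with
  | zero => exact hφ.exists_jetNorm_two_le b hA
  | succ n ih =>
    obtain ⟨B, hB0, hB⟩ := ih (hφ.of_le (Nat.le_succ _))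
    obtain ⟨C, hC0, hC⟩ := exists_jetNorm_succ_le_sum_dirDeriv (F := V) b (n + 2)
    choose D hD0 hD using fun m => hφ.exists_ellipticMajorant_dirDeriv_le (A := A) b (b m)
    refine ⟨C * (1 + ∑ m, B * D m), ?_, fun u hu x => ?_⟩
    · have := Finset.sum_nonneg fun m (_ : m ∈ Finset.univ) => mul_nonneg hB0 (hD0 m)
      positivity
    rw [mul_assoc, add_mul, one_mul, Finset.sum_mul]
    refine (hC u hu x).trans ?_
    gcongr with m
    · exact (norm_le_jetNorm (n + 2) u x).trans (jetNorm_le_ellipticMajorant (n + 1) u x)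
    · rw [mul_assoc]
      exact (hB _ (contDiff_dirDeriv hu (b m)) x).trans (by gcongr; exact hD m u hu x)

lemma IsRegularHeight.exists_jetNorm_sq_le [FiniteDimensional ℝ E] {n : ℕ}
    (hφ : IsRegularHeight (n + 1) e φ) (hA : IsLegendre A c) :
    ∃ C, 0 ≤ C ∧ ∀ u : E → V, ContDiff ℝ (n + 2 : ℕ) u → ∀ x,
      jetNorm (n + 2) u x ^ 2 ≤ C * (jetNorm n (ellipticOp b A u) x ^ 2 +
        ∑ i, jetNorm (n + 1) (tangDeriv φ e (b i) u) x ^ 2 + jetNorm (n + 1) u x ^ 2) := by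
  obtain ⟨C, _, hC⟩ := hφ.exists_jetNorm_le_ellipticMajorant b hA
  refine ⟨C ^ 2 * (3 * (1 + Fintype.card ι)), by positivity, fun u hu x => ?_⟩
  set f := jetNorm n (ellipticOp b A u) x
  set t := fun i => jetNorm (n + 1) (tangDeriv φ e (b i) u) x
  set d := jetNorm (n + 1) u x
  have hcauchy : (∑ i, t i) ^ 2 ≤ Fintype.card ι * ∑ i, t i ^ 2 := sq_sum_le_card_mul_sum_sq
  have hcard : 0 ≤ (Fintype.card ι : ℝ) * (f ^ 2 + d ^ 2) := by positivity
  have hsum : 0 ≤ ∑ i, t i ^ 2 := by positivity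
  calc jetNorm (n + 2) u x ^ 2 ≤ (C * (f + ∑ i, t i + d)) ^ 2 :=
        pow_le_pow_left₀ (jetNorm_nonneg _ _ _) (hC u hu x) 2
    _ ≤ C ^ 2 * (3 * (f ^ 2 + (∑ i, t i) ^ 2 + d ^ 2)) := by
        rw [mul_pow]
        gcongr
        linarith [sq_nonneg (f - ∑ i, t i), sq_nonneg (f - d), sq_nonneg (∑ i, t i - d)]
    _ ≤ C ^ 2 * (3 * ((1 + Fintype.card ι) * (f ^ 2 + ∑ i, t i ^ 2 + d ^ 2))) := by
        gcongr
        linarith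
    _ = _ := by ring

end NormalDerivatives

/-! ### The a priori estimate -/

section Energy

variable {E V ι : Type*} [NormedAddCommGroup E] [NormedSpace ℝ E] [FiniteDimensional ℝ E]
  [MeasurableSpace E] [BorelSpace E] {μ : Measure E} [μ.IsAddHaarMeasure]
  [NormedAddCommGroup V] [InnerProductSpace ℝ V] [Fintype ι] {b : Module.Basis ι ℝ E}
  {A : ι → ι → V →L[ℝ] V} {c : ℝ} {e : E} {φ : E → ℝ} {K : NNReal}

lemma IsHeight.dirDeriv_inner_mem_zeroIntegral (hφ : IsHeight e φ) (hφK : LipschitzWith K φ)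
    {a z : E → V} (ha : ContDiff ℝ 1 a) (hz : ContDiff ℝ 1 z)
    (haint : MemLp (jetNorm 1 a) 2 (μ.restrict {x | 0 < φ x}))
    (hzint : MemLp (jetNorm 1 z) 2 (μ.restrict {x | 0 < φ x}))
    (hz0 : ∀ x, φ x = 0 → z x = 0) (v : E) :
    (fun x => inner ℝ (a x) (dirDeriv v z x) + inner ℝ (dirDeriv v a x) (z x)) ∈
      zeroIntegral (μ.restrict {x | 0 < φ x}) := by
  have had := ha.differentiable one_ne_zero
  have hzd := hz.differentiable one_ne_zero
  have hinner : ContDiff ℝ 1 fun x => inner ℝ (a x) (z x) := ha.inner ℝ hz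
  have hInt : Integrable (jetNorm 1 fun x => inner ℝ (a x) (z x)) (μ.restrict {x | 0 < φ x}) :=
    (haint.integrable_mul hzint).mono' (continuous_jetNorm hinner).aestronglyMeasurable
      (.of_forall fun x => by
        rw [Real.norm_of_nonneg (jetNorm_nonneg _ _ _)]
        exact jetNorm_inner_le had hzd x)
  convert hφ.dirDeriv_mem_zeroIntegral hφK hinner hInt (fun x hx => by simp [hz0 x hx]) v using 1
  exact funext fun x => (fderiv_inner_apply ℝ (had x) (hzd x) v).symm

lemma IsHeight.sum_inner_dirDeriv_sub_mem_zeroIntegral (hφ : IsHeight e φ)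
    (hφK : LipschitzWith K φ) {u z : E → V} (hu : ContDiff ℝ (2 : ℕ) u) (hz : ContDiff ℝ 1 z)
    (huint : MemLp (jetNorm 2 u) 2 (μ.restrict {x | 0 < φ x}))
    (hzint : MemLp (jetNorm 1 z) 2 (μ.restrict {x | 0 < φ x}))
    (hz0 : ∀ x, φ x = 0 → z x = 0) :
    (fun x => ∑ l, ∑ m, inner ℝ (A l m (dirDeriv (b m) u x)) (dirDeriv (b l) z x) -
      inner ℝ (ellipticOp b A u x) (z x)) ∈ zeroIntegral (μ.restrict {x | 0 < φ x}) := by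
  have hflux (l m : ι) : IsJetBounded 1 2 fun (u : E → V) x => A l m (dirDeriv (b m) u x) :=
    (IsJetBounded.dirDeriv 1 (b m)).clm_comp (A l m)
  convert sum_mem (t := Finset.univ) fun l _ => sum_mem (t := Finset.univ) fun m _ =>
    hφ.dirDeriv_inner_mem_zeroIntegral hφK ((hflux l m).contDiff u hu) hz
      ((hflux l m).memLp hu huint) hzint hz0 (b l) using 1
  funext x
  simp only [Finset.sum_apply, Finset.sum_add_distrib, ellipticOp, inner_neg_left, sum_inner,
    dirDeriv_clm _ (differentiable_dirDeriv hu _ x), sub_neg_eq_add]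

variable (μ b)

lemma IsHeight.exists_jetNorm_one_sq_le_ellipticOp (hφ : IsHeight e φ) (hφK : LipschitzWith K φ)
    (hA : IsLegendre A c) : ∃ C, 0 ≤ C ∧ ∀ u : E → V, ContDiff ℝ (2 : ℕ) u →
      MemLp (jetNorm 2 u) 2 (μ.restrict {x | 0 < φ x}) → (∀ x, φ x = 0 → u x = 0) →
      LEModZeroIntegral (μ.restrict {x | 0 < φ x}) (fun x => jetNorm 1 u x ^ 2)
        fun x => C * (‖ellipticOp b A u x‖ ^ 2 + ‖u x‖ ^ 2) := by
  obtain ⟨C, hC0, hC⟩ := exists_jetNorm_one_sq_le (F := V) b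
  obtain ⟨hc, hA⟩ := hA
  refine ⟨C * (1 + c⁻¹), by positivity, fun u hu hInt hu0 => ?_⟩
  have hu1 : ContDiff ℝ (1 : ℕ) u := hu.of_le (by norm_num)
  have hInt1 : MemLp (jetNorm 1 u) 2 (μ.restrict {x | 0 < φ x}) :=
    ((IsJetBounded.id 1).mono_right one_le_two).memLp hu hInt
  have hgreen := LEModZeroIntegral.of_sub_mem
    (hφ.sum_inner_dirDeriv_sub_mem_zeroIntegral (A := A) (b := b) hφK hu hu1 hInt hInt1 hu0)
  have hgrad : LEModZeroIntegral (μ.restrict {x | 0 < φ x})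
      (fun x => ∑ l, ‖dirDeriv (b l) u x‖ ^ 2)
      fun x => c⁻¹ * inner ℝ (ellipticOp b A u x) (u x) :=
    (LEModZeroIntegral.of_le fun x => (le_inv_mul_iff₀ hc).2 (hA fun m => dirDeriv (b m) u x)).trans
      (hgreen.const_mul (inv_nonneg.2 hc.le))
  refine ((LEModZeroIntegral.of_le (hC u hu1)).trans (((LEModZeroIntegral.of_le fun _ => le_rfl).add
    hgrad).const_mul hC0)).trans (.of_le fun x => ?_)
  have hyoung : inner ℝ (ellipticOp b A u x) (u x) ≤ ‖ellipticOp b A u x‖ ^ 2 + ‖u x‖ ^ 2 := by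
    nlinarith [real_inner_le_norm (ellipticOp b A u x) (u x),
      sq_nonneg (‖ellipticOp b A u x‖ - ‖u x‖)]
  rw [mul_assoc, add_mul, one_mul]
  gcongr
  exact le_add_of_nonneg_left (sq_nonneg _)

end Energy

section TangentialEnergy

variable {E V ι : Type*} [NormedAddCommGroup E] [NormedSpace ℝ E] [NormedAddCommGroup V]
  [InnerProductSpace ℝ V] [Fintype ι] {e : E} {φ : E → ℝ}

/-- The commutator terms in the energy identity for a tangential derivative, see
`inner_dirDeriv_tangDeriv_sub_mem_zeroIntegral`. -/
def tangEnergyError (A : V →L[ℝ] V) (φ : E → ℝ) (e v w w' : E) (u : E → V) (x : E) : ℝ :=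
  inner ℝ (dirDeriv w (dirDeriv v φ) x • A (dirDeriv e (dirDeriv w' u) x)) (tangDeriv φ e v u x) -
    inner ℝ (dirDeriv w' (dirDeriv v φ) x • A (dirDeriv e u x)) (dirDeriv w (tangDeriv φ e v u) x)

lemma IsRegularHeight.exists_tangEnergyError_le (hφ : IsRegularHeight 1 e φ) (A : V →L[ℝ] V)
    (v w w' : E) : ∃ C, 0 ≤ C ∧ ∀ u : E → V, ContDiff ℝ (2 : ℕ) u → ∀ x,
      tangEnergyError A φ e v w w' u x ≤ C * (jetNorm 2 u x * jetNorm 1 u x) := by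
  have hn (w : E) := (hφ.contDiffBounded_dirDeriv v).dirDeriv w
  have hT := hφ.isJetBounded_tangDeriv (F := V) v
  obtain ⟨C₁, hC₁, h₁⟩ := ((((IsJetBounded.dirDeriv 0 e).comp
    (IsJetBounded.dirDeriv 1 w')).clm_comp A).smul (hn w)).exists_norm_le
  obtain ⟨C₂, hC₂, h₂⟩ :=
    ((hφ.of_le zero_le_one).isJetBounded_tangDeriv (F := V) v).exists_norm_le
  obtain ⟨C₃, hC₃, h₃⟩ := (((IsJetBounded.dirDeriv 0 e).clm_comp A).smul (hn w')).exists_norm_le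
  obtain ⟨C₄, hC₄, h₄⟩ := ((IsJetBounded.dirDeriv 0 w).comp hT).exists_norm_le
  refine ⟨C₁ * C₂ + C₃ * C₄, by positivity, fun u hu x => ?_⟩
  have hu1 : ContDiff ℝ (1 : ℕ) u := hu.of_le (by norm_num)
  have hj1 := jetNorm_nonneg 1 u x
  have hj2 := jetNorm_nonneg 2 u x
  calc tangEnergyError A φ e v w w' u x
      ≤ C₁ * jetNorm 2 u x * (C₂ * jetNorm 1 u x) + C₃ * jetNorm 1 u x * (C₄ * jetNorm 2 u x) :=
        (le_abs_self _).trans <| (abs_sub _ _).trans <| add_le_add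
          ((abs_real_inner_le_norm _ _).trans
            (mul_le_mul (h₁ u hu x) (h₂ u hu1 x) (norm_nonneg _) (by positivity)))
          ((abs_real_inner_le_norm _ _).trans
            (mul_le_mul (h₃ u hu1 x) (h₄ u hu x) (norm_nonneg _) (by positivity)))
    _ = _ := by ring

variable [FiniteDimensional ℝ E] [MeasurableSpace E] [BorelSpace E] {μ : Measure E}
  [μ.IsAddHaarMeasure] [FiniteDimensional ℝ V]

lemma IsRegularHeight.inner_dirDeriv_tangDeriv_sub_mem_zeroIntegral (hφ : IsRegularHeight 1 e φ)
    (A : V →L[ℝ] V) {u : E → V} (hu : ContDiff ℝ (2 : ℕ) u)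
    (hInt : MemLp (jetNorm 2 u) 2 (μ.restrict {x | 0 < φ x})) (hu0 : ∀ x, φ x = 0 → u x = 0)
    (v w w' : E) :
    (fun x => inner ℝ (A (dirDeriv w' (tangDeriv φ e v u) x)) (dirDeriv w (tangDeriv φ e v u) x) -
      (inner ℝ (A (dirDeriv w (dirDeriv w' u) x)) (tangDeriv φ e v (tangDeriv φ e v u) x) +
        tangEnergyError A φ e v w w' u x)) ∈ zeroIntegral (μ.restrict {x | 0 < φ x}) := by
  have hflux : IsJetBounded 1 2 fun (u : E → V) x => A (dirDeriv w' u x) :=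
    (IsJetBounded.dirDeriv 1 w').clm_comp A
  have hT := hφ.isJetBounded_tangDeriv (F := V) v
  have hibp := hφ.inner_tangDeriv_sub_mem_zeroIntegral (hflux.contDiff u hu) (hT.contDiff u hu)
    (hflux.memLp hu hInt) (hT.memLp hu hInt) (fun x hx => hφ.isHeight.tangDeriv_eq_zero
      (hφ.contDiff.differentiable (by simp)) (hu.differentiable (by simp)) hu0 v hx) v w
  convert neg_mem hibp using 1
  funext x
  have hd := differentiable_dirDeriv hu w' x
  have htang : tangDeriv φ e v (fun y => A (dirDeriv w' u y)) x =
      A (tangDeriv φ e v (dirDeriv w' u) x) := by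
    simp only [tangDeriv, dirDeriv_clm A hd, map_sub, map_smul]
  rw [Pi.neg_apply, htang, dirDeriv_clm A hd, dirDeriv_clm A hd,
    dirDeriv_tangDeriv hφ.contDiff hu v w', tangEnergyError]
  simp only [map_sub, map_smul, inner_sub_left, real_inner_smul_left]
  ring

variable (μ) (b : Module.Basis ι ℝ E) {A : ι → ι → V →L[ℝ] V} {c : ℝ}

lemma IsRegularHeight.exists_sum_norm_dirDeriv_tangDeriv_sq_le (hφ : IsRegularHeight 1 e φ)
    (hA : IsLegendre A c) (v : E) : ∃ C, 0 ≤ C ∧ ∀ u : E → V, ContDiff ℝ (2 : ℕ) u →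
      MemLp (jetNorm 2 u) 2 (μ.restrict {x | 0 < φ x}) → (∀ x, φ x = 0 → u x = 0) →
      LEModZeroIntegral (μ.restrict {x | 0 < φ x})
        (fun x => ∑ l, ‖dirDeriv (b l) (tangDeriv φ e v u) x‖ ^ 2)
        fun x => C * (jetNorm 2 u x * (‖ellipticOp b A u x‖ + jetNorm 1 u x)) := by
  obtain ⟨C, hC0, hC⟩ := (((hφ.of_le zero_le_one).isJetBounded_tangDeriv (F := V) v).comp
    (hφ.isJetBounded_tangDeriv v)).exists_norm_le
  choose D hD0 hD using fun l m => hφ.exists_tangEnergyError_le (A l m) v (b l) (b m)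
  have hDsum : 0 ≤ ∑ l, ∑ m, D l m :=
    Finset.sum_nonneg fun l _ => Finset.sum_nonneg fun m _ => hD0 l m
  obtain ⟨hc, hA⟩ := hA
  refine ⟨c⁻¹ * (C + ∑ l, ∑ m, D l m), by positivity, fun u hu hInt hu0 => ?_⟩
  have hibp := LEModZeroIntegral.sum (s := Finset.univ) fun l _ =>
    LEModZeroIntegral.sum (s := Finset.univ) fun m _ => LEModZeroIntegral.of_sub_mem
      (hφ.inner_dirDeriv_tangDeriv_sub_mem_zeroIntegral (A l m) hu hInt hu0 v (b l) (b m))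
  refine ((LEModZeroIntegral.of_le fun x => (le_inv_mul_iff₀ hc).2 (hA fun m =>
    dirDeriv (b m) (tangDeriv φ e v u) x)).trans (hibp.const_mul (inv_nonneg.2 hc.le))).trans
    (.of_le fun x => ?_)
  rw [mul_assoc]
  gcongr
  simp only [Finset.sum_add_distrib, ← sum_inner]
  have hj1 := jetNorm_nonneg 1 u x
  have hj2 := jetNorm_nonneg 2 u x
  have hmain : inner ℝ (∑ l, ∑ m, A l m (dirDeriv (b l) (dirDeriv (b m) u) x))
      (tangDeriv φ e v (tangDeriv φ e v u) x) ≤ ‖ellipticOp b A u x‖ * (C * jetNorm 2 u x) := by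
    rw [ellipticOp, norm_neg]
    exact (real_inner_le_norm _ _).trans (by gcongr; exact hC u hu x)
  have herror : ∑ l, ∑ m, tangEnergyError (A l m) φ e v (b l) (b m) u x ≤
      (∑ l, ∑ m, D l m) * (jetNorm 2 u x * jetNorm 1 u x) := by
    simp only [Finset.sum_mul]
    gcongr with l _ m
    exact hD l m u hu x
  have hcross₁ : 0 ≤ C * (jetNorm 2 u x * jetNorm 1 u x) := by positivity
  have hcross₂ : 0 ≤ (∑ l, ∑ m, D l m) * (jetNorm 2 u x * ‖ellipticOp b A u x‖) := by positivity
  linarith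

end TangentialEnergy

section Regularity

variable {E V ι : Type*} [NormedAddCommGroup E] [NormedSpace ℝ E] [MeasurableSpace E] [BorelSpace E]
  [NormedAddCommGroup V] [InnerProductSpace ℝ V] [Fintype ι] {μ : Measure E}
  {b : Module.Basis ι ℝ E} {A : ι → ι → V →L[ℝ] V} {c : ℝ} {e : E} {φ : E → ℝ} {n : ℕ}

/-- The a priori estimate of order `n + 2` with constant `C` for `ellipticOp b A` in `{0 < φ}`,
modulo functions with integral zero. -/
def HasAPrioriEstimate (μ : Measure E) (b : Module.Basis ι ℝ E) (A : ι → ι → V →L[ℝ] V) (φ : E → ℝ)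
    (n : ℕ) (C : ℝ) : Prop :=
  ∀ u : E → V, ContDiff ℝ (n + 2 : ℕ) u → MemLp (jetNorm (n + 2) u) 2 (μ.restrict {x | 0 < φ x}) →
    (∀ x, φ x = 0 → u x = 0) →
    LEModZeroIntegral (μ.restrict {x | 0 < φ x}) (fun x => jetNorm (n + 2) u x ^ 2)
      fun x => C * (jetNorm n (ellipticOp b A u) x ^ 2 + ‖u x‖ ^ 2)

lemma HasAPrioriEstimate.exists_jetNorm_tangDeriv_sq_le {B : ℝ} (hB0 : 0 ≤ B)
    (hB : HasAPrioriEstimate μ b A φ n B) (hφ : IsRegularHeight (n + 2) e φ) (v : E) :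
    ∃ C, 0 ≤ C ∧ ∀ u : E → V, ContDiff ℝ (n + 3 : ℕ) u →
      MemLp (jetNorm (n + 3) u) 2 (μ.restrict {x | 0 < φ x}) → (∀ x, φ x = 0 → u x = 0) →
      LEModZeroIntegral (μ.restrict {x | 0 < φ x})
        (fun x => jetNorm (n + 2) (tangDeriv φ e v u) x ^ 2)
        fun x => C * (jetNorm (n + 1) (ellipticOp b A u) x ^ 2 + jetNorm (n + 2) u x ^ 2) := by
  have hT := hφ.isJetBounded_tangDeriv (F := V) v
  obtain ⟨D, hD0, hD⟩ := hφ.exists_ellipticOp_tangDeriv_sq_le (b := b) (A := A) v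
  refine ⟨B * D, by positivity, fun u hu hInt hu0 => ?_⟩
  have hTu0 (x : E) (hx : φ x = 0) : tangDeriv φ e v u x = 0 :=
    hφ.isHeight.tangDeriv_eq_zero (hφ.contDiff.differentiable (by simp))
      (hu.differentiable (by simp)) hu0 v hx
  simp only [mul_assoc]
  exact (hB _ (hT.contDiff u hu) (hT.memLp hu hInt) hTu0).trans
    ((LEModZeroIntegral.of_le (hD u hu)).const_mul hB0)

lemma HasAPrioriEstimate.exists_succ [FiniteDimensional ℝ E] {B : ℝ} (hB0 : 0 ≤ B)
    (hB : HasAPrioriEstimate μ b A φ n B) (hφ : IsRegularHeight (n + 2) e φ) (hA : IsLegendre A c) :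
    ∃ C, 0 ≤ C ∧ HasAPrioriEstimate μ b A φ (n + 1) C := by
  obtain ⟨C, hC0, hC⟩ := hφ.exists_jetNorm_sq_le b hA
  choose D hD0 hD using fun i => hB.exists_jetNorm_tangDeriv_sq_le hB0 hφ (b i)
  set S := ∑ i, D i
  have hS0 : 0 ≤ S := Finset.sum_nonneg fun i _ => hD0 i
  refine ⟨C * ((1 + S) * (1 + B)), by positivity, fun u hu hInt hu0 => ?_⟩
  have hlow := hB u (hu.of_le (by exact_mod_cast Nat.le_succ _))
    (((IsJetBounded.id (n + 2)).mono_right (Nat.le_succ _)).memLp hu hInt) hu0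
  have hmid : LEModZeroIntegral (μ.restrict {x | 0 < φ x}) (fun x => jetNorm (n + 3) u x ^ 2)
      fun x => C * ((1 + S) *
        (jetNorm (n + 1) (ellipticOp b A u) x ^ 2 + jetNorm (n + 2) u x ^ 2)) := by
    refine ((LEModZeroIntegral.of_le (hC u hu)).trans ((((LEModZeroIntegral.of_le fun _ =>
      le_rfl).add (.sum fun i _ => hD i u hu hInt hu0)).add (.of_le fun _ =>
      le_rfl)).const_mul hC0)).trans (.of_le fun x => le_of_eq ?_)
    simp only [S, ← Finset.sum_mul]
    ring
  refine hmid.trans (((((LEModZeroIntegral.of_le fun _ => le_rfl).add hlow).const_mul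
    (by positivity)).const_mul hC0).trans (.of_le fun x => ?_))
  rw [mul_assoc, mul_assoc, add_mul 1 B, one_mul]
  gcongr
  · exact le_add_of_nonneg_right (sq_nonneg _)
  · exact jetNorm_nonneg _ _ _
  · exact jetNorm_mono n.le_succ _ x

variable (μ b) [FiniteDimensional ℝ E] [μ.IsAddHaarMeasure] [FiniteDimensional ℝ V]

lemma IsRegularHeight.exists_jetNorm_one_tangDeriv_sq_le (hφ : IsRegularHeight 1 e φ)
    (hA : IsLegendre A c) (v : E) : ∃ C, 0 ≤ C ∧ ∀ u : E → V, ContDiff ℝ (2 : ℕ) u →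
      MemLp (jetNorm 2 u) 2 (μ.restrict {x | 0 < φ x}) → (∀ x, φ x = 0 → u x = 0) →
      LEModZeroIntegral (μ.restrict {x | 0 < φ x}) (fun x => jetNorm 1 (tangDeriv φ e v u) x ^ 2)
        fun x => C * (jetNorm 2 u x * (‖ellipticOp b A u x‖ + jetNorm 1 u x)) := by
  obtain ⟨C, hC0, hC⟩ := exists_jetNorm_one_sq_le (F := V) b
  obtain ⟨D, hD0, hD⟩ := hφ.exists_sum_norm_dirDeriv_tangDeriv_sq_le μ b hA v
  obtain ⟨B, _, hB⟩ := ((hφ.of_le zero_le_one).isJetBounded_tangDeriv (F := V) v).exists_norm_le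
  refine ⟨C * (B ^ 2 + D), by positivity, fun u hu hInt hu0 => ?_⟩
  have hTu : ContDiff ℝ (1 : ℕ) (tangDeriv φ e v u) := (hφ.isJetBounded_tangDeriv v).contDiff u hu
  have hlow (x : E) : ‖tangDeriv φ e v u x‖ ^ 2 ≤
      B ^ 2 * (jetNorm 2 u x * (‖ellipticOp b A u x‖ + jetNorm 1 u x)) :=
    calc ‖tangDeriv φ e v u x‖ ^ 2 ≤ (B * jetNorm 1 u x) ^ 2 := by
          gcongr
          exact hB u (hu.of_le (by norm_num)) x
      _ = B ^ 2 * (jetNorm 1 u x * jetNorm 1 u x) := by ring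
      _ ≤ _ := by
          gcongr
          · exact jetNorm_nonneg _ _ _
          · exact jetNorm_nonneg _ _ _
          · exact jetNorm_mono one_le_two u x
          · exact le_add_of_nonneg_left (norm_nonneg _)
  refine (LEModZeroIntegral.of_le (hC _ hTu)).trans ((((LEModZeroIntegral.of_le hlow).add
    (hD u hu hInt hu0)).const_mul hC0).trans (.of_le fun x => le_of_eq ?_))
  ring

lemma IsRegularHeight.exists_hasAPrioriEstimate_zero (hφ : IsRegularHeight 1 e φ)
    (hA : IsLegendre A c) : ∃ C, 0 ≤ C ∧ HasAPrioriEstimate μ b A φ 0 C := by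
  obtain ⟨K, hK⟩ := hφ.exists_lipschitzWith
  obtain ⟨C, hC0, hC⟩ := hφ.exists_jetNorm_sq_le (n := 0) b hA
  obtain ⟨B, hB0, hB⟩ := hφ.isHeight.exists_jetNorm_one_sq_le_ellipticOp μ b hK hA
  choose D hD0 hD using fun i => hφ.exists_jetNorm_one_tangDeriv_sq_le μ b hA (b i)
  set S := ∑ i, D i
  have : 0 ≤ S := Finset.sum_nonneg fun i _ => hD0 i
  refine ⟨(2 * C + 2 * (C * S) ^ 2) * (1 + B), by positivity, fun u hu hInt hu0 => ?_⟩
  have hJ : LEModZeroIntegral (μ.restrict {x | 0 < φ x}) (fun x => jetNorm 2 u x ^ 2) fun x =>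
      C * (‖ellipticOp b A u x‖ ^ 2 + S * (jetNorm 2 u x * (‖ellipticOp b A u x‖ + jetNorm 1 u x)) +
        jetNorm 1 u x ^ 2) := by
    have hpoint := hC u hu
    simp only [jetNorm_zero, zero_add] at hpoint
    simp only [S, Finset.sum_mul]
    exact (LEModZeroIntegral.of_le hpoint).trans ((((LEModZeroIntegral.of_le fun _ => le_rfl).add
      (.sum fun i _ => hD i u hu hInt hu0)).add (.of_le fun _ => le_rfl)).const_mul hC0)
  have hbase : LEModZeroIntegral (μ.restrict {x | 0 < φ x}) (fun x => jetNorm 2 u x ^ 2) fun x =>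
      (2 * C + 2 * (C * S) ^ 2) * (‖ellipticOp b A u x‖ ^ 2 + jetNorm 1 u x ^ 2) := by
    refine LEModZeroIntegral.absorb (hJ.trans (.of_le fun x => ?_))
    set J := jetNorm 2 u x
    set f := ‖ellipticOp b A u x‖
    set d := jetNorm 1 u x
    nlinarith [sq_nonneg (J - C * S * (f + d)), mul_nonneg (sq_nonneg (C * S)) (sq_nonneg (f - d))]
  refine hbase.trans ((((LEModZeroIntegral.of_le fun _ => le_rfl).add
    (hB u hu hInt hu0)).const_mul (by positivity)).trans (.of_le fun x => ?_))
  rw [mul_assoc, add_mul 1 B, one_mul, jetNorm_zero]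
  gcongr
  exact le_add_of_nonneg_right (sq_nonneg _)

theorem IsRegularHeight.exists_hasAPrioriEstimate (hφ : IsRegularHeight (n + 1) e φ)
    (hA : IsLegendre A c) : ∃ C, 0 ≤ C ∧ HasAPrioriEstimate μ b A φ n C := by
  induction n with
  | zero => exact hφ.exists_hasAPrioriEstimate_zero μ b hA
  | succ n ih =>
    obtain ⟨B, hB0, hB⟩ := ih (hφ.of_le (Nat.le_succ _))
    exact hB.exists_succ hB0 hφ hA

theorem IsRegularHeight.exists_integral_jetNorm_sq_le (hφ : IsRegularHeight (n + 1) e φ)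
    (hA : IsLegendre A c) : ∃ C, 0 ≤ C ∧ ∀ u : E → V, ContDiff ℝ (n + 2 : ℕ) u →
      MemLp (jetNorm (n + 2) u) 2 (μ.restrict {x | 0 < φ x}) → (∀ x, φ x = 0 → u x = 0) →
      ∫ x in {x | 0 < φ x}, jetNorm (n + 2) u x ^ 2 ∂μ ≤
        C * (∫ x in {x | 0 < φ x}, jetNorm n (ellipticOp b A u) x ^ 2 ∂μ +
          ∫ x in {x | 0 < φ x}, ‖u x‖ ^ 2 ∂μ) := by
  obtain ⟨C, hC0, hC⟩ := hφ.exists_hasAPrioriEstimate μ b hA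
  refine ⟨C, hC0, fun u hu hInt hu0 => ?_⟩
  have hLint := ((isJetBounded_ellipticOp b A n).memLp hu hInt).integrable_sq
  have huint := (((IsJetBounded.id 0).mono_right (Nat.zero_le _)).memLp hu hInt).integrable_sq
  simp only [jetNorm_zero] at huint
  rw [← integral_add hLint huint, ← integral_const_mul]
  exact (hC u hu hInt hu0).integral_le hInt.integrable_sq ((hLint.add huint).const_mul C)

end Regularity

section ClosedRegion

variable {E F V ι : Type*} [NormedAddCommGroup E] [NormedSpace ℝ E] [NormedAddCommGroup F]
  [NormedSpace ℝ F] [NormedAddCommGroup V] [InnerProductSpace ℝ V] [Fintype ι]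
  {b : Module.Basis ι ℝ E} {A : ι → ι → V →L[ℝ] V} {c : ℝ} {e : E} {φ : E → ℝ} {n : ℕ}

lemma ellipticOp_congr {u w : E → V} {x : E} (huw : u =ᶠ[𝓝 x] w) :
    ellipticOp b A u =ᶠ[𝓝 x] ellipticOp b A w := by
  have hpair (p : ι × ι) := dirDeriv_congr (dirDeriv_congr huw (b p.2)) (b p.1)
  filter_upwards [eventually_all.2 hpair] with y hy
  simp only [ellipticOp, fun l m => hy (l, m)]

lemma eqOn_norm_iteratedFDeriv_sq {U : Set E} {g h : E → F}
    (hgh : ∀ x ∈ U, g =ᶠ[𝓝 x] h) (j : ℕ) :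
    EqOn (fun x => ‖iteratedFDeriv ℝ j g x‖ ^ 2) (fun x => ‖iteratedFDeriv ℝ j h x‖ ^ 2) U :=
  fun x hx => by simp only [((hgh x hx).iteratedFDeriv ℝ j).eq_of_nhds]

variable [MeasurableSpace E] [BorelSpace E]

lemma memLp_two_jetNorm {ν : Measure E} {g : E → F} (hg : ContDiff ℝ n g)
    (hInt : ∀ j ≤ n, Integrable (fun x => ‖iteratedFDeriv ℝ j g x‖ ^ 2) ν) :
    MemLp (jetNorm n g) 2 ν := by
  refine memLp_finsetSum _ fun j hj => ?_
  have hjn : j ≤ n := Nat.lt_succ_iff.1 (Finset.mem_range.1 hj)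
  exact (memLp_two_iff_integrable_sq
    (hg.continuous_iteratedFDeriv (mod_cast hjn)).norm.aestronglyMeasurable).2 (hInt j hjn)

lemma integral_jetNorm_sq_le {ν : Measure E} {g : E → F} (hg : ContDiff ℝ n g)
    (hInt : MemLp (jetNorm n g) 2 ν) : ∫ x, jetNorm n g x ^ 2 ∂ν ≤
      (n + 1) * ∑ j ∈ Finset.range (n + 1), ∫ x, ‖iteratedFDeriv ℝ j g x‖ ^ 2 ∂ν := by
  have hj (j : ℕ) (hj : j ∈ Finset.range (n + 1)) :
      Integrable (fun x => ‖iteratedFDeriv ℝ j g x‖ ^ 2) ν := by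
    have hjn : j ≤ n := Nat.lt_succ_iff.1 (Finset.mem_range.1 hj)
    refine hInt.integrable_sq.mono' ((hg.continuous_iteratedFDeriv
      (mod_cast hjn)).norm.pow 2).aestronglyMeasurable (.of_forall fun x => ?_)
    rw [Real.norm_of_nonneg (sq_nonneg _)]
    gcongr
    exact norm_iteratedFDeriv_le_jetNorm hjn g x
  rw [← integral_finsetSum _ hj, ← integral_const_mul]
  exact integral_mono hInt.integrable_sq ((integrable_finsetSum _ hj).const_mul _)
    (jetNorm_sq_le n g)

variable [FiniteDimensional ℝ E] [FiniteDimensional ℝ V] (μ : Measure E) [μ.IsAddHaarMeasure]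
  (b)

theorem IsRegularHeight.exists_integral_iteratedFDeriv_sq_le (hφ : IsRegularHeight (n + 1) e φ)
    (hA : IsLegendre A c) : ∃ C, 0 ≤ C ∧ ∀ u : E → V, ContDiff ℝ (n + 2 : ℕ) u →
      (∀ j ≤ n + 2, IntegrableOn (fun x => ‖iteratedFDeriv ℝ j u x‖ ^ 2) {x | 0 < φ x} μ) →
      (∀ x, φ x = 0 → u x = 0) →
      ∫ x in {x | 0 < φ x}, ‖iteratedFDeriv ℝ (n + 2) u x‖ ^ 2 ∂μ ≤
        C * (∑ j ∈ Finset.range (n + 1), ∫ x in {x | 0 < φ x},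
            ‖iteratedFDeriv ℝ j (ellipticOp b A u) x‖ ^ 2 ∂μ +
          ∫ x in {x | 0 < φ x}, ‖u x‖ ^ 2 ∂μ) := by
  obtain ⟨C, hC0, hC⟩ := hφ.exists_integral_jetNorm_sq_le μ b hA
  refine ⟨C * (n + 1), by positivity, fun u hu hInt hu0 => ?_⟩
  have hjet := memLp_two_jetNorm hu hInt
  have hL := isJetBounded_ellipticOp b A n
  calc ∫ x in {x | 0 < φ x}, ‖iteratedFDeriv ℝ (n + 2) u x‖ ^ 2 ∂μ
      ≤ ∫ x in {x | 0 < φ x}, jetNorm (n + 2) u x ^ 2 ∂μ :=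
        integral_mono (hInt _ le_rfl) hjet.integrable_sq fun x =>
          pow_le_pow_left₀ (norm_nonneg _) (norm_iteratedFDeriv_le_jetNorm le_rfl u x) 2
    _ ≤ _ := hC u hu hjet hu0
    _ ≤ _ := by
        rw [mul_assoc, mul_add ((n : ℝ) + 1)]
        gcongr
        · exact integral_jetNorm_sq_le (hL.contDiff u hu) (hL.memLp hu hjet)
        · exact le_mul_of_one_le_left (integral_nonneg fun _ => sq_nonneg _) (by simp)

theorem IsRegularHeight.exists_sqrt_integral_iteratedFDeriv_sq_le
    (hφ : IsRegularHeight (n + 1) e φ) (hA : IsLegendre A c) :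
    ∃ C, 0 < C ∧ ∀ u : E → V, ContDiffOn ℝ (n + 2 : ℕ) u {x | 0 ≤ φ x} →
      (∀ j ≤ n + 2, IntegrableOn (fun x => ‖iteratedFDeriv ℝ j u x‖ ^ 2) {x | 0 < φ x} μ) →
      (∀ x, φ x = 0 → u x = 0) →
      √(∫ x in {x | 0 < φ x}, ‖iteratedFDeriv ℝ (n + 2) u x‖ ^ 2 ∂μ) ≤
        C * (√(∑ j ∈ Finset.range (n + 1), ∫ x in {x | 0 < φ x},
            ‖iteratedFDeriv ℝ j (ellipticOp b A u) x‖ ^ 2 ∂μ) +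
          √(∫ x in {x | 0 < φ x}, ‖u x‖ ^ 2 ∂μ)) := by
  obtain ⟨C, hC0, hC⟩ := hφ.exists_integral_iteratedFDeriv_sq_le b μ hA
  refine ⟨√C + 1, by positivity, fun u hu hInt hu0 => ?_⟩
  have hopen : IsOpen {x | 0 < φ x} := isOpen_lt continuous_const hφ.contDiff.continuous
  obtain ⟨w, hw, hwu⟩ := hφ.isHeight.exists_contDiff_eqOn hφ.contDiff hu
  have hnhds (x : E) (hx : x ∈ {x | 0 < φ x}) : w =ᶠ[𝓝 x] u := by
    filter_upwards [hopen.mem_nhds hx] with y hy using hwu (le_of_lt hy)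
  have hiter := eqOn_norm_iteratedFDeriv_sq hnhds
  have hw0 (x : E) (hx : φ x = 0) : w x = 0 := (hwu hx.ge).trans (hu0 x hx)
  have hest := hC w hw (fun j hj => (hInt j hj).congr_fun (hiter j).symm hopen.measurableSet) hw0
  have hop := eqOn_norm_iteratedFDeriv_sq fun x hx =>
    ellipticOp_congr (b := b) (A := A) (hnhds x hx)
  simp only [fun j => setIntegral_congr_fun (μ := μ) hopen.measurableSet (hiter j),
    fun j => setIntegral_congr_fun (μ := μ) hopen.measurableSet (hop j),
    setIntegral_congr_fun (μ := μ) hopen.measurableSet fun x hx =>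
      congrArg (‖·‖ ^ 2) (hnhds x hx).eq_of_nhds] at hest
  refine (Real.sqrt_le_sqrt hest).trans ?_
  rw [Real.sqrt_mul hC0]
  gcongr
  · simp
  · simpa only [Real.sqrt_eq_rpow] using Real.rpow_add_le_add_rpow
      (Finset.sum_nonneg fun _ _ => integral_nonneg fun _ => sq_nonneg _)
      (integral_nonneg fun _ => sq_nonneg _) (by norm_num : (0 : ℝ) ≤ 1 / 2) (by norm_num)

end ClosedRegion

section GraphHeight

variable {E G : Type*} [NormedAddCommGroup E] [NormedSpace ℝ E] [NormedAddCommGroup G]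
  [NormedSpace ℝ G] {e : E} {φ : E → ℝ} {n : ℕ}

lemma IsHeight.nonneg_subset_closure_pos (hφ : IsHeight e φ) :
    {x | 0 ≤ φ x} ⊆ closure {x | 0 < φ x} := by
  intro x (hx : 0 ≤ φ x)
  have hlim : Tendsto (fun t : ℝ => x + t • e) (𝓝[>] 0) (𝓝 x) :=
    ((by fun_prop : Continuous fun t : ℝ => x + t • e).tendsto' 0 x (by simp)).mono_left
      nhdsWithin_le_nhds
  refine mem_closure_of_tendsto hlim ?_
  filter_upwards [self_mem_nhdsWithin] with t (ht : 0 < t)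
  rw [hφ]
  positivity

lemma norm_iteratedFDeriv_comp_clm_le {M : G → ℝ} {j : ℕ} (hM : ContDiff ℝ j M) (P : E →L[ℝ] G)
    (x : E) : ‖iteratedFDeriv ℝ j (fun y => M (P y)) x‖ ≤
      ‖iteratedFDeriv ℝ j M (P x)‖ * ‖P‖ ^ j := by
  have hcomp := P.iteratedFDeriv_comp_right hM x le_rfl
  refine (congrArg norm hcomp).trans_le
    ((ContinuousMultilinearMap.norm_compContinuousLinearMap_le _ _).trans_eq (by simp))

lemma norm_iteratedFDeriv_succ_clm_le (ℓ : E →L[ℝ] ℝ) (j : ℕ) (x : E) :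
    ‖iteratedFDeriv ℝ (j + 1) ℓ x‖ ≤ ‖ℓ‖ := by
  rw [← norm_iteratedFDeriv_fderiv, show fderiv ℝ ℓ = fun _ => ℓ from funext fun _ => ℓ.fderiv]
  cases j with
  | zero => simp
  | succ j => simp [iteratedFDeriv_succ_const]

lemma isRegularHeight_sub_comp {ℓ : E →L[ℝ] ℝ} {P : E →L[ℝ] G} (hℓ : ℓ e = 1) (hP : P e = 0)
    {M : G → ℝ} (hM : ContDiff ℝ (n + 1 : ℕ) M)
    (hMbound : ∀ j ≤ n, ∃ B, ∀ x, ‖iteratedFDeriv ℝ (j + 1) M x‖ ≤ B) :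
    IsRegularHeight n e fun x => ℓ x - M (P x) where
  isHeight x t := by simp [hℓ, hP]; ring
  contDiff := ℓ.contDiff.sub (hM.comp P.contDiff)
  exists_bound := by
    choose! B hB using hMbound
    have hB0 (j : ℕ) (hj : j ∈ Finset.range (n + 1)) : 0 ≤ B j :=
      (norm_nonneg _).trans (hB j (Nat.lt_succ_iff.1 (Finset.mem_range.1 hj)) 0)
    refine ⟨∑ j ∈ Finset.range (n + 1), (‖ℓ‖ + B j * ‖P‖ ^ (j + 1)), Finset.sum_nonneg
      fun j hj => by have := hB0 j hj; positivity, fun x => Finset.sum_le_sum fun j hj => ?_⟩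
    have hjn : j ≤ n := Nat.lt_succ_iff.1 (Finset.mem_range.1 hj)
    have hMj : ContDiff ℝ (j + 1 : ℕ) M := hM.of_le (by exact_mod_cast Nat.succ_le_succ hjn)
    rw [norm_iteratedFDeriv_fderiv, show (fun x => ℓ x - M (P x)) = ℓ - M ∘ P from rfl,
      iteratedFDeriv_sub_apply ℓ.contDiff.contDiffAt (hMj.comp P.contDiff).contDiffAt]
    refine (norm_sub_le _ _).trans (add_le_add (norm_iteratedFDeriv_succ_clm_le ℓ j x)
      ((norm_iteratedFDeriv_comp_clm_le hMj P x).trans ?_))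
    gcongr
    exact hB j hjn _

end GraphHeight

section PerturbedHalfSpace

/-- The height `x₁ - M(x₂, x₃)` over the graph of `M`, which is positive exactly in `Omg M`. -/
def graphHeight (M : E2 → ℝ) (x : E3) : ℝ := x 0 - M (proj2 x)

/-- `proj2` as a continuous linear map. -/
def proj2CLM : E3 →L[ℝ] E2 :=
  LinearMap.toContinuousLinearMap
    { toFun := proj2
      map_add' := fun x y => by ext i; fin_cases i <;> simp [proj2]
      map_smul' := fun c x => by ext i; fin_cases i <;> simp [proj2] }

lemma isRegularHeight_graphHeight {M : E2 → ℝ} {n : ℕ} (hM : ContDiff ℝ (n + 1 : ℕ) M)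
    (hMbound : ∀ j ≤ n, ∃ B, ∀ x, ‖iteratedFDeriv ℝ (j + 1) M x‖ ≤ B) :
    IsRegularHeight n (EuclideanSpace.single 0 1) (graphHeight M) := by
  have hproj : proj2CLM (EuclideanSpace.single 0 1) = 0 := by
    ext i
    fin_cases i <;> simp [proj2CLM, proj2]
  exact isRegularHeight_sub_comp (ℓ := EuclideanSpace.proj 0) (by simp) hproj hM hMbound

lemma omg_eq_graphHeight_pos (M : E2 → ℝ) : Omg M = {x | 0 < graphHeight M x} := by
  ext x
  simp only [Omg, graphHeight, mem_ofPred_eq, sub_pos]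

lemma gph_proj2_of_graphHeight_eq_zero {M : E2 → ℝ} {x : E3} (hx : graphHeight M x = 0) :
    gph M (proj2 x) = x := by
  have hMx : M (proj2 x) = x 0 := (sub_eq_zero.1 hx).symm
  ext i
  fin_cases i <;> simp [gph, hMx] <;> simp [proj2]

end PerturbedHalfSpace

/-! ### The Lamé system -/

section Lame

/-- The coefficients of the Lamé operator `-μ Δu - ν ∇(div u)`, in the convention of
`ellipticOp`. -/
def lameCoeff {ι : Type*} [Fintype ι] [DecidableEq ι] (μ ν : ℝ) (l m : ι) :
    EuclideanSpace ℝ ι →L[ℝ] EuclideanSpace ℝ ι :=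
  (if l = m then μ • ContinuousLinearMap.id ℝ _ else 0) +
    ν • (EuclideanSpace.proj m : EuclideanSpace ℝ ι →L[ℝ] ℝ).smulRight (EuclideanSpace.single l 1)

lemma isLegendre_lameCoeff {ι : Type*} [Fintype ι] [DecidableEq ι] {μ ν : ℝ} (hμ : 0 < μ)
    (hν : 0 ≤ ν) : IsLegendre (lameCoeff (ι := ι) μ ν) μ := by
  refine ⟨hμ, fun p => ?_⟩
  have hentry (l m : ι) : inner ℝ (lameCoeff μ ν l m (p m)) (p l) =
      (if l = m then μ * ‖p l‖ ^ 2 else 0) + ν * (p l l * p m m) := by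
    by_cases hlm : l = m
    · subst hlm
      simp [lameCoeff, inner_add_left, inner_smul_left, EuclideanSpace.inner_single_left]
    · simp [lameCoeff, hlm, inner_smul_left, EuclideanSpace.inner_single_left, mul_comm]
  have hform : ∑ l, ∑ m, inner ℝ (lameCoeff μ ν l m (p m)) (p l) =
      μ * ∑ l, ‖p l‖ ^ 2 + ν * (∑ l, p l l) ^ 2 := by
    simp only [hentry, Finset.sum_add_distrib, Finset.sum_ite_eq, Finset.mem_univ, if_true,
      ← Finset.mul_sum, sq, Finset.sum_mul_sum]
  rw [hform]
  exact le_add_of_nonneg_right (by positivity)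

/-- The Lamé operator `-μ Δu - ν ∇(div u)`. -/
def lameOp (μ ν : ℝ) (u : E3 → E3) (x : E3) : E3 := -μ • vlap u x - ν • grad (vdiv u) x

variable {u : E3 → E3} {x : E3}

lemma pd_eventuallyEq_dirDeriv (hu : ContDiffAt ℝ 2 u x) (i l : Fin 3) :
    pd i (fun y => u y l) =ᶠ[𝓝 x] fun y => dirDeriv (EuclideanSpace.single i 1) u y l := by
  filter_upwards [hu.eventually (by simp)] with y hy
  exact dirDeriv_clm (EuclideanSpace.proj l : E3 →L[ℝ] ℝ) (hy.differentiableAt (by simp)) _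

lemma hasFDerivAt_dirDeriv_apply (hu : ContDiffAt ℝ 2 u x) (v : E3) (l : Fin 3) :
    HasFDerivAt (fun y => dirDeriv v u y l)
      ((EuclideanSpace.proj l : E3 →L[ℝ] ℝ) ∘L fderiv ℝ (dirDeriv v u) x) x :=
  have hd : DifferentiableAt ℝ (dirDeriv v u) x :=
    ((hu.fderiv_right (m := 1) (by norm_num)).differentiableAt (by simp)).clm_apply
      (differentiableAt_const _)
  (EuclideanSpace.proj l : E3 →L[ℝ] ℝ).hasFDerivAt.comp x hd.hasFDerivAt

lemma vlap_apply (hu : ContDiffAt ℝ 2 u x) (l : Fin 3) : vlap u x l =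
    ∑ j, dirDeriv (EuclideanSpace.single j 1) (dirDeriv (EuclideanSpace.single j 1) u) x l := by
  change ∑ j, pd j (pd j fun y => u y l) x = _
  refine Finset.sum_congr rfl fun j _ => ?_
  rw [pd, (pd_eventuallyEq_dirDeriv hu j l).fderiv_eq, (hasFDerivAt_dirDeriv_apply hu _ l).fderiv]
  rfl

lemma grad_vdiv_apply (hu : ContDiffAt ℝ 2 u x) (l : Fin 3) : grad (vdiv u) x l =
    ∑ m, dirDeriv (EuclideanSpace.single l 1) (dirDeriv (EuclideanSpace.single m 1) u) x m := by
  have hdiv : vdiv u =ᶠ[𝓝 x] fun y => ∑ m, dirDeriv (EuclideanSpace.single m 1) u y m := by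
    filter_upwards [eventually_all.2 fun m => pd_eventuallyEq_dirDeriv hu m m] with y hy
    exact Finset.sum_congr rfl fun m _ => hy m
  have hderiv := HasFDerivAt.fun_sum (u := Finset.univ) fun m _ =>
    hasFDerivAt_dirDeriv_apply hu (EuclideanSpace.single m 1) m
  change fderiv ℝ (vdiv u) x (EuclideanSpace.single l 1) = _
  rw [hdiv.fderiv_eq, hderiv.fderiv]
  simp [dirDeriv]

lemma ellipticOp_lameCoeff_eventuallyEq (hu : ContDiffAt ℝ 2 u x) (μ ν : ℝ) :
    ellipticOp (EuclideanSpace.basisFun (Fin 3) ℝ).toBasis (lameCoeff μ ν) u =ᶠ[𝓝 x]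
      lameOp μ ν u := by
  filter_upwards [hu.eventually (by simp)] with y hy
  ext l
  have hlame : lameOp μ ν u y l = -μ * vlap u y l - ν * grad (vdiv u) y l := by simp [lameOp]
  rw [hlame, vlap_apply hy, grad_vdiv_apply hy]
  fin_cases l <;> simp [ellipticOp, lameCoeff, Fin.sum_univ_three] <;> ring

theorem lame_elliptic_estimate_general {M : E2 → ℝ} {k : ℕ} (hM : ContDiff ℝ (k + 2 : ℕ) M)
    (hMbound : ∀ j ≤ k + 1, ∃ B, ∀ x', ‖iteratedFDeriv ℝ (j + 1) M x'‖ ≤ B)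
    {μ ν : ℝ} (hμ : 0 < μ) (hν : 0 ≤ ν) :
    ∃ C : ℝ, 0 < C ∧ ∀ u : E3 → E3, ContDiffOn ℝ (k + 2 : ℕ) u (closure (Omg M)) →
      (∀ j ≤ k + 2, IntegrableOn (fun x => ‖iteratedFDeriv ℝ j u x‖ ^ 2) (Omg M)) →
      (∀ x' : E2, u (gph M x') = 0) →
      √(∫ x in Omg M, ‖iteratedFDeriv ℝ (k + 2) u x‖ ^ 2) ≤
        C * (√(∑ j ∈ Finset.range (k + 1),
            ∫ x in Omg M, ‖iteratedFDeriv ℝ j (lameOp μ ν u) x‖ ^ 2) +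
          √(∫ x in Omg M, ‖u x‖ ^ 2)) := by
  have hφ := isRegularHeight_graphHeight hM hMbound
  have hopen : IsOpen {x | 0 < graphHeight M x} :=
    isOpen_lt continuous_const hφ.contDiff.continuous
  obtain ⟨C, hC0, hC⟩ := hφ.exists_sqrt_integral_iteratedFDeriv_sq_le
    (EuclideanSpace.basisFun (Fin 3) ℝ).toBasis volume (isLegendre_lameCoeff hμ hν)
  simp only [omg_eq_graphHeight_pos]
  refine ⟨C, hC0, fun u hu hInt hu0 => ?_⟩
  have hop := eqOn_norm_iteratedFDeriv_sq fun x hx => ellipticOp_lameCoeff_eventuallyEq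
    (((hu.mono subset_closure).contDiffAt (hopen.mem_nhds hx)).of_le (by norm_cast; omega)) μ ν
  have hboundary (x : E3) (hx : graphHeight M x = 0) : u x = 0 := by
    simpa only [gph_proj2_of_graphHeight_eq_zero hx] using hu0 (proj2 x)
  have hest := hC u (hu.mono hφ.isHeight.nonneg_subset_closure_pos) hInt hboundary
  rwa [Finset.sum_congr rfl fun j _ => setIntegral_congr_fun hopen.measurableSet (hop j)] at hest

end Lame

theorem lame_elliptic_estimate (M : E2 → ℝ) (hM : ContDiff ℝ (⊤ : ℕ∞) M)
    (hMint : ∀ j ≤ 9, Integrable fun x' : E2 => ‖iteratedFDeriv ℝ j M x'‖ ^ 2)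
    (μh νh : ℝ) (hμh : 0 < μh) (hνh : 0 < νh)
    (k : ℕ) (hk : k ≤ 2) :
    ∃ C : ℝ, 0 < C ∧
      ∀ u : E3 → E3,
        ContDiffOn ℝ (k + 2) u (closure (Omg M)) →
        (∀ j ≤ k + 2, IntegrableOn (fun x => ‖iteratedFDeriv ℝ j u x‖ ^ 2) (Omg M)) →
        (∀ j ≤ k, IntegrableOn
          (fun x => ‖iteratedFDeriv ℝ j (fun y => -μh • vlap u y - νh • grad (vdiv u) y) x‖ ^ 2)
          (Omg M)) →
        (∀ x' : E2, u (gph M x') = 0) →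
        Filter.Tendsto u (Bornology.cobounded E3 ⊓ Filter.principal (closure (Omg M))) (nhds 0) →
        Real.sqrt (∫ x in Omg M, ‖iteratedFDeriv ℝ (k + 2) u x‖ ^ 2) ≤
          C * (Real.sqrt (∑ j ∈ Finset.range (k + 1),
              ∫ x in Omg M,
                ‖iteratedFDeriv ℝ j (fun y => -μh • vlap u y - νh • grad (vdiv u) y) x‖ ^ 2) +
            Real.sqrt (∫ x in Omg M, ‖u x‖ ^ 2)) := by
  have hMbound (j : ℕ) (hj : j ≤ k + 1) : ∃ B, ∀ x', ‖iteratedFDeriv ℝ (j + 1) M x'‖ ≤ B :=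
    exists_norm_iteratedFDeriv_le_of_integrable (contDiff_infty.1 hM (j + 3))
      fun i hi _ => hMint i (by omega)
  obtain ⟨C, hC0, hC⟩ := lame_elliptic_estimate_general (contDiff_infty.1 hM _) hMbound hμh hνh.le
  exact ⟨C, hC0, fun u hu hInt _ hu0 _ => hC u (mod_cast hu) hInt hu0⟩
end
end

section
/- Let K > 0, γ ≥ 1 with p(ρ) = Kρ^γ and p'(ρ) = Kγρ^{γ-1}, and let μ₁, μ₂ ∈ ℝ. Let O ⊂ ℝ³ be open, T > 0, and suppose (ρ, u) : (0,T) × O → (0,∞) × ℝ³ is C¹ in time and C² in space and satisfies ρ_t + div(ρu) = 0 and ρ(u_t + (u·∇)u) = μ₁Δu + (μ₁+μ₂)∇(div u) − ∇p(ρ) pointwise on (0,T) × O. Suppose (ρˢ, uˢ) : O → (0,∞) × ℝ³ is C² and satisfies div(ρˢuˢ) = 0 and ρˢ(uˢ·∇)uˢ = μ₁Δuˢ + (μ₁+μ₂)∇(div uˢ) − ∇p(ρˢ) pointwise on O. Set φ := ρ − ρˢ, ψ := u − uˢ, and ℰ(t,x) := ∫_{ρˢ(x)}^{ρ(t,x)}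 (p(η) − p(ρˢ(x)))/η² dη + |ψ(t,x)|²/2. Define the vector fields G₁ := −ρℰ·u − (p(ρ) − p(ρˢ))·ψ and B₁ with components (B₁)_i := μ₁ ∑_{j=1}^3 (∂_i ψ_j)ψ_j + (μ₁+μ₂)(div ψ)ψ_i, and the scalar R₁ := −ρ((ψ·∇)uˢ)·ψ − (p(ρ) − p(ρˢ) − p'(ρˢ)φ)·div uˢ − (φ/ρˢ)(μ₁Δuˢ + (μ₁+μ₂)∇(div uˢ))·ψ. Then the pointwise identity ∂_t(ρℰ) − div(G₁ + B₁) + μ₁|∇ψ|² + (μ₁+μ₂)(div ψ)² = R₁ holds on (0,T) × O, where |∇ψ|² = ∑_{i,j=1}^3 (∂_i ψ_j)². -/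
/- STATEMENT 18: the pointwise energy identity
∂ₜ(ρℰ) − div(G₁ + B₁) + μ₁|∇ψ|² + (μ₁+μ₂)(div ψ)² = R₁
for the perturbation of a classical solution of the compressible Navier–Stokes
equations around a classical stationary solution, with pressure p(ρ) = Kρ^γ. -/

noncomputable section

open MeasureTheory Real Set Filter intervalIntegral

/-- Convective derivative `(v·∇)w`. -/
def conv (v w : E3 → E3) (x : E3) : E3 := vecE3 fun i => ∑ j, v x j * pd j (fun y => w y i) x

/-!
By conservation of mass, `∂ₜ(ρℰ) + div(ρℰu) = ρ(∂ₜℰ + u·∇ℰ)`. The chain rule splits the right side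
into the compression work `-(p(ρ) - p(ρˢ)) div u`, a term in `u·∇p(ρˢ)`, and `ψ·ρ(∂ₜψ + (u·∇)ψ)`.
Subtracting `ρ/ρˢ` times the stationary momentum equation from the full one gives
`ρ(∂ₜψ + (u·∇)ψ) = Lψ - ∇(p(ρ) - p(ρˢ)) - ρ(ψ·∇)uˢ - (φ/ρˢ)(Luˢ - ∇p(ρˢ))`, where `L` is the Lamé
operator. Tested with `ψ`, the viscous term is `div B₁` minus the dissipation, and the pressure
gradient combines with the compression work to `-div((p(ρ) - p(ρˢ))ψ) - (p(ρ) - p(ρˢ)) div uˢ`. The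
remaining `∇p(ρˢ)` terms add up to `-(φ/ρˢ) uˢ·∇p(ρˢ)`, which is `φ p'(ρˢ) div uˢ` by the stationary
continuity equation.
-/

/-- The relative pressure potential `∫ₛʳ (p(η) - p(s)) / η² dη` of a density `r` with respect to a
reference density `s`; the integral is oriented. -/
def pressurePotential (p : ℝ → ℝ) (r s : ℝ) : ℝ := ∫ η in s..r, (p η - p s) / η ^ 2

/-- The relative energy per unit mass `ℰ` of a fluid with density `r` and relative velocity `w` with
respect to a reference density `s`. -/
def energyDensity {F : Type*} [NormedAddCommGroup F] (p : ℝ → ℝ) (r s : ℝ) (w : F) : ℝ :=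
  pressurePotential p r s + ‖w‖ ^ 2 / 2

/-- The Lamé operator `μΔw + ν∇(div w)`, the divergence of the viscous stress; `ν` plays the role of
`μ₁ + μ₂`. -/
def lameOperator (μ ν : ℝ) (w : E3 → E3) (x : E3) : E3 := μ • vlap w x + ν • grad (vdiv w) x

/-- The viscous energy flux `B₁` of the velocity field `w`. -/
def viscousFlux (μ ν : ℝ) (w : E3 → E3) (x : E3) : E3 :=
  vecE3 fun i => μ * ∑ j, pd i (fun z => w z j) x * w x j + ν * vdiv w x * w x i

section VectorCalculus

variable {f g : E3 → ℝ} {v w : E3 → E3} {x : E3}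

@[simp]
theorem vecE3_apply (a : Fin 3 → ℝ) (i : Fin 3) : vecE3 a i = a i := rfl

theorem inner_eq_sum_mul (a b : E3) : inner ℝ a b = ∑ i, a i * b i := by
  simp only [PiLp.inner_apply, RCLike.inner_apply, conj_trivial, mul_comm]

theorem sum_smul_single (a : E3) : ∑ i, a i • EuclideanSpace.single i (1 : ℝ) = a := by
  simpa using (EuclideanSpace.basisFun (Fin 3) ℝ).sum_repr a

theorem inner_grad (f : E3 → ℝ) (x a : E3) : inner ℝ (grad f x) a = fderiv ℝ f x a := by
  conv_rhs => rw [← sum_smul_single a]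
  simp [inner_eq_sum_mul, grad, pd, mul_comm]

theorem pd_congr (h : f =ᶠ[nhds x] g) (i : Fin 3) : pd i f x = pd i g x := by
  rw [pd, pd, h.fderiv_eq]

theorem pd_sub (hf : DifferentiableAt ℝ f x) (hg : DifferentiableAt ℝ g x) (i : Fin 3) :
    pd i (fun y => f y - g y) x = pd i f x - pd i g x := by
  simp [pd, fderiv_fun_sub hf hg]

theorem pd_mul (hf : DifferentiableAt ℝ f x) (hg : DifferentiableAt ℝ g x) (i : Fin 3) :
    pd i (fun y => f y * g y) x = pd i f x * g x + f x * pd i g x := by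
  simp [pd, fderiv_fun_mul hf hg, add_comm, mul_comm (g x)]

theorem pd_sum {ι : Type*} {s : Finset ι} {F : ι → E3 → ℝ}
    (hF : ∀ k ∈ s, DifferentiableAt ℝ (F k) x) (i : Fin 3) :
    pd i (fun y => ∑ k ∈ s, F k y) x = ∑ k ∈ s, pd i (F k) x := by
  simp [pd, fderiv_fun_sum hF]

theorem grad_sub (hf : DifferentiableAt ℝ f x) (hg : DifferentiableAt ℝ g x) :
    grad (fun y => f y - g y) x = grad f x - grad g x := by
  ext i
  simp [grad, pd_sub hf hg]

theorem pd_coord (hv : DifferentiableAt ℝ v x) (i j : Fin 3) :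
    pd i (fun y => v y j) x = fderiv ℝ v x (EuclideanSpace.single i 1) j := by
  have h : HasFDerivAt (fun y => v y j) ((EuclideanSpace.proj j : E3 →L[ℝ] ℝ) ∘L fderiv ℝ v x) x :=
    (EuclideanSpace.proj j : E3 →L[ℝ] ℝ).hasFDerivAt.comp x hv.hasFDerivAt
  simp [pd, h.fderiv]

theorem conv_eq_fderiv (v : E3 → E3) (hw : DifferentiableAt ℝ w x) :
    conv v w x = fderiv ℝ w x (v x) := by
  ext i
  conv_rhs => rw [← sum_smul_single (v x)]
  simp [conv, pd_coord hw]

theorem vdiv_eq_sum_fderiv (hv : DifferentiableAt ℝ v x) :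
    vdiv v x = ∑ i, fderiv ℝ v x (EuclideanSpace.single i 1) i :=
  Finset.sum_congr rfl fun i _ => pd_coord hv i i

theorem vdiv_add (hv : DifferentiableAt ℝ v x) (hw : DifferentiableAt ℝ w x) :
    vdiv (fun y => v y + w y) x = vdiv v x + vdiv w x := by
  simp [vdiv_eq_sum_fderiv, hv, hw, hv.fun_add hw, fderiv_fun_add, Finset.sum_add_distrib]

theorem vdiv_sub (hv : DifferentiableAt ℝ v x) (hw : DifferentiableAt ℝ w x) :
    vdiv (fun y => v y - w y) x = vdiv v x - vdiv w x := by
  simp [vdiv_eq_sum_fderiv, hv, hw, hv.fun_sub hw, fderiv_fun_sub, Finset.sum_sub_distrib]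

theorem vdiv_neg (v : E3 → E3) (x : E3) : vdiv (fun y => -v y) x = -vdiv v x := by
  simp [vdiv, pd, fderiv_fun_neg]

theorem vdiv_smul (hf : DifferentiableAt ℝ f x) (hv : DifferentiableAt ℝ v x) :
    vdiv (fun y => f y • v y) x = fderiv ℝ f x (v x) + f x * vdiv v x := by
  have hfv := hf.fun_smul hv
  rw [← inner_grad]
  simp [vdiv_eq_sum_fderiv, hv, hfv, fderiv_fun_smul hf hv, Finset.sum_add_distrib,
    Finset.mul_sum, inner_eq_sum_mul, grad, pd, add_comm]

theorem eventually_differentiableAt_of_contDiffAt {E F : Type*} [NormedAddCommGroup E]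
    [NormedSpace ℝ E] [NormedAddCommGroup F] [NormedSpace ℝ F] {f : E → F} {x : E}
    {n : WithTop ℕ∞} (hf : ContDiffAt ℝ n f x) (hn : n ≠ 0) :
    ∀ᶠ y in nhds x, DifferentiableAt ℝ f y := by
  have hf1 : ContDiffAt ℝ 1 f x := hf.of_le (ENat.one_le_iff_ne_zero_withTop.2 hn)
  exact (hf1.eventually (by simp)).mono fun _ hy => hy.differentiableAt one_ne_zero

theorem differentiableAt_pd (hf : ContDiffAt ℝ 2 f x) (i : Fin 3) :
    DifferentiableAt ℝ (pd i f) x :=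
  ((hf.fderiv_right (m := 1) (by norm_num)).differentiableAt one_ne_zero).clm_apply
    (differentiableAt_const _)

theorem differentiableAt_vdiv (hv : ContDiffAt ℝ 2 v x) : DifferentiableAt ℝ (vdiv v) x :=
  DifferentiableAt.fun_sum fun i _ => differentiableAt_pd (contDiffAt_euclidean.1 hv i) i

theorem pd_pd_sub (hf : ContDiffAt ℝ 2 f x) (hg : ContDiffAt ℝ 2 g x) (i j : Fin 3) :
    pd i (pd j fun y => f y - g y) x = pd i (pd j f) x - pd i (pd j g) x := by
  rw [← pd_sub (differentiableAt_pd hf j) (differentiableAt_pd hg j)]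
  refine pd_congr ?_ i
  filter_upwards [eventually_differentiableAt_of_contDiffAt hf two_ne_zero,
    eventually_differentiableAt_of_contDiffAt hg two_ne_zero] with y hfy hgy
  exact pd_sub hfy hgy j

theorem vlap_sub (hv : ContDiffAt ℝ 2 v x) (hw : ContDiffAt ℝ 2 w x) :
    vlap (fun y => v y - w y) x = vlap v x - vlap w x := by
  ext i
  simp [vlap, pd_pd_sub (contDiffAt_euclidean.1 hv i) (contDiffAt_euclidean.1 hw i),
    Finset.sum_sub_distrib]

theorem grad_vdiv_sub (hv : ContDiffAt ℝ 2 v x) (hw : ContDiffAt ℝ 2 w x) :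
    grad (vdiv fun y => v y - w y) x = grad (vdiv v) x - grad (vdiv w) x := by
  rw [← grad_sub (differentiableAt_vdiv hv) (differentiableAt_vdiv hw)]
  ext i
  refine pd_congr ?_ i
  filter_upwards [eventually_differentiableAt_of_contDiffAt hv two_ne_zero,
    eventually_differentiableAt_of_contDiffAt hw two_ne_zero] with y hvy hwy
  exact vdiv_sub hvy hwy

theorem lameOperator_sub (μ ν : ℝ) (hv : ContDiffAt ℝ 2 v x) (hw : ContDiffAt ℝ 2 w x) :
    lameOperator μ ν (fun y => v y - w y) x = lameOperator μ ν v x - lameOperator μ ν w x := by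
  simp only [lameOperator, vlap_sub hv hw, grad_vdiv_sub hv hw]
  module

theorem differentiableAt_pd_mul_self (hf : ContDiffAt ℝ 2 f x) (i : Fin 3) :
    DifferentiableAt ℝ (fun y => pd i f y * f y) x :=
  (differentiableAt_pd hf i).fun_mul (hf.differentiableAt two_ne_zero)

theorem pd_pd_mul_self (hf : ContDiffAt ℝ 2 f x) (i : Fin 3) :
    pd i (fun y => pd i f y * f y) x = pd i (pd i f) x * f x + pd i f x ^ 2 := by
  rw [pd_mul (differentiableAt_pd hf i) (hf.differentiableAt two_ne_zero), sq]

theorem differentiableAt_sum_pd_mul_self (hw : ContDiffAt ℝ 2 w x) (i : Fin 3) :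
    DifferentiableAt ℝ (fun y => ∑ j, pd i (fun z => w z j) y * w y j) x :=
  DifferentiableAt.fun_sum fun j _ => differentiableAt_pd_mul_self (contDiffAt_euclidean.1 hw j) i

theorem vdiv_sum_pd_mul_self (hw : ContDiffAt ℝ 2 w x) :
    vdiv (fun y => vecE3 fun i => ∑ j, pd i (fun z => w z j) y * w y j) x =
      inner ℝ (vlap w x) (w x) + ∑ i, ∑ j, pd i (fun z => w z j) x ^ 2 := by
  have hwj := contDiffAt_euclidean.1 hw
  calc vdiv (fun y => vecE3 fun i => ∑ j, pd i (fun z => w z j) y * w y j) x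
      = ∑ i, ∑ j, (pd i (pd i fun z => w z j) x * w x j + pd i (fun z => w z j) x ^ 2) :=
        Finset.sum_congr rfl fun i _ => by
          simp only [vecE3_apply, pd_sum fun j _ => differentiableAt_pd_mul_self (hwj j) i,
            pd_pd_mul_self (hwj _) i]
    _ = ∑ j, ∑ i, pd i (pd i fun z => w z j) x * w x j
          + ∑ i, ∑ j, pd i (fun z => w z j) x ^ 2 := by
        simp only [Finset.sum_add_distrib]
        rw [Finset.sum_comm]
    _ = inner ℝ (vlap w x) (w x) + ∑ i, ∑ j, pd i (fun z => w z j) x ^ 2 := by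
        simp only [inner_eq_sum_mul, vlap, vecE3_apply, Finset.sum_mul]

theorem viscousFlux_eq (μ ν : ℝ) (w : E3 → E3) (x : E3) :
    viscousFlux μ ν w x =
      μ • vecE3 (fun i => ∑ j, pd i (fun z => w z j) x * w x j) + (ν * vdiv w x) • w x := by
  ext i
  simp [viscousFlux]

theorem differentiableAt_viscousFlux (μ ν : ℝ) (hw : ContDiffAt ℝ 2 w x) :
    DifferentiableAt ℝ (viscousFlux μ ν w) x := by
  refine differentiableAt_euclidean.2 fun i => ?_
  have hwi := (contDiffAt_euclidean.1 hw i).differentiableAt two_ne_zero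
  exact ((differentiableAt_sum_pd_mul_self hw i).const_mul μ).fun_add
    (((differentiableAt_vdiv hw).const_mul ν).fun_mul hwi)

theorem vdiv_viscousFlux (μ ν : ℝ) (hw : ContDiffAt ℝ 2 w x) :
    vdiv (viscousFlux μ ν w) x =
      inner ℝ (lameOperator μ ν w x) (w x)
        + μ * ∑ i, ∑ j, pd i (fun z => w z j) x ^ 2 + ν * vdiv w x ^ 2 := by
  have hw1 : DifferentiableAt ℝ w x := hw.differentiableAt two_ne_zero
  have hdiv := (differentiableAt_vdiv hw).const_mul ν
  have hstretch : DifferentiableAt ℝ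
      (fun y => vecE3 fun i => ∑ j, pd i (fun z => w z j) y * w y j) x :=
    differentiableAt_euclidean.2 fun i => differentiableAt_sum_pd_mul_self hw i
  rw [funext (viscousFlux_eq μ ν w), vdiv_add (hstretch.fun_const_smul μ) (hdiv.fun_smul hw1),
    vdiv_smul (differentiableAt_const μ) hstretch, vdiv_sum_pd_mul_self hw, vdiv_smul hdiv hw1,
    fderiv_const_mul (differentiableAt_vdiv hw)]
  simp only [lameOperator, inner_add_left, real_inner_smul_left, inner_grad]
  simp only [fderiv_fun_const, Pi.zero_apply, zero_apply, zero_add, smul_apply, smul_eq_mul]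
  ring

end VectorCalculus

section RelativeEnergy

variable {E : Type*} [NormedAddCommGroup E] [NormedSpace ℝ E]
  {F : Type*} [NormedAddCommGroup F] [InnerProductSpace ℝ F]
  {p : ℝ → ℝ} {f g : E → ℝ} {f' g' pg' : E →L[ℝ] ℝ} {w : E → F} {w' : E →L[ℝ] F} {x : E}

theorem continuousOn_div_sq (hp : ContinuousOn p (Ioi 0)) :
    ContinuousOn (fun η => p η / η ^ 2) (Ioi 0) :=
  hp.div (by fun_prop) fun _ hη => pow_ne_zero 2 (ne_of_gt hη)

theorem intervalIntegrable_div_sq (hp : ContinuousOn p (Ioi 0)) {r s : ℝ} (hr : 0 < r)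
    (hs : 0 < s) : IntervalIntegrable (fun η => p η / η ^ 2) volume s r :=
  ((continuousOn_div_sq hp).mono (ordConnected_Ioi.uIcc_subset hs hr)).intervalIntegrable

theorem integral_const_div_sq (c : ℝ) {r s : ℝ} (hr : 0 < r) (hs : 0 < s) :
    ∫ η in s..r, c / η ^ 2 = c * (s⁻¹ - r⁻¹) := by
  have hderiv : ∀ η ∈ uIcc s r, HasDerivAt (fun η => -c * η⁻¹) (c / η ^ 2) η := fun η hη =>
    ((hasDerivAt_inv (ne_of_gt (ordConnected_Ioi.uIcc_subset hs hr hη))).const_mul (-c)).congr_deriv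
      (by ring)
  rw [integral_eq_sub_of_hasDerivAt hderiv (intervalIntegrable_div_sq continuousOn_const hr hs)]
  ring

theorem pressurePotential_eq (hp : ContinuousOn p (Ioi 0)) {r s : ℝ} (hr : 0 < r) (hs : 0 < s) :
    pressurePotential p r s = (∫ η in s..r, p η / η ^ 2) + p s * (r⁻¹ - s⁻¹) := by
  simp only [pressurePotential, sub_div]
  rw [integral_sub (intervalIntegrable_div_sq hp hr hs)
    (intervalIntegrable_div_sq continuousOn_const hr hs), integral_const_div_sq _ hr hs]
  ring

theorem hasFDerivAt_integral_div_sq (hp : ContinuousOn p (Ioi 0)) (hf : HasFDerivAt f f' x)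
    (hg : HasFDerivAt g g' x) (hf_pos : 0 < f x) (hg_pos : 0 < g x) :
    HasFDerivAt (fun y => ∫ η in g y..f y, p η / η ^ 2)
      ((p (f x) / f x ^ 2) • f' - (p (g x) / g x ^ 2) • g') x := by
  have hcont := continuousOn_div_sq hp
  have hmeas {r : ℝ} (hr : 0 < r) : StronglyMeasurableAtFilter (fun η => p η / η ^ 2) (nhds r) :=
    hcont.stronglyMeasurableAtFilter isOpen_Ioi r hr
  have hint := integral_hasFDerivAt (intervalIntegrable_div_sq hp hf_pos hg_pos)
    (hmeas hg_pos) (hmeas hf_pos) (hcont.continuousAt (Ioi_mem_nhds hg_pos))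
    (hcont.continuousAt (Ioi_mem_nhds hf_pos))
  refine (hint.comp x (hg.prodMk hf)).congr_fderiv ?_
  ext h
  simp [mul_comm]

theorem hasFDerivAt_pressurePotential (hp : ContinuousOn p (Ioi 0)) (hf : HasFDerivAt f f' x)
    (hg : HasFDerivAt g g' x) (hpg : HasFDerivAt (fun y => p (g y)) pg' x) (hf_pos : 0 < f x)
    (hg_pos : 0 < g x) :
    HasFDerivAt (fun y => pressurePotential p (f y) (g y))
      (((p (f x) - p (g x)) / f x ^ 2) • f' + ((f x)⁻¹ - (g x)⁻¹) • pg') x := by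
  have hinv_f := (hasDerivAt_inv hf_pos.ne').comp_hasFDerivAt x hf
  have hinv_g := (hasDerivAt_inv hg_pos.ne').comp_hasFDerivAt x hg
  have hsplit : (fun y => pressurePotential p (f y) (g y)) =ᶠ[nhds x]
      fun y => (∫ η in g y..f y, p η / η ^ 2) + p (g y) * ((f y)⁻¹ - (g y)⁻¹) := by
    filter_upwards [hf.continuousAt.eventually_const_lt hf_pos,
      hg.continuousAt.eventually_const_lt hg_pos] with y hfy hgy
    exact pressurePotential_eq hp hfy hgy
  refine HasFDerivAt.congr_of_eventuallyEq ?_ hsplit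
  refine ((hasFDerivAt_integral_div_sq hp hf hg hf_pos hg_pos).add
    (hpg.mul (hinv_f.sub hinv_g))).congr_fderiv ?_
  ext h
  simp only [neg_smul, sub_neg_eq_add, smul_add, smul_neg, Pi.sub_apply, Function.comp_apply,
    add_apply, sub_apply, smul_apply, smul_eq_mul, neg_apply]
  ring

theorem hasFDerivAt_energyDensity (hp : ContinuousOn p (Ioi 0)) (hf : HasFDerivAt f f' x)
    (hg : HasFDerivAt g g' x) (hpg : HasFDerivAt (fun y => p (g y)) pg' x)
    (hw : HasFDerivAt w w' x) (hf_pos : 0 < f x) (hg_pos : 0 < g x) :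
    HasFDerivAt (fun y => energyDensity p (f y) (g y) (w y))
      (((p (f x) - p (g x)) / f x ^ 2) • f' + ((f x)⁻¹ - (g x)⁻¹) • pg'
        + innerSL ℝ (w x) ∘L w') x := by
  refine ((hasFDerivAt_pressurePotential hp hf hg hpg hf_pos hg_pos).add
    (hw.norm_sq.mul_const (2⁻¹ : ℝ))).congr_fderiv ?_
  ext h
  simp

theorem hasDerivAt_energyDensity {r : ℝ → ℝ} {r' s t : ℝ} {v : ℝ → F} {v' : F}
    (hp : ContinuousOn p (Ioi 0)) (hr : HasDerivAt r r' t) (hv : HasDerivAt v v' t)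
    (hr_pos : 0 < r t) (hs : 0 < s) :
    HasDerivAt (fun τ => energyDensity p (r τ) s (v τ))
      ((p (r t) - p s) / r t ^ 2 * r' + inner ℝ (v t) v') t := by
  have h := hasFDerivAt_energyDensity hp hr.hasFDerivAt (hasFDerivAt_const s t)
    (hasFDerivAt_const (p s) t) hv.hasFDerivAt hr_pos hs
  simpa using h.hasDerivAt

end RelativeEnergy

section EnergyBalance

variable {p : ℝ → ℝ} {μ ν : ℝ} {ρ : ℝ → E3 → ℝ} {u : ℝ → E3 → E3} {ρs : E3 → ℝ} {us : E3 → E3}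
  {t : ℝ} {x : E3}

theorem deriv_density_mul_add_vdiv {f : ℝ → E3 → ℝ}
    (hρt : DifferentiableAt ℝ (fun s => ρ s x) t) (hft : DifferentiableAt ℝ (fun s => f s x) t)
    (hρ : DifferentiableAt ℝ (ρ t) x) (hf : DifferentiableAt ℝ (f t) x)
    (hu : DifferentiableAt ℝ (u t) x)
    (hmass : deriv (fun s => ρ s x) t + vdiv (fun y => ρ t y • u t y) x = 0) :
    deriv (fun s => ρ s x * f s x) t + vdiv (fun y => (ρ t y * f t y) • u t y) x =
      ρ t x * (deriv (fun s => f s x) t + fderiv ℝ (f t) x (u t x)) := by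
  rw [vdiv_smul hρ hu] at hmass
  rw [deriv_fun_mul hρt hft, vdiv_smul (hρ.fun_mul hf) hu, fderiv_fun_mul hρ hf]
  simp only [add_apply, smul_apply, smul_eq_mul]
  linear_combination f t x * hmass

theorem deriv_density_mul_energyDensity_add_vdiv (hp : ContinuousOn p (Ioi 0))
    (hρ_pos : 0 < ρ t x) (hρs_pos : 0 < ρs x)
    (hρt : DifferentiableAt ℝ (fun s => ρ s x) t) (hut : DifferentiableAt ℝ (fun s => u s x) t)
    (hρ : DifferentiableAt ℝ (ρ t) x) (hu : DifferentiableAt ℝ (u t) x)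
    (hρs : DifferentiableAt ℝ ρs x) (hpρs : DifferentiableAt ℝ (fun y => p (ρs y)) x)
    (hus : DifferentiableAt ℝ us x)
    (hmass : deriv (fun s => ρ s x) t + vdiv (fun y => ρ t y • u t y) x = 0) :
    deriv (fun s => ρ s x * energyDensity p (ρ s x) (ρs x) (u s x - us x)) t
        + vdiv (fun y => (ρ t y * energyDensity p (ρ t y) (ρs y) (u t y - us y)) • u t y) x =
      inner ℝ (u t x - us x)
          (ρ t x • (deriv (fun s => u s x) t + fderiv ℝ (fun y => u t y - us y) x (u t x)))
        - (p (ρ t x) - p (ρs x)) * vdiv (u t) x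
        - (ρ t x - ρs x) / ρs x * fderiv ℝ (fun y => p (ρs y)) x (u t x) := by
  have htime := hasDerivAt_energyDensity hp hρt.hasDerivAt (hut.hasDerivAt.sub_const (us x))
    hρ_pos hρs_pos
  have hspace := hasFDerivAt_energyDensity hp hρ.hasFDerivAt hρs.hasFDerivAt hpρs.hasFDerivAt
    (hu.fun_sub hus).hasFDerivAt hρ_pos hρs_pos
  have htransport := deriv_density_mul_add_vdiv
    (f := fun s y => energyDensity p (ρ s y) (ρs y) (u s y - us y))
    hρt htime.differentiableAt hρ hspace.differentiableAt hu hmass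
  rw [htransport, htime.deriv, hspace.fderiv, real_inner_smul_right, inner_add_right]
  rw [vdiv_smul hρ hu] at hmass
  simp only [add_apply, smul_apply, smul_eq_mul, ContinuousLinearMap.comp_apply,
    innerSL_apply_apply]
  linear_combination (norm := (field_simp; ring)) (p (ρ t x) - p (ρs x)) / ρ t x * hmass

theorem perturbation_momentum {r s : ℝ} {a : E3} {v w : E3 → E3} {P Q : E3 → ℝ} (hs : s ≠ 0)
    (hv : ContDiffAt ℝ 2 v x) (hw : ContDiffAt ℝ 2 w x)
    (hP : DifferentiableAt ℝ P x) (hQ : DifferentiableAt ℝ Q x)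
    (hmom : r • (a + conv v v x) = lameOperator μ ν v x - grad P x)
    (hsmom : s • conv w w x = lameOperator μ ν w x - grad Q x) :
    r • (a + fderiv ℝ (fun y => v y - w y) x (v x)) =
      lameOperator μ ν (fun y => v y - w y) x - grad (fun y => P y - Q y) x
        - r • conv (fun y => v y - w y) w x
        - ((r - s) / s) • (lameOperator μ ν w x - grad Q x) := by
  have hv1 : DifferentiableAt ℝ v x := hv.differentiableAt two_ne_zero
  have hw1 : DifferentiableAt ℝ w x := hw.differentiableAt two_ne_zero
  have hratio : (r - s) / s * s = r - s := div_mul_cancel₀ _ hs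
  rw [lameOperator_sub μ ν hv hw, grad_sub hP hQ, ← hsmom, smul_smul, hratio,
    fderiv_fun_sub hv1 hw1]
  rw [conv_eq_fderiv _ hv1] at hmom
  rw [conv_eq_fderiv _ hw1] at hsmom
  simp only [conv_eq_fderiv _ hw1, sub_apply, map_sub]
  linear_combination (norm := module) hmom - hsmom

theorem inner_perturbation_momentum {r s : ℝ} {a : E3} {v w : E3 → E3} {P Q : E3 → ℝ}
    (hs : s ≠ 0) (hv : ContDiffAt ℝ 2 v x) (hw : ContDiffAt ℝ 2 w x)
    (hP : DifferentiableAt ℝ P x) (hQ : DifferentiableAt ℝ Q x)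
    (hmom : r • (a + conv v v x) = lameOperator μ ν v x - grad P x)
    (hsmom : s • conv w w x = lameOperator μ ν w x - grad Q x) :
    inner ℝ (v x - w x) (r • (a + fderiv ℝ (fun y => v y - w y) x (v x))) =
      inner ℝ (lameOperator μ ν (fun y => v y - w y) x) (v x - w x)
        - fderiv ℝ (fun y => P y - Q y) x (v x - w x)
        - r * inner ℝ (conv (fun y => v y - w y) w x) (v x - w x)
        - (r - s) / s * (inner ℝ (lameOperator μ ν w x) (v x - w x)
          - (fderiv ℝ Q x (v x) - fderiv ℝ Q x (w x))) := by
  rw [perturbation_momentum hs hv hw hP hQ hmom hsmom, real_inner_comm, ← map_sub]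
  simp only [inner_sub_left _ _ (v x - w x), real_inner_smul_left, inner_grad]

theorem fderiv_pressure_of_vdiv_eq_zero {p' : ℝ} (hp : HasDerivAt p p' (ρs x))
    (hρs : DifferentiableAt ℝ ρs x) (hus : DifferentiableAt ℝ us x)
    (hmass : vdiv (fun y => ρs y • us y) x = 0) :
    fderiv ℝ (fun y => p (ρs y)) x (us x) = -(p' * ρs x * vdiv us x) := by
  have hchain : HasFDerivAt (fun y => p (ρs y)) (p' • fderiv ℝ ρs x) x :=
    hp.comp_hasFDerivAt x hρs.hasFDerivAt
  rw [vdiv_smul hρs hus] at hmass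
  rw [hchain.fderiv, smul_apply, smul_eq_mul]
  linear_combination p' * hmass

theorem vdiv_energyFlux {e q : E3 → ℝ} {v w : E3 → E3} (he : DifferentiableAt ℝ e x)
    (hq : DifferentiableAt ℝ q x) (hv : DifferentiableAt ℝ v x) (hw : ContDiffAt ℝ 2 w x) :
    vdiv (fun y => (-(e y • v y) - q y • w y) + viscousFlux μ ν w y) x =
      -vdiv (fun y => e y • v y) x - (fderiv ℝ q x (w x) + q x * vdiv w x)
        + (inner ℝ (lameOperator μ ν w x) (w x)
          + μ * ∑ i, ∑ j, pd i (fun z => w z j) x ^ 2 + ν * vdiv w x ^ 2) := by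
  have hw1 : DifferentiableAt ℝ w x := hw.differentiableAt two_ne_zero
  have hev := he.fun_smul hv
  have hqw := hq.fun_smul hw1
  rw [vdiv_add (hev.fun_neg.fun_sub hqw) (differentiableAt_viscousFlux μ ν hw),
    vdiv_sub hev.fun_neg hqw, vdiv_neg, vdiv_smul hq hw1, vdiv_viscousFlux μ ν hw]

end EnergyBalance

theorem energy_identity_general {p p' : ℝ → ℝ} {μ ν : ℝ} {ρ : ℝ → E3 → ℝ} {u : ℝ → E3 → E3}
    {ρs : E3 → ℝ} {us : E3 → E3} {t : ℝ} {x : E3}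
    (hp : ∀ r, 0 < r → HasDerivAt p (p' r) r) (hρ_pos : 0 < ρ t x) (hρs_pos : 0 < ρs x)
    (hρt : DifferentiableAt ℝ (fun s => ρ s x) t) (hut : DifferentiableAt ℝ (fun s => u s x) t)
    (hρ : DifferentiableAt ℝ (ρ t) x) (hu : ContDiffAt ℝ 2 (u t) x)
    (hρs : DifferentiableAt ℝ ρs x) (hus : ContDiffAt ℝ 2 us x)
    (hmass : deriv (fun s => ρ s x) t + vdiv (fun y => ρ t y • u t y) x = 0)
    (hmom : ρ t x • (deriv (fun s => u s x) t + conv (u t) (u t) x) =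
      lameOperator μ ν (u t) x - grad (fun y => p (ρ t y)) x)
    (hsmass : vdiv (fun y => ρs y • us y) x = 0)
    (hsmom : ρs x • conv us us x = lameOperator μ ν us x - grad (fun y => p (ρs y)) x) :
    deriv (fun s => ρ s x * energyDensity p (ρ s x) (ρs x) (u s x - us x)) t
        - vdiv (fun y =>
            (-((ρ t y * energyDensity p (ρ t y) (ρs y) (u t y - us y)) • u t y)
              - (p (ρ t y) - p (ρs y)) • (u t y - us y))
            + viscousFlux μ ν (fun z => u t z - us z) y) x
        + μ * ∑ i, ∑ j, pd i (fun z => u t z j - us z j) x ^ 2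
        + ν * vdiv (fun z => u t z - us z) x ^ 2 =
      -ρ t x * ∑ i, conv (fun z => u t z - us z) us x i * (u t x i - us x i)
        - (p (ρ t x) - p (ρs x) - p' (ρs x) * (ρ t x - ρs x)) * vdiv us x
        - (ρ t x - ρs x) / ρs x * ∑ i, lameOperator μ ν us x i * (u t x i - us x i) := by
  have hu1 : DifferentiableAt ℝ (u t) x := hu.differentiableAt two_ne_zero
  have hus1 : DifferentiableAt ℝ us x := hus.differentiableAt two_ne_zero
  have hp_cont : ContinuousOn p (Ioi 0) := HasDerivAt.continuousOn hp
  have hP : DifferentiableAt ℝ (fun y => p (ρ t y)) x := (hp _ hρ_pos).differentiableAt.comp x hρ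
  have hQ : DifferentiableAt ℝ (fun y => p (ρs y)) x := (hp _ hρs_pos).differentiableAt.comp x hρs
  have hℰ := (hasFDerivAt_energyDensity hp_cont hρ.hasFDerivAt hρs.hasFDerivAt hQ.hasFDerivAt
    (hu1.fun_sub hus1).hasFDerivAt hρ_pos hρs_pos).differentiableAt
  have hbalance := deriv_density_mul_energyDensity_add_vdiv hp_cont hρ_pos hρs_pos hρt hut hρ hu1
    hρs hQ hus1 hmass
  have hwork := inner_perturbation_momentum hρs_pos.ne' hu hus hP hQ hmom hsmom
  have hstationary := fderiv_pressure_of_vdiv_eq_zero (hp _ hρs_pos) hρs hus1 hsmass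
  have hratio : (ρ t x - ρs x) / ρs x * ρs x = ρ t x - ρs x := div_mul_cancel₀ _ hρs_pos.ne'
  simp only [← PiLp.sub_apply, ← inner_eq_sum_mul]
  rw [vdiv_energyFlux (hρ.fun_mul hℰ) (hP.fun_sub hQ) hu1 (hu.sub hus), vdiv_sub hu1 hus1]
  linear_combination hbalance + hwork - (ρ t x - ρs x) / ρs x * hstationary
    + p' (ρs x) * vdiv us x * hratio

theorem hasDerivAt_const_mul_rpow (K γ : ℝ) {r : ℝ} (hr : 0 < r) :
    HasDerivAt (fun r => K * r ^ γ) (K * γ * r ^ (γ - 1)) r := by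
  simpa only [mul_assoc] using (hasDerivAt_rpow_const (.inl hr.ne')).const_mul K

theorem energy_identity
    (K γ μ₁ μ₂ : ℝ) (hK : 0 < K) (hγ : 1 ≤ γ)
    (O : Set E3) (hO : IsOpen O) (T : ℝ) (hT : 0 < T)
    (ρ : ℝ → E3 → ℝ) (u : ℝ → E3 → E3) (ρs : E3 → ℝ) (us : E3 → E3)
    -- positivity of the densities
    (hρpos : ∀ t ∈ Set.Ioo (0:ℝ) T, ∀ x ∈ O, 0 < ρ t x)
    (hρspos : ∀ x ∈ O, 0 < ρs x)
    -- (ρ, u) is C¹ in time and C² in space on (0,T) × O; (ρˢ, uˢ) is C² on O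
    (hρt : ∀ x ∈ O, ContDiffOn ℝ 1 (fun t => ρ t x) (Set.Ioo 0 T))
    (hut : ∀ x ∈ O, ContDiffOn ℝ 1 (fun t => u t x) (Set.Ioo 0 T))
    (hρx : ∀ t ∈ Set.Ioo (0:ℝ) T, ContDiffOn ℝ 2 (ρ t) O)
    (hux : ∀ t ∈ Set.Ioo (0:ℝ) T, ContDiffOn ℝ 2 (u t) O)
    (hρsx : ContDiffOn ℝ 2 ρs O) (husx : ContDiffOn ℝ 2 us O)
    -- (ρ, u) solves the compressible Navier–Stokes equations on (0,T) × O
    (hmass : ∀ t ∈ Set.Ioo (0:ℝ) T, ∀ x ∈ O,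
      deriv (fun s => ρ s x) t + vdiv (fun y => ρ t y • u t y) x = 0)
    (hmom : ∀ t ∈ Set.Ioo (0:ℝ) T, ∀ x ∈ O,
      ρ t x • (deriv (fun s => u s x) t + conv (u t) (u t) x) =
        μ₁ • vlap (u t) x + (μ₁ + μ₂) • grad (vdiv (u t)) x
          - grad (fun y => K * ρ t y ^ γ) x)
    -- (ρˢ, uˢ) is a stationary solution on O
    (hsmass : ∀ x ∈ O, vdiv (fun y => ρs y • us y) x = 0)
    (hsmom : ∀ x ∈ O,
      ρs x • conv us us x =
        μ₁ • vlap us x + (μ₁ + μ₂) • grad (vdiv us) x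
          - grad (fun y => K * ρs y ^ γ) x) :
    -- the energy identity ∂ₜ(ρℰ) − div(G₁ + B₁) + μ₁|∇ψ|² + (μ₁+μ₂)(div ψ)² = R₁
    ∀ t ∈ Set.Ioo (0:ℝ) T, ∀ x ∈ O,
      deriv (fun s => ρ s x *
          ((∫ η in ρs x..ρ s x, (K * η ^ γ - K * ρs x ^ γ) / η ^ 2)
            + ‖u s x - us x‖ ^ 2 / 2)) t
        - vdiv (fun y =>
            (-((ρ t y *
                ((∫ η in ρs y..ρ t y, (K * η ^ γ - K * ρs y ^ γ) / η ^ 2)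
                  + ‖u t y - us y‖ ^ 2 / 2)) • u t y)
              - (K * ρ t y ^ γ - K * ρs y ^ γ) • (u t y - us y))
            + vecE3 (fun i =>
                μ₁ * ∑ j, pd i (fun z => u t z j - us z j) y * (u t y j - us y j)
                  + (μ₁ + μ₂) * vdiv (fun z => u t z - us z) y * (u t y i - us y i))) x
        + μ₁ * ∑ i, ∑ j, (pd i (fun z => u t z j - us z j) x) ^ 2
        + (μ₁ + μ₂) * (vdiv (fun z => u t z - us z) x) ^ 2
      = -(ρ t x) * ∑ i, conv (fun z => u t z - us z) us x i * (u t x i - us x i)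
        - (K * ρ t x ^ γ - K * ρs x ^ γ
            - K * γ * ρs x ^ (γ - 1) * (ρ t x - ρs x)) * vdiv us x
        - (ρ t x - ρs x) / ρs x *
            ∑ i, (μ₁ • vlap us x + (μ₁ + μ₂) • grad (vdiv us) x) i * (u t x i - us x i) := by
  intro t ht x hx
  have hOx : O ∈ nhds x := hO.mem_nhds hx
  have hTt : Ioo 0 T ∈ nhds t := isOpen_Ioo.mem_nhds ht
  exact energy_identity_general (p := fun r => K * r ^ γ)
    (fun r hr => hasDerivAt_const_mul_rpow K γ hr)
    (hρpos t ht x hx) (hρspos x hx)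
    (((hρt x hx).contDiffAt hTt).differentiableAt one_ne_zero)
    (((hut x hx).contDiffAt hTt).differentiableAt one_ne_zero)
    (((hρx t ht).contDiffAt hOx).differentiableAt two_ne_zero) ((hux t ht).contDiffAt hOx)
    ((hρsx.contDiffAt hOx).differentiableAt two_ne_zero) (husx.contDiffAt hOx)
    (hmass t ht x hx) (hmom t ht x hx) (hsmass x hx) (hsmom x hx)
end
end
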